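/- For every integer d ≥ 3, every integer R ≥ 1, every real p with 1/(d-1) < p < 1, and every α ∈ (0,1), there exist b > 0 and c > 0 such that for every ε > 0 and every n₀ there exist n ≥ n₀ and a regular (b,d)-expander 𝒢 on n vertices with girth at least R for which the random graph G ∼ 𝒢_p satisfies |V(C₂(G))| ≥ c·n^α with probability at least 1 − ε, where C₂(G) denotes a second largest connected component of G (a component of maximum size among those different from a fixed largest component). -/

import Mathlib

open scoped Classical symmDiff

noncomputable section

namespace Percolation

variable {V : Type} [Fintype V] [DecidableEq V]

/-- The edge set of `G` as a finset. -/
noncomputable def edgeFinset' (G : SimpleGraph V) : Finset (Sym2 V) :=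
  Finset.univ.filter (· ∈ G.edgeSet)

/-- Probability that bond percolation on `G` with parameter `p` produces a spanning
subgraph satisfying `P`. -/
noncomputable def percProb (G : SimpleGraph V) (p : ℝ) (P : SimpleGraph V → Prop) : ℝ :=
  ∑ s ∈ (edgeFinset' G).powerset,
    (p ^ s.card * (1 - p) ^ ((edgeFinset' G).card - s.card)) *
      (if P (SimpleGraph.fromEdgeSet (↑s)) then 1 else 0)

/-- Joint probability for two independent bond percolations on `G`. -/
noncomputable def percProb2 (G : SimpleGraph V) (p₁ p₂ : ℝ)
    (P : SimpleGraph V → SimpleGraph V → Prop) : ℝ :=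
  ∑ s ∈ (edgeFinset' G).powerset, ∑ t ∈ (edgeFinset' G).powerset,
    (p₁ ^ s.card * (1 - p₁) ^ ((edgeFinset' G).card - s.card)) *
    (p₂ ^ t.card * (1 - p₂) ^ ((edgeFinset' G).card - t.card)) *
      (if P (SimpleGraph.fromEdgeSet (↑s)) (SimpleGraph.fromEdgeSet (↑t)) then 1 else 0)

/-- Number of edges of `G` joining `S` to its complement. -/
noncomputable def cutCard (G : SimpleGraph V) (S : Finset V) : ℕ :=
  ((edgeFinset' G).filter (fun e => ∃ x ∈ S, ∃ y, y ∉ S ∧ e = s(x, y))).card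

/-- `G` is a `(b,d)`-expander: max degree at most `d`, and every vertex set of size at most
`n/2` has at least `b|S|` edges to its complement. -/
def IsExpander (G : SimpleGraph V) (b : ℝ) (d : ℕ) : Prop :=
  (∀ v, (G.neighborSet v).ncard ≤ d) ∧
  ∀ S : Finset V, (S.card : ℝ) ≤ Fintype.card V / 2 → b * S.card ≤ cutCard G S

/-- `G` is a regular `(b,d)`-expander. -/
def IsRegularExpander (G : SimpleGraph V) (b : ℝ) (d : ℕ) : Prop :=
  IsExpander G b d ∧ ∀ v, (G.neighborSet v).ncard = d

/-- The vertices of the connected component `c` of `G`. -/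
noncomputable def compVerts (G : SimpleGraph V) (c : G.ConnectedComponent) : Finset V :=
  Finset.univ.filter (fun v => G.connectedComponentMk v = c)

/-- The edges of the connected component `c` of `G`. -/
noncomputable def compEdges (G : SimpleGraph V) (c : G.ConnectedComponent) : Finset (Sym2 V) :=
  (edgeFinset' G).filter (fun e => ∀ v ∈ e, G.connectedComponentMk v = c)

/-- `c` is a largest connected component of `G`. -/
def IsLargestComp (G : SimpleGraph V) (c : G.ConnectedComponent) : Prop :=
  ∀ c' : G.ConnectedComponent, (compVerts G c').card ≤ (compVerts G c).card

/-- The 2-core of the connected component `c` of `G` : the maximal subgraph of `G`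
supported inside `c` all of whose vertices have degree at least 2. -/
noncomputable def twoCoreComp (G : SimpleGraph V) (c : G.ConnectedComponent) : SimpleGraph V :=
  sSup {H : SimpleGraph V | H ≤ G ∧ (∀ v ∈ H.support, G.connectedComponentMk v = c) ∧
    ∀ v ∈ H.support, 2 ≤ (H.neighborSet v).ncard}

/-- The event `A^R_{x,y}(H)`: the connected component of `y` in `H` with the edge `xy`
removed (if present) has at least `R` vertices. -/
def eventA (H : SimpleGraph V) (R : ℕ) (x y : V) : Prop :=
  R ≤ (compVerts (H.deleteEdges {s(x, y)})
        ((H.deleteEdges {s(x, y)}).connectedComponentMk y)).card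

/-- `E₁(H)`: edges `xy` of `H` such that `A^R_{x,y}` or `A^R_{y,x}` holds. -/
noncomputable def E1set (H : SimpleGraph V) (R : ℕ) : Finset (Sym2 V) :=
  (edgeFinset' H).filter (fun e => ∃ x y, e = s(x, y) ∧ (eventA H R x y ∨ eventA H R y x))

/-- `V₁(H)`: vertices `x` such that for some `y`, `xy ∈ E(H)` and `A^R_{x,y}` holds. -/
noncomputable def V1set (H : SimpleGraph V) (R : ℕ) : Finset V :=
  Finset.univ.filter (fun x => ∃ y, H.Adj x y ∧ eventA H R x y)

/-- `E₂(H)`: edges `xy` of `H` such that both `A^R_{x,y}` and `A^R_{y,x}` hold. -/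
noncomputable def E2set (H : SimpleGraph V) (R : ℕ) : Finset (Sym2 V) :=
  (edgeFinset' H).filter (fun e => ∃ x y, e = s(x, y) ∧ eventA H R x y ∧ eventA H R y x)

/-- `V₂(H)`: vertices incident to an edge of `E₂(H)`. -/
noncomputable def V2set (H : SimpleGraph V) (R : ℕ) : Finset V :=
  Finset.univ.filter (fun x => ∃ e ∈ E2set H R, x ∈ e)

/-- `V̄₁(H)`: vertices `y` such that `A^R_{x,y}(H)` holds for some `x`. -/
noncomputable def Vbar1 (H : SimpleGraph V) (R : ℕ) : Finset V :=
  Finset.univ.filter (fun y => ∃ x, eventA H R x y)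

/-- `S` is `k`-thick in `H`: a union of pairwise disjoint subsets, each of size at least
`k`, each inducing a connected subgraph of `H`. -/
def IsThick (H : SimpleGraph V) (k : ℕ) (S : Finset V) : Prop :=
  ∃ P : Finset (Finset V),
    (∀ T ∈ P, k ≤ T.card ∧ (H.induce (↑T : Set V)).Connected) ∧
    (↑P : Set (Finset V)).PairwiseDisjoint id ∧ S = P.biUnion id

/-- `S` is a separator of `K`. -/
def IsSeparator {W : Type} [Fintype W] (K : SimpleGraph W) (S : Finset W) : Prop :=
  ∃ A B : Finset W, Disjoint A B ∧ Disjoint A S ∧ Disjoint B S ∧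
    (∀ w, w ∈ A ∨ w ∈ B ∨ w ∈ S) ∧
    (∀ a ∈ A, ∀ b ∈ B, ¬ K.Adj a b) ∧
    3 * A.card ≤ 2 * Fintype.card W ∧ 3 * B.card ≤ 2 * Fintype.card W

/-! ### Bernoulli expectations on finite product spaces -/

/-- The probability that a Bernoulli variable of parameter `p` takes the value `b`. -/
def bernWeight (p : ℝ) (b : Bool) : ℝ := if b then p else 1 - p

/-- Expectation of `f` when the coordinates are independent Bernoulli variables. -/
def Ex {E : Type} [Fintype E] (p : ℝ) (f : (E → Bool) → ℝ) : ℝ :=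
  ∑ ω : E → Bool, (∏ e, bernWeight p (ω e)) * f ω

/-- The indicator of a proposition. -/
def ind (P : Prop) : ℝ := if P then 1 else 0

/-- Probability of `A` when the coordinates are independent Bernoulli variables. -/
def Pr {E : Type} [Fintype E] (p : ℝ) (A : (E → Bool) → Prop) : ℝ :=
  Ex p (fun ω => ind (A ω))

lemma ind_of_true {P : Prop} (h : P) : ind P = 1 := if_pos h

lemma ind_of_false {P : Prop} (h : ¬ P) : ind P = 0 := if_neg h

lemma ind_nonneg (P : Prop) : 0 ≤ ind P := by
  unfold ind; split_ifs <;> norm_num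

lemma ind_le_one (P : Prop) : ind P ≤ 1 := by
  unfold ind; split_ifs <;> norm_num

lemma ind_mono {P Q : Prop} (h : P → Q) : ind P ≤ ind Q := by
  by_cases hP : P
  · rw [ind_of_true hP, ind_of_true (h hP)]
  · rw [ind_of_false hP]; exact ind_nonneg Q

lemma ind_and (P Q : Prop) : ind (P ∧ Q) = ind P * ind Q := by
  by_cases hP : P <;> by_cases hQ : Q <;> simp [ind, hP, hQ]

lemma ind_not (P : Prop) : ind (¬ P) = 1 - ind P := by
  by_cases hP : P <;> simp [ind, hP]

lemma ind_or_le (P Q : Prop) : ind (P ∨ Q) ≤ ind P + ind Q := by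
  by_cases hP : P <;> by_cases hQ : Q <;> simp [ind, hP, hQ]

lemma ind_forall {ι : Type} (s : Finset ι) (P : ι → Prop) :
    ind (∀ i ∈ s, P i) = ∏ i ∈ s, ind (P i) := by
  induction s using Finset.induction_on with
  | empty => simp [ind]
  | insert a s ha ih => rw [Finset.forall_mem_insert, ind_and, ih, Finset.prod_insert ha]

lemma ind_exists_le {ι : Type} (s : Finset ι) (P : ι → Prop) :
    ind (∃ i ∈ s, P i) ≤ ∑ i ∈ s, ind (P i) := by
  by_cases h : ∃ i ∈ s, P i
  · obtain ⟨i, hi, hP⟩ := h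
    calc ind (∃ i ∈ s, P i) ≤ 1 := ind_le_one _
      _ = ind (P i) := (ind_of_true hP).symm
      _ ≤ _ := Finset.single_le_sum (f := fun i => ind (P i)) (fun j _ => ind_nonneg _) hi
  · rw [ind_of_false h]
    exact Finset.sum_nonneg fun j _ => ind_nonneg _

section Bernoulli

variable {E F : Type} [Fintype E] [Fintype F] {p : ℝ}

lemma bernWeight_nonneg (hp0 : 0 ≤ p) (hp1 : p ≤ 1) (b : Bool) : 0 ≤ bernWeight p b := by
  cases b <;> simp [bernWeight, hp0, hp1]

lemma sum_bernWeight (p : ℝ) : ∑ b : Bool, bernWeight p b = 1 := by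
  simp [bernWeight]

lemma sum_prod_bernWeight (p : ℝ) : ∑ ω : E → Bool, ∏ e, bernWeight p (ω e) = 1 := by
  rw [← Fintype.prod_sum (fun (_ : E) b => bernWeight p b)]
  simp only [sum_bernWeight, Finset.prod_const_one]

lemma Ex_const (c : ℝ) : Ex (E := E) p (fun _ => c) = c := by
  simp [Ex, ← Finset.sum_mul, sum_prod_bernWeight]

lemma Ex_add (f g : (E → Bool) → ℝ) : Ex p (fun ω => f ω + g ω) = Ex p f + Ex p g := by
  simp [Ex, mul_add, Finset.sum_add_distrib]

lemma Ex_sub (f g : (E → Bool) → ℝ) : Ex p (fun ω => f ω - g ω) = Ex p f - Ex p g := by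
  simp [Ex, mul_sub, Finset.sum_sub_distrib]

lemma Ex_const_mul (c : ℝ) (f : (E → Bool) → ℝ) : Ex p (fun ω => c * f ω) = c * Ex p f := by
  simp only [Ex, Finset.mul_sum]
  exact Finset.sum_congr rfl fun ω _ => by ring

lemma Ex_sum {ι : Type} (s : Finset ι) (f : ι → (E → Bool) → ℝ) :
    Ex p (fun ω => ∑ i ∈ s, f i ω) = ∑ i ∈ s, Ex p (f i) := by
  simp only [Ex, Finset.mul_sum]
  exact Finset.sum_comm

lemma Ex_mono (hp0 : 0 ≤ p) (hp1 : p ≤ 1) {f g : (E → Bool) → ℝ} (h : ∀ ω, f ω ≤ g ω) :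
    Ex p f ≤ Ex p g :=
  Finset.sum_le_sum fun ω _ => mul_le_mul_of_nonneg_left (h ω)
    (Finset.prod_nonneg fun _ _ => bernWeight_nonneg hp0 hp1 _)

lemma Ex_nonneg (hp0 : 0 ≤ p) (hp1 : p ≤ 1) {f : (E → Bool) → ℝ} (h : ∀ ω, 0 ≤ f ω) :
    0 ≤ Ex p f := by
  simpa [Ex_const] using Ex_mono (f := fun _ => 0) hp0 hp1 h

lemma Pr_mono (hp0 : 0 ≤ p) (hp1 : p ≤ 1) {A B : (E → Bool) → Prop} (h : ∀ ω, A ω → B ω) :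
    Pr p A ≤ Pr p B :=
  Ex_mono hp0 hp1 fun ω => ind_mono (h ω)

lemma Pr_nonneg (hp0 : 0 ≤ p) (hp1 : p ≤ 1) (A : (E → Bool) → Prop) : 0 ≤ Pr p A :=
  Ex_nonneg hp0 hp1 fun _ => ind_nonneg _

lemma Pr_not (A : (E → Bool) → Prop) : Pr p (fun ω => ¬ A ω) = 1 - Pr p A := by
  have h := Ex_sub (p := p) (fun _ : E → Bool => (1 : ℝ)) (fun ω => ind (A ω))
  rw [Ex_const] at h
  simp only [Pr, ind_not, h]

lemma Pr_le_one (hp0 : 0 ≤ p) (hp1 : p ≤ 1) (A : (E → Bool) → Prop) : Pr p A ≤ 1 := by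
  have := Pr_nonneg hp0 hp1 (fun ω => ¬ A ω)
  rw [Pr_not] at this
  linarith

lemma Pr_or_le (hp0 : 0 ≤ p) (hp1 : p ≤ 1) (A B : (E → Bool) → Prop) :
    Pr p (fun ω => A ω ∨ B ω) ≤ Pr p A + Pr p B := by
  rw [Pr, Pr, Pr, ← Ex_add]
  exact Ex_mono hp0 hp1 fun ω => ind_or_le _ _

lemma Pr_exists_le (hp0 : 0 ≤ p) (hp1 : p ≤ 1) {ι : Type} (s : Finset ι)
    (A : ι → (E → Bool) → Prop) :
    Pr p (fun ω => ∃ i ∈ s, A i ω) ≤ ∑ i ∈ s, Pr p (A i) := by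
  simp only [Pr]
  rw [← Ex_sum]
  exact Ex_mono hp0 hp1 fun ω => ind_exists_le _ _

lemma Ex_equiv (e : E ≃ F) (f : (E → Bool) → ℝ) :
    Ex p (fun ω : F → Bool => f (ω ∘ e)) = Ex p f := by
  rw [Ex, Ex]
  refine Fintype.sum_equiv (e.symm.arrowCongr (Equiv.refl Bool)) _ _ fun ω => ?_
  have h1 : (e.symm.arrowCongr (Equiv.refl Bool)) ω = ω ∘ e := by
    ext x; simp [Equiv.arrowCongr]
  rw [h1]
  congr 1
  exact (Fintype.prod_equiv e _ _ fun _ => rfl).symm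

lemma Ex_sum_type (f : (E → Bool) → ℝ) (g : (F → Bool) → ℝ) :
    Ex p (fun ω : E ⊕ F → Bool => f (ω ∘ Sum.inl) * g (ω ∘ Sum.inr)) = Ex p f * Ex p g := by
  simp only [Ex]
  rw [Finset.sum_mul_sum, ← Fintype.sum_prod_type' (fun (x : E → Bool) (y : F → Bool) =>
    (∏ e, bernWeight p (x e)) * f x * ((∏ e, bernWeight p (y e)) * g y))]
  refine Finset.sum_equiv (Equiv.sumArrowEquivProdArrow E F Bool) (by simp) fun ω _ => ?_
  rw [Fintype.prod_sum_type]
  simp only [Equiv.sumArrowEquivProdArrow, Equiv.coe_fn_mk, Function.comp_def]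
  ring

/-- Marginals of a Bernoulli product measure along an injection. -/
lemma Ex_comp_injective {ι : E → F} (hι : Function.Injective ι) (f : (E → Bool) → ℝ) :
    Ex p (fun ω : F → Bool => f (ω ∘ ι)) = Ex p f := by
  let e : E ⊕ {x // x ∉ Set.range ι} ≃ F :=
    ((Equiv.ofInjective ι hι).sumCongr (Equiv.refl _)).trans (Equiv.Set.sumCompl (Set.range ι))
  have h := Ex_sum_type (p := p) f (fun _ : {x // x ∉ Set.range ι} → Bool => 1)
  rw [Ex_const, mul_one] at h
  rw [← h, ← Ex_equiv e]
  congr 1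
  ext ω
  simp only [mul_one]
  congr 1

/-- Functions depending on disjoint sets of coordinates are independent. -/
lemma Ex_mul_of_disjoint {S T : Set E} (hST : Disjoint S T) {f g : (E → Bool) → ℝ}
    (hf : DependsOn f S) (hg : DependsOn g T) :
    Ex p (fun ω => f ω * g ω) = Ex p f * Ex p g := by
  let e : S ⊕ {x // x ∉ S} ≃ E := Equiv.Set.sumCompl S
  let f' : (S → Bool) → ℝ := fun η => f (fun x => if h : x ∈ S then η ⟨x, h⟩ else true)
  let g' : ({x // x ∉ S} → Bool) → ℝ :=
    fun η => g (fun x => if h : x ∉ S then η ⟨x, h⟩ else true)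
  have hf' : ∀ ω, f ω = f' (ω ∘ Subtype.val) := by
    intro ω
    exact hf fun i hi => by simp [hi]
  have hg' : ∀ ω, g ω = g' (ω ∘ Subtype.val) := by
    intro ω
    refine hg fun i hi => ?_
    have : i ∉ S := fun h => Set.disjoint_left.1 hST h hi
    simp [this]
  have h1 : Ex p f = Ex p f' := by
    rw [← Ex_comp_injective (Subtype.val_injective (p := (· ∈ S))) f']
    exact congrArg _ (funext hf')
  have h2 : Ex p g = Ex p g' := by
    rw [← Ex_comp_injective (Subtype.val_injective (p := (· ∉ S))) g']
    exact congrArg _ (funext hg')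
  rw [h1, h2, ← Ex_sum_type, ← Ex_equiv e]
  congr 1
  ext ω
  rw [hf', hg']
  rfl

lemma Ex_prod_of_disjoint {ι : Type} (s : Finset ι) (S : ι → Set E)
    (hS : ∀ i ∈ s, ∀ j ∈ s, i ≠ j → Disjoint (S i) (S j)) (f : ι → (E → Bool) → ℝ)
    (hf : ∀ i ∈ s, DependsOn (f i) (S i)) :
    Ex p (fun ω => ∏ i ∈ s, f i ω) = ∏ i ∈ s, Ex p (f i) := by
  induction s using Finset.induction_on with
  | empty => simp [Ex_const]
  | insert a s ha ih =>
    simp only [Finset.prod_insert ha]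
    rw [Ex_mul_of_disjoint (S := S a) (T := ⋃ i ∈ s, S i), ih]
    · exact fun i hi j hj => hS i (Finset.mem_insert_of_mem hi) j (Finset.mem_insert_of_mem hj)
    · exact fun i hi => hf i (Finset.mem_insert_of_mem hi)
    · rw [Set.disjoint_iUnion₂_right]
      exact fun i hi => hS a (Finset.mem_insert_self _ _) i (Finset.mem_insert_of_mem hi)
        (fun h => ha (h ▸ hi))
    · exact hf a (Finset.mem_insert_self _ _)
    · intro ω ω' h
      refine Finset.prod_congr rfl fun i hi => hf i (Finset.mem_insert_of_mem hi) ?_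
      exact fun x hx => h x (Set.mem_biUnion hi hx)

lemma dependsOn_ind {E : Type} {S : Set E} {A : (E → Bool) → Prop} (hA : DependsOn A S) :
    DependsOn (fun ω => ind (A ω)) S :=
  fun _ _ h => congrArg ind (hA h)

lemma dependsOn_mono {E α : Type} {S T : Set E} (h : S ⊆ T) {A : (E → Bool) → α}
    (hA : DependsOn A S) : DependsOn A T :=
  fun _ _ hω => hA fun i hi => hω i (h hi)

lemma dependsOn_and {E : Type} {S : Set E} {A B : (E → Bool) → Prop} (hA : DependsOn A S)
    (hB : DependsOn B S) : DependsOn (fun ω => A ω ∧ B ω) S :=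
  fun _ _ h => congrArg₂ And (hA h) (hB h)

lemma dependsOn_not {E : Type} {S : Set E} {A : (E → Bool) → Prop} (hA : DependsOn A S) :
    DependsOn (fun ω => ¬ A ω) S :=
  fun _ _ h => congrArg Not (hA h)

lemma dependsOn_coord {E : Type} (e : E) : DependsOn (fun ω : E → Bool => ω e = true) {e} :=
  fun _ _ h => congrArg (· = true) (h e rfl)

lemma Pr_and_of_disjoint {S T : Set E} (hST : Disjoint S T) {A B : (E → Bool) → Prop}
    (hA : DependsOn A S) (hB : DependsOn B T) :
    Pr p (fun ω => A ω ∧ B ω) = Pr p A * Pr p B := by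
  rw [Pr, Pr, Pr, ← Ex_mul_of_disjoint hST (dependsOn_ind hA) (dependsOn_ind hB)]
  simp only [ind_and]

lemma Pr_coord (e : E) : Pr p (fun ω : E → Bool => ω e = true) = p := by
  have h := Ex_comp_injective (p := p) (ι := fun _ : Unit => e) (fun _ _ _ => rfl)
    (fun η : Unit → Bool => ind (η () = true))
  simp only [Function.comp] at h
  rw [Pr, h, Ex]
  refine (Finset.sum_equiv (t := Finset.univ) (Equiv.funUnique Unit Bool)
    (g := fun b => bernWeight p b * ind (b = true)) (by simp) fun ω _ => ?_).trans ?_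
  · simp
  · simp [bernWeight, ind]

lemma Pr_forall_of_disjoint {ι : Type} (s : Finset ι) (S : ι → Set E)
    (hS : ∀ i ∈ s, ∀ j ∈ s, i ≠ j → Disjoint (S i) (S j)) (A : ι → (E → Bool) → Prop)
    (hA : ∀ i ∈ s, DependsOn (A i) (S i)) :
    Pr p (fun ω => ∀ i ∈ s, A i ω) = ∏ i ∈ s, Pr p (A i) := by
  simp only [Pr, ind_forall]
  exact Ex_prod_of_disjoint s S hS (fun i ω => ind (A i ω)) fun i hi => dependsOn_ind (hA i hi)

lemma Pr_forall_coord (s : Finset E) :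
    Pr p (fun ω : E → Bool => ∀ e ∈ s, ω e = true) = p ^ s.card := by
  rw [Pr_forall_of_disjoint s (fun e => {e}) (fun i _ j _ hij => by simpa using hij)
    (fun e ω => ω e = true) fun e _ => dependsOn_coord e]
  simp only [Pr_coord, Finset.prod_const]

/-- The probability that one of finitely many independent events happens. -/
lemma Pr_exists_of_disjoint {ι : Type} (s : Finset ι) (S : ι → Set E)
    (hS : ∀ i ∈ s, ∀ j ∈ s, i ≠ j → Disjoint (S i) (S j)) (A : ι → (E → Bool) → Prop)
    (hA : ∀ i ∈ s, DependsOn (A i) (S i)) :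
    Pr p (fun ω => ∃ i ∈ s, A i ω) = 1 - ∏ i ∈ s, (1 - Pr p (A i)) := by
  have h1 := Pr_not (p := p) (fun ω => ∃ i ∈ s, A i ω)
  have h2 := Pr_forall_of_disjoint (p := p) s S hS (fun i ω => ¬ A i ω)
    fun i hi => dependsOn_not (hA i hi)
  simp only [Pr_not] at h2
  rw [← h2]
  push Not at h1
  linarith

end Bernoulli

/-! ### Finite groups generated by involutions without short relations -/

/-- Distinct reduced words of length at most `g` in the involutions `s` have distinct values. -/
def FreeUpTo {d : ℕ} {Q : Type} [Group Q] (s : Fin d → Q) (g : ℕ) : Prop :=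
  ∀ w w' : List (Fin d), w.IsChain (· ≠ ·) → w.length ≤ g → w'.IsChain (· ≠ ·) →
    w'.length ≤ g → (w.map s).prod = (w'.map s).prod → w = w'

/-- Reduced words of length at most `g`. -/
def RedWord (d g : ℕ) : Type := {w : List (Fin d) // w.IsChain (· ≠ ·) ∧ w.length ≤ g}

instance (d g : ℕ) : Finite (RedWord d g) :=
  ((List.finite_length_le (Fin d) g).subset
    (fun w (hw : w.IsChain (· ≠ ·) ∧ w.length ≤ g) => hw.2)).to_subtype

/-- Left multiplication by a letter on reduced words, with cancellation and truncation. -/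
def letterFun {d : ℕ} (g : ℕ) (k : Fin d) (w : List (Fin d)) : List (Fin d) :=
  if w.head? = some k then w.tail else if w.length < g then k :: w else w

lemma letterFun_mem {d g : ℕ} (k : Fin d) {w : List (Fin d)}
    (hw : w.IsChain (· ≠ ·) ∧ w.length ≤ g) :
    (letterFun g k w).IsChain (· ≠ ·) ∧ (letterFun g k w).length ≤ g := by
  unfold letterFun
  split_ifs with h1 h2
  · exact ⟨hw.1.tail, by simpa using hw.2.trans (Nat.le_succ g)⟩
  · refine ⟨List.isChain_cons.2 ⟨fun y hy he => h1 (by rw [he]; exact hy), hw.1⟩, ?_⟩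
    simpa using h2
  · exact hw

lemma letterFun_letterFun {d g : ℕ} (k : Fin d) {w : List (Fin d)}
    (hw : w.IsChain (· ≠ ·) ∧ w.length ≤ g) : letterFun g k (letterFun g k w) = w := by
  cases w with
  | nil =>
    by_cases hg : 0 < g <;> simp [letterFun, hg]
  | cons a w =>
    obtain ⟨hc, hl⟩ := hw
    simp only [List.length_cons] at hl
    by_cases h : a = k
    · subst h
      have h1 : letterFun g a (a :: w) = w := by simp [letterFun]
      rw [h1]
      have h2 : w.head? ≠ some a := by
        intro h
        exact (List.isChain_cons.1 hc).1 a h rfl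
      simp [letterFun, h2, Nat.lt_of_succ_le hl]
    · by_cases h3 : w.length + 1 < g <;> simp [letterFun, h, h3]

/-- The permutation of reduced words induced by a letter. -/
def letterPerm {d : ℕ} (g : ℕ) (k : Fin d) : Equiv.Perm (RedWord d g) :=
  Function.Involutive.toPerm (fun w => ⟨letterFun g k w.1, letterFun_mem k w.2⟩)
    fun w => Subtype.ext (letterFun_letterFun k w.2)

lemma letterPerm_prod_apply {d g : ℕ} (w : List (Fin d)) (hw : w.IsChain (· ≠ ·))
    (hl : w.length ≤ g) :
    ((w.map (letterPerm g)).prod (⟨[], by simp⟩ : RedWord d g)).1 = w := by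
  induction w with
  | nil => rfl
  | cons k w ih =>
    obtain ⟨h1, h2⟩ := List.isChain_cons.1 hw
    simp only [List.length_cons] at hl
    have h3 : w.head? ≠ some k := fun h => h1 k h rfl
    have ih := ih h2 (by omega)
    simp only [List.map_cons, List.prod_cons]
    change letterFun g k _ = _
    rw [ih]
    simp [letterFun, h3, Nat.lt_of_succ_le hl]

lemma exists_involution_group (d g : ℕ) :
    ∃ (Q : Type) (_ : Group Q) (_ : Fintype Q) (s : Fin d → Q),
      (∀ k, s k * s k = 1) ∧ FreeUpTo s g ∧ Subgroup.closure (Set.range s) = ⊤ := by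
  let S : Set (Equiv.Perm (RedWord d g)) := Set.range (letterPerm g)
  let s : Fin d → Subgroup.closure S := fun k => ⟨letterPerm g k, Subgroup.subset_closure ⟨k, rfl⟩⟩
  refine ⟨Subgroup.closure S, inferInstance, Fintype.ofFinite _, s, fun k => ?_, ?_, ?_⟩
  · apply Subtype.ext
    ext w
    exact Subtype.ext (letterFun_letterFun k w.2)
  · intro w w' hw hl hw' hl' h
    have h1 : (w.map (letterPerm g)).prod = (w'.map (letterPerm g)).prod := by
      have := congrArg (Subgroup.closure S).subtype h
      rw [map_list_prod, map_list_prod, List.map_map, List.map_map] at this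
      exact this
    rw [← letterPerm_prod_apply w hw hl, ← letterPerm_prod_apply w' hw' hl', h1]
  · have h1 : Set.range s = ((↑) : Subgroup.closure S → _) ⁻¹' S := by
      ext x
      constructor
      · rintro ⟨k, rfl⟩
        exact ⟨k, rfl⟩
      · rintro ⟨k, hk⟩
        exact ⟨k, Subtype.ext hk⟩
    rw [h1]
    exact Subgroup.closure_closure_coe_preimage

section Words

variable {d : ℕ} {Q : Type} [Group Q] {s : Fin d → Q} {g : ℕ}

lemma FreeUpTo.injective (hs : FreeUpTo s g) (hg : 1 ≤ g) : Function.Injective s := by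
  intro k k' h
  have := hs [k] [k'] (by simp) (by simpa) (by simp) (by simpa) (by simpa)
  simpa using this

lemma FreeUpTo.ne_one (hs : FreeUpTo s g) (hg : 1 ≤ g) (k : Fin d) : s k ≠ 1 := by
  intro h
  have := hs [k] [] (by simp) (by simpa) (by simp) (by simp) (by simpa)
  simp at this

lemma exists_word (hs : ∀ k, s k * s k = 1) (ht : Subgroup.closure (Set.range s) = ⊤) (x : Q) :
    ∃ w : List (Fin d), (w.map s).prod = x := by
  have hx : x ∈ Subgroup.closure (Set.range s) := ht ▸ Subgroup.mem_top x
  induction hx using Subgroup.closure_induction with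
  | mem x hx =>
    obtain ⟨k, rfl⟩ := hx
    exact ⟨[k], by simp⟩
  | one => exact ⟨[], by simp⟩
  | mul x y _ _ h1 h2 =>
    obtain ⟨w, rfl⟩ := h1
    obtain ⟨w', rfl⟩ := h2
    exact ⟨w ++ w', by simp⟩
  | inv x _ h =>
    obtain ⟨w, rfl⟩ := h
    refine ⟨w.reverse, ?_⟩
    rw [List.prod_inv_reverse, List.map_map, List.map_reverse]
    congr 2
    refine List.map_congr_left fun k _ => ?_
    exact eq_inv_of_mul_eq_one_left (hs k)

lemma FreeUpTo.lt_card [Fintype Q] (hs : FreeUpTo s g) (hd : 2 ≤ d) : g < Fintype.card Q := by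
  have key : ∀ n : ℕ, ∃ w : List (Fin d), w.IsChain (· ≠ ·) ∧ w.length = n := by
    intro n
    induction n with
    | zero => exact ⟨[], by simp⟩
    | succ n ih =>
      obtain ⟨w, hw, hl⟩ := ih
      obtain ⟨k, hk⟩ : ∃ k : Fin d, w.head? ≠ some k := by
        by_contra! h
        have h0 := h ⟨0, by omega⟩
        have h1 := h ⟨1, by omega⟩
        rw [h0] at h1
        simp at h1
      exact ⟨k :: w, List.isChain_cons.2 ⟨fun y hy he => hk (he ▸ hy), hw⟩, by simp [hl]⟩
  choose f hf hl using key
  have hinj : Function.Injective (fun n : Fin (g + 1) => ((f n).map s).prod) := by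
    intro m n h
    have := hs _ _ (hf m) (by rw [hl]; omega) (hf n) (by rw [hl]; omega) h
    have := congrArg List.length this
    rw [hl, hl] at this
    exact Fin.ext this
  simpa using Fintype.card_le_of_injective _ hinj

end Words

/-! ### Counting permutations -/

section PermCounting

variable {J : Type} [Fintype J]

/-- The permutations mapping `X` into `Z`. -/
def permsMapping (X Z : Finset J) : Finset (Equiv.Perm J) :=
  Finset.univ.filter fun π => ∀ x ∈ X, π x ∈ Z

lemma mem_permsMapping {X Z : Finset J} {π : Equiv.Perm J} :
    π ∈ permsMapping X Z ↔ ∀ x ∈ X, π x ∈ Z := by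
  simp [permsMapping]

lemma card_permsMapping_insert {X Z : Finset J} {a : J} (ha : a ∉ X) :
    (permsMapping (insert a X) Z).card * Fintype.card J ≤ (permsMapping X Z).card * Z.card := by
  rw [← Finset.card_univ, ← Finset.card_product, ← Finset.card_product]
  refine Finset.card_le_card_of_injOn
    (fun q : Equiv.Perm J × J => (q.1 * Equiv.swap a q.2, q.1 a)) ?_ ?_
  · rintro ⟨π, b⟩ h
    simp only [Finset.coe_product, Set.mem_prod, Finset.mem_coe, mem_permsMapping,
      Finset.forall_mem_insert] at h ⊢
    refine ⟨fun x hx => ?_, h.1.1⟩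
    rw [Equiv.Perm.mul_apply]
    by_cases hb : x = b
    · subst hb
      rw [Equiv.swap_apply_right]
      exact h.1.1
    · rw [Equiv.swap_apply_of_ne_of_ne (fun h : x = a => ha (h ▸ hx)) hb]
      exact h.1.2 x hx
  · rintro ⟨π, b⟩ - ⟨π', b'⟩ - h
    simp only [Prod.mk.injEq] at h
    obtain ⟨h1, h2⟩ := h
    have h3 : b = b' := by
      have e1 : (π * Equiv.swap a b) b = π a := by simp
      have e2 : (π' * Equiv.swap a b') b' = π' a := by simp
      apply (π * Equiv.swap a b).injective
      rw [e1, h2, ← e2, h1]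
    subst h3
    rw [mul_left_injective _ h1]

lemma card_permsMapping_le (X Z : Finset J) :
    (permsMapping X Z).card * Fintype.card J ^ X.card ≤
      Fintype.card (Equiv.Perm J) * Z.card ^ X.card := by
  induction X using Finset.induction_on with
  | empty => simpa using Finset.card_le_univ _
  | insert a X ha ih =>
    rw [Finset.card_insert_of_notMem ha, pow_succ, pow_succ]
    calc _ = (permsMapping (insert a X) Z).card * Fintype.card J * Fintype.card J ^ X.card := by
            ring
      _ ≤ (permsMapping X Z).card * Z.card * Fintype.card J ^ X.card :=
            Nat.mul_le_mul_right _ (card_permsMapping_insert ha)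
      _ = (permsMapping X Z).card * Fintype.card J ^ X.card * Z.card := by ring
      _ ≤ Fintype.card (Equiv.Perm J) * Z.card ^ X.card * Z.card := Nat.mul_le_mul_right _ ih
      _ = _ := by ring

lemma card_permsMapping_le_real [Nonempty J] (X Z : Finset J) :
    ((permsMapping X Z).card : ℝ) ≤
      Fintype.card (Equiv.Perm J) * ((Z.card : ℝ) / Fintype.card J) ^ X.card := by
  have h : ((permsMapping X Z).card : ℝ) * (Fintype.card J : ℝ) ^ X.card ≤
      Fintype.card (Equiv.Perm J) * (Z.card : ℝ) ^ X.card := by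
    exact_mod_cast card_permsMapping_le X Z
  have hJ : (0 : ℝ) < Fintype.card J := by exact_mod_cast Fintype.card_pos
  rw [div_pow, ← mul_div_assoc, le_div_iff₀ (by positivity)]
  exact h

/-- Light items of large total weight contain a subfamily of intermediate weight. -/
lemma exists_subset_sum_mem_Ico {ι : Type} (s : Finset ι) (f : ι → ℝ) {t : ℝ}
    (hf : ∀ i ∈ s, f i < t) (hs : t ≤ ∑ i ∈ s, f i) (ht : 0 < t) :
    ∃ S ⊆ s, t ≤ ∑ i ∈ S, f i ∧ ∑ i ∈ S, f i < 2 * t := by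
  induction s using Finset.induction_on with
  | empty => simp at hs; linarith
  | insert a s ha ih =>
    by_cases h : t ≤ ∑ i ∈ s, f i
    · obtain ⟨S, hS, h1⟩ := ih (fun i hi => hf i (Finset.mem_insert_of_mem hi)) h
      exact ⟨S, hS.trans (Finset.subset_insert _ _), h1⟩
    · refine ⟨_, subset_rfl, hs, ?_⟩
      rw [Finset.sum_insert ha]
      have := hf a (Finset.mem_insert_self _ _)
      linarith

/-- Two elements of `Gd` are linked if they have the same class or are matched by `ρ`. -/
def Linked {ι : Type} (Gd : Finset J) (cl : J → ι) (ρ : Equiv.Perm J) (i i' : J) : Prop :=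
  i ∈ Gd ∧ i' ∈ Gd ∧ (cl i = cl i' ∨ ρ i = i')

/-- A random permutation joins few classes into a linear-size block. -/
lemma card_perms_no_giant_le [Nonempty J] {ι : Type} (Gd : Finset J) (cl : J → ι) {m : ℕ}
    (hm : (Gd.image cl).card ≤ m) {η : ℝ} (hη : 0 < η)
    (hG : 3 * η * Fintype.card J ≤ Gd.card) :
    (((Finset.univ : Finset (Equiv.Perm J)).filter fun ρ => ∀ q : Quot (Linked Gd cl ρ),
      ((Gd.filter fun i => Quot.mk _ i = q).card : ℝ) < η * Fintype.card J).card : ℝ) ≤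
      Fintype.card (Equiv.Perm J) * (2 ^ m * (1 - η) ^ ⌈η * Fintype.card J⌉₊) := by
  set N : ℝ := (Fintype.card J : ℝ) with hN
  have hNpos : 0 < N := by rw [hN]; exact_mod_cast Fintype.card_pos
  have hη1 : η ≤ 1 := by
    have : (Gd.card : ℝ) ≤ N := by rw [hN]; exact_mod_cast Finset.card_le_univ _
    by_contra! h
    nlinarith
  let XA : Finset ι → Finset J := fun A => Gd.filter fun i => cl i ∈ A
  let 𝒜 := (Gd.image cl).powerset.filter fun A =>
    η * N ≤ (XA A).card ∧ η * N ≤ (Gd \ XA A).card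
  have hsub : ((Finset.univ : Finset (Equiv.Perm J)).filter fun ρ => ∀ q : Quot (Linked Gd cl ρ),
      ((Gd.filter fun i => Quot.mk _ i = q).card : ℝ) < η * N) ⊆
      𝒜.biUnion fun A => permsMapping (XA A) (Gd \ XA A)ᶜ := by
    intro ρ hρ
    simp only [Finset.mem_filter, Finset.mem_univ, true_and] at hρ
    let mk : J → Quot (Linked Gd cl ρ) := Quot.mk _
    have hsum : ∀ S ⊆ Gd.image mk, (∑ q ∈ S, ((Gd.filter fun i => mk i = q).card : ℝ)) =
        (Gd.filter fun i => mk i ∈ S).card := by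
      intro S _
      rw [← Nat.cast_sum]
      congr 1
      rw [Finset.card_eq_sum_card_fiberwise (f := mk) (t := S)]
      · refine Finset.sum_congr rfl fun q hq => ?_
        congr 1
        ext i
        simp only [Finset.mem_filter]
        constructor
        · rintro ⟨h1, h2⟩
          exact ⟨⟨h1, h2 ▸ hq⟩, h2⟩
        · rintro ⟨⟨h1, _⟩, h2⟩
          exact ⟨h1, h2⟩
      · intro i hi
        exact (Finset.mem_filter.1 hi).2
    have hall : (Gd.filter fun i => mk i ∈ Gd.image mk) = Gd :=
      Finset.filter_true_of_mem fun i hi => Finset.mem_image_of_mem _ hi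
    have htot := hsum _ subset_rfl
    rw [hall] at htot
    obtain ⟨S, hS, hS1, hS2⟩ := exists_subset_sum_mem_Ico (Gd.image mk)
      (fun q => ((Gd.filter fun i => mk i = q).card : ℝ)) (t := η * N) (fun q _ => hρ q)
      (by rw [htot]; nlinarith) (by positivity)
    rw [hsum S hS] at hS1 hS2
    set X := Gd.filter fun i => mk i ∈ S with hX
    have hXA : XA (X.image cl) = X := by
      ext i
      simp only [XA, Finset.mem_filter, Finset.mem_image]
      constructor
      · rintro ⟨hi, x, hx, hxi⟩
        have hx' := Finset.mem_filter.1 hx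
        have : mk x = mk i := Quot.sound ⟨hx'.1, hi, Or.inl hxi⟩
        exact Finset.mem_filter.2 ⟨hi, this ▸ hx'.2⟩
      · intro hi
        exact ⟨(Finset.mem_filter.1 hi).1, i, hi, rfl⟩
    rw [Finset.mem_biUnion]
    refine ⟨X.image cl, ?_, ?_⟩
    · simp only [𝒜, Finset.mem_filter, Finset.mem_powerset, hXA]
      refine ⟨Finset.image_subset_image (Finset.filter_subset _ _), hS1, ?_⟩
      have h1 := Finset.card_sdiff_add_card_eq_card (Finset.filter_subset (fun i => mk i ∈ S) Gd)
      rw [← hX] at h1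
      have h2 : ((Gd \ X).card : ℝ) + X.card = Gd.card := by exact_mod_cast h1
      nlinarith
    · rw [hXA, mem_permsMapping]
      intro i hi
      rw [Finset.mem_compl, Finset.mem_sdiff]
      rintro ⟨h1, h2⟩
      have hi' := Finset.mem_filter.1 hi
      have : mk i = mk (ρ i) := Quot.sound ⟨hi'.1, h1, Or.inr rfl⟩
      exact h2 (Finset.mem_filter.2 ⟨h1, this ▸ hi'.2⟩)
  have hA : ∀ A ∈ 𝒜, ((permsMapping (XA A) (Gd \ XA A)ᶜ).card : ℝ) ≤
      Fintype.card (Equiv.Perm J) * (1 - η) ^ ⌈η * N⌉₊ := by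
    intro A hA
    obtain ⟨-, h1, h2⟩ := Finset.mem_filter.1 hA
    refine (card_permsMapping_le_real _ _).trans ?_
    gcongr
    have h3 : ((Gd \ XA A)ᶜ.card : ℝ) / N ≤ 1 - η := by
      rw [div_le_iff₀ hNpos, Finset.card_compl, Nat.cast_sub (Finset.card_le_univ _)]
      linarith
    calc _ ≤ (1 - η) ^ (XA A).card := by gcongr
      _ ≤ _ := pow_le_pow_of_le_one (by linarith) (by linarith) (Nat.ceil_le.2 h1)
  calc _ ≤ ((𝒜.biUnion fun A => permsMapping (XA A) (Gd \ XA A)ᶜ).card : ℝ) := by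
          exact_mod_cast Finset.card_le_card hsub
    _ ≤ ∑ A ∈ 𝒜, ((permsMapping (XA A) (Gd \ XA A)ᶜ).card : ℝ) := by
          exact_mod_cast Finset.card_biUnion_le
    _ ≤ ∑ A ∈ 𝒜, Fintype.card (Equiv.Perm J) * (1 - η) ^ ⌈η * N⌉₊ := Finset.sum_le_sum hA
    _ = 𝒜.card * (Fintype.card (Equiv.Perm J) * (1 - η) ^ ⌈η * N⌉₊) := by simp
    _ ≤ 2 ^ m * (Fintype.card (Equiv.Perm J) * (1 - η) ^ ⌈η * N⌉₊) := by
          have h1 : 𝒜.card ≤ 2 ^ m := by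
            refine (Finset.card_filter_le _ _).trans ?_
            rw [Finset.card_powerset]
            exact Nat.pow_le_pow_right (by norm_num) hm
          have h2 : (0 : ℝ) ≤ 1 - η := by linarith
          have h3 : (𝒜.card : ℝ) ≤ 2 ^ m := by exact_mod_cast h1
          gcongr
    _ = _ := by ring

lemma choose_mul_pow_le (N m : ℕ) : (N.choose m : ℝ) * (m : ℝ) ^ m ≤ 3 ^ m * (N : ℝ) ^ m := by
  have h1 : (N.choose m : ℝ) ≤ (N : ℝ) ^ m / m.factorial := Nat.choose_le_pow_div m N
  have h2 : (m : ℝ) ^ m / m.factorial ≤ 3 ^ m := by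
    refine (Real.pow_div_factorial_le_exp (m : ℝ) (Nat.cast_nonneg m) m).trans ?_
    rw [← mul_one (m : ℝ), Real.exp_nat_mul]
    gcongr
    linarith [Real.exp_one_lt_d9]
  calc (N.choose m : ℝ) * (m : ℝ) ^ m ≤ (N : ℝ) ^ m / m.factorial * (m : ℝ) ^ m := by gcongr
    _ = (m : ℝ) ^ m / m.factorial * (N : ℝ) ^ m := by ring
    _ ≤ _ := by gcongr

/-- A bounded number of permutations of a finite set form a vertex expander. -/
lemma exists_expanding_perms (J : Type) [Fintype J] :
    ∃ f : Fin 30 → Equiv.Perm J, ∀ S : Finset J, 2 * S.card ≤ Fintype.card J →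
      S.card ≤ 2 * ∑ j, ((S.image (f j)) \ S).card := by
  by_contra! hcon
  have hne : Nonempty J := by
    obtain ⟨S, h1, h2⟩ := hcon 1
    have : 0 < S.card := by omega
    obtain ⟨x, -⟩ := Finset.card_pos.1 this
    exact ⟨x⟩
  set N := Fintype.card J with hN
  have hNpos : 0 < N := Fintype.card_pos
  have hNr : (0 : ℝ) < N := by exact_mod_cast hNpos
  let P := Fintype.card (Equiv.Perm J)
  let μ : ℕ → ℕ := fun s => s + s / 2
  let I := (Finset.Icc 1 N).filter fun s => 2 * s ≤ N
  let fam : ℕ → Finset (Finset J × Finset J) := fun s =>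
    ((Finset.univ : Finset J).powersetCard (μ s)).biUnion fun Z =>
      (Z.powersetCard s).image fun S => (S, Z)
  have hcover : (Finset.univ : Finset (Fin 30 → Equiv.Perm J)) ⊆ I.biUnion fun s =>
      (fam s).biUnion fun q => Fintype.piFinset fun _ => permsMapping q.1 q.2 := by
    intro f _
    obtain ⟨S, h1, h2⟩ := hcon f
    let T := Finset.univ.biUnion fun j => (S.image (f j)) \ S
    have hT : T.card ≤ S.card / 2 := by
      have : T.card ≤ ∑ j, ((S.image (f j)) \ S).card := Finset.card_biUnion_le
      omega
    have hST : (S ∪ T).card ≤ μ S.card := (Finset.card_union_le _ _).trans (by simp only [μ]; omega)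
    obtain ⟨Z, hZ1, hZ2⟩ := Finset.exists_superset_card_eq hST (by simp only [μ]; omega)
    rw [Finset.mem_biUnion]
    refine ⟨S.card, ?_, ?_⟩
    · simp only [I, Finset.mem_filter, Finset.mem_Icc]
      omega
    · rw [Finset.mem_biUnion]
      refine ⟨(S, Z), ?_, ?_⟩
      · simp only [fam, Finset.mem_biUnion, Finset.mem_image, Finset.mem_powersetCard]
        exact ⟨Z, ⟨Finset.subset_univ _, hZ2⟩, S,
          ⟨Finset.subset_union_left.trans hZ1, rfl⟩, rfl⟩
      · rw [Fintype.mem_piFinset]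
        intro j
        rw [mem_permsMapping]
        intro x hx
        apply hZ1
        by_cases h : f j x ∈ S
        · exact Finset.mem_union_left _ h
        · refine Finset.mem_union_right _ (Finset.mem_biUnion.2 ⟨j, Finset.mem_univ _, ?_⟩)
          exact Finset.mem_sdiff.2 ⟨Finset.mem_image_of_mem _ hx, h⟩
  have hfam : ∀ s, ((fam s).card : ℝ) ≤ N.choose (μ s) * 2 ^ μ s := by
    intro s
    have h : (fam s).card ≤ ∑ Z ∈ (Finset.univ : Finset J).powersetCard (μ s), 2 ^ μ s := by
      refine Finset.card_biUnion_le.trans (Finset.sum_le_sum fun Z hZ => ?_)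
      refine Finset.card_image_le.trans ?_
      rw [Finset.card_powersetCard, (Finset.mem_powersetCard.1 hZ).2]
      exact Nat.choose_le_two_pow _ _
    rw [Finset.sum_const, Finset.card_powersetCard, smul_eq_mul, Finset.card_univ] at h
    exact_mod_cast h
  have hterm : ∀ s ∈ I, (((fam s).biUnion fun q =>
      Fintype.piFinset fun _ : Fin 30 => permsMapping q.1 q.2).card : ℝ) ≤
      (P : ℝ) ^ 30 * (1 / 4) ^ s := by
    intro s hs
    simp only [I, Finset.mem_filter, Finset.mem_Icc] at hs
    set m := μ s with hm
    have hmval : m = s + s / 2 := rfl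
    have hmpos : 0 < m := by omega
    have hmr : (0 : ℝ) < m := by exact_mod_cast hmpos
    set x : ℝ := (m : ℝ) / N with hx
    have hx0 : 0 < x := by positivity
    have hx1 : x ≤ 3 / 4 := by
      rw [hx, div_le_iff₀ hNr]
      have : 4 * m ≤ 3 * N := by omega
      have : (4 : ℝ) * m ≤ 3 * N := by exact_mod_cast this
      linarith
    have hq : ∀ q ∈ fam s, ((Fintype.piFinset fun _ : Fin 30 =>
        permsMapping q.1 q.2).card : ℝ) ≤ (P : ℝ) ^ 30 * x ^ (20 * m) := by
      intro q hq
      simp only [fam, Finset.mem_biUnion, Finset.mem_image, Finset.mem_powersetCard] at hq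
      obtain ⟨Z, ⟨-, hZ⟩, S, ⟨-, hS⟩, rfl⟩ := hq
      rw [Fintype.card_piFinset]
      simp only [Finset.prod_const, Finset.card_univ, Fintype.card_fin, Nat.cast_pow]
      have h1 := card_permsMapping_le_real S Z
      rw [hZ, hS, ← hm, ← hN, ← hx] at h1
      calc ((permsMapping S Z).card : ℝ) ^ 30 ≤ (P * x ^ s) ^ 30 := by gcongr
        _ = P ^ 30 * x ^ (30 * s) := by ring
        _ ≤ P ^ 30 * x ^ (20 * m) := by
            gcongr ?_ * ?_
            exact pow_le_pow_of_le_one hx0.le (by linarith) (by omega)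
    calc _ ≤ ∑ q ∈ fam s, ((Fintype.piFinset fun _ : Fin 30 =>
          permsMapping q.1 q.2).card : ℝ) := by exact_mod_cast Finset.card_biUnion_le
      _ ≤ ∑ q ∈ fam s, (P : ℝ) ^ 30 * x ^ (20 * m) := Finset.sum_le_sum hq
      _ = (fam s).card * ((P : ℝ) ^ 30 * x ^ (20 * m)) := by simp
      _ ≤ N.choose m * 2 ^ m * ((P : ℝ) ^ 30 * x ^ (20 * m)) := by
          gcongr
          exact hfam s
      _ = (P : ℝ) ^ 30 * ((N.choose m * x ^ m) * (2 * x ^ 19) ^ m) := by ring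
      _ ≤ (P : ℝ) ^ 30 * (3 ^ m * (2 * (3 / 4) ^ 19) ^ m) := by
          gcongr
          rw [hx, div_pow, ← mul_div_assoc, div_le_iff₀ (by positivity)]
          exact choose_mul_pow_le N m
      _ = (P : ℝ) ^ 30 * (3 * (2 * (3 / 4) ^ 19)) ^ m := by rw [mul_pow 3]
      _ ≤ (P : ℝ) ^ 30 * (1 / 4) ^ m := by
          gcongr
          norm_num
      _ ≤ (P : ℝ) ^ 30 * (1 / 4) ^ s := by
          gcongr ?_ * ?_
          exact pow_le_pow_of_le_one (by norm_num) (by norm_num) (by omega)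
  have hP : (0 : ℝ) < (P : ℝ) ^ 30 := by
    have : 0 < P := Fintype.card_pos
    positivity
  have hgeo : ∑ s ∈ I, (1 / 4 : ℝ) ^ s < 1 := by
    have h1 : ∑ s ∈ I, (1 / 4 : ℝ) ^ s ≤ ∑ s ∈ Finset.Ico 1 (N + 1), (1 / 4 : ℝ) ^ s := by
      refine Finset.sum_le_sum_of_subset_of_nonneg ?_ fun _ _ _ => by positivity
      intro s hs
      simp only [I, Finset.mem_filter, Finset.mem_Icc] at hs
      rw [Finset.mem_Ico]
      omega
    refine h1.trans_lt ?_
    rw [Finset.sum_Ico_eq_sub _ (by omega), geom_sum_eq (by norm_num)]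
    have : (0 : ℝ) < (1 / 4) ^ (N + 1) := by positivity
    norm_num
    linarith
  have hfinal : ((Finset.univ : Finset (Fin 30 → Equiv.Perm J)).card : ℝ) ≤
      ∑ s ∈ I, (P : ℝ) ^ 30 * (1 / 4) ^ s := by
    refine le_trans ?_ (Finset.sum_le_sum hterm)
    exact_mod_cast (Finset.card_le_card hcover).trans Finset.card_biUnion_le
  rw [← Finset.mul_sum, Finset.card_univ, Fintype.card_pi_const] at hfinal
  push_cast at hfinal
  nlinarith

end PermCounting

/-! ### Growth of nonbacktracking walks avoiding an edge -/

section Growth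

variable {d : ℕ} {Q : Type} [Group Q]

/-- `(x, k)` is one of the two half-edges of the edge of colour `kc` at `xc`. -/
def IsCut (s : Fin d → Q) (xc : Q) (kc : Fin d) (x : Q) (k : Fin d) : Prop :=
  k = kc ∧ (x = xc ∨ x = xc * s kc)

/-- The colours different from `i` of the uncut edges at `x`. -/
def nextColours (s : Fin d → Q) (xc : Q) (kc : Fin d) (x : Q) (i : Fin d) : Finset (Fin d) :=
  Finset.univ.filter fun j => j ≠ i ∧ ¬ IsCut s xc kc x j

/-- The sum of `f` over the uncut nonbacktracking continuations. -/
def nextSum (s : Fin d → Q) (xc : Q) (kc : Fin d) (f : Q → Fin d → ℝ) (x : Q) (i : Fin d) : ℝ :=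
  ∑ j ∈ nextColours s xc kc x i, f (x * s j) j

/-- The number of nonbacktracking walks of length `r` avoiding the cut edge. -/
def walkCount (s : Fin d → Q) (xc : Q) (kc : Fin d) : ℕ → Q → Fin d → ℝ
  | 0 => fun _ _ => 1
  | r + 1 => nextSum s xc kc (walkCount s xc kc r)

/-- The number of such walks of length `r` that can be continued through the cut edge. -/
def exitCount (s : Fin d → Q) (xc : Q) (kc : Fin d) : ℕ → Q → Fin d → ℝ
  | 0 => fun x i => ind (kc ≠ i ∧ (x = xc ∨ x = xc * s kc))
  | r + 1 => nextSum s xc kc (exitCount s xc kc r)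

variable {s : Fin d → Q} {xc : Q} {kc : Fin d}

lemma mem_nextColours {x : Q} {i j : Fin d} :
    j ∈ nextColours s xc kc x i ↔ j ≠ i ∧ ¬ IsCut s xc kc x j := by
  simp [nextColours]

lemma exitCount_zero (x : Q) (i : Fin d) :
    exitCount s xc kc 0 x i = ind (kc ≠ i ∧ (x = xc ∨ x = xc * s kc)) := rfl

lemma card_nextColours (x : Q) (i : Fin d) :
    ((nextColours s xc kc x i).card : ℝ) = (d : ℝ) - 1 - exitCount s xc kc 0 x i := by
  have hd : (1 : ℕ) ≤ d := by have := i.2; omega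
  by_cases h : kc ≠ i ∧ (x = xc ∨ x = xc * s kc)
  · have h1 : nextColours s xc kc x i = (Finset.univ.erase i).erase kc := by
      ext j
      simp only [mem_nextColours, IsCut, Finset.mem_univ, Finset.mem_erase]
      tauto
    rw [exitCount_zero, ind_of_true h, h1, Finset.card_erase_of_mem (by simp [h.1]),
      Finset.card_erase_of_mem (Finset.mem_univ _), Finset.card_univ, Fintype.card_fin]
    have h2 : 2 ≤ d := by
      have := Finset.card_le_univ ({kc, i} : Finset (Fin d))
      rwa [Finset.card_pair h.1, Fintype.card_fin] at this
    rw [Nat.cast_sub (by omega), Nat.cast_sub (by omega)]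
    simp
  · have h1 : nextColours s xc kc x i = Finset.univ.erase i := by
      ext j
      simp only [mem_nextColours, IsCut, Finset.mem_univ, Finset.mem_erase, and_true,
        and_iff_left_iff_imp]
      rintro hj ⟨rfl, h2⟩
      exact h ⟨hj, h2⟩
    rw [exitCount_zero, ind_of_false h, h1, Finset.card_erase_of_mem (Finset.mem_univ _),
      Finset.card_univ, Fintype.card_fin, Nat.cast_sub hd]
    simp

lemma walkCount_succ (r : ℕ) (x : Q) (i : Fin d) :
    walkCount s xc kc (r + 1) x i =
      ((d : ℝ) - 1) * walkCount s xc kc r x i - exitCount s xc kc r x i := by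
  induction r generalizing x i with
  | zero =>
    change ∑ j ∈ nextColours s xc kc x i, (1 : ℝ) = _
    simp only [walkCount, Finset.sum_const, nsmul_eq_mul, mul_one]
    exact card_nextColours x i
  | succ r ih =>
    change ∑ j ∈ nextColours s xc kc x i, walkCount s xc kc (r + 1) (x * s j) j = _
    rw [Finset.sum_congr rfl fun j _ => ih (x * s j) j,
      Finset.sum_sub_distrib, ← Finset.mul_sum]
    rfl

lemma exitCount_nonneg (r : ℕ) (x : Q) (i : Fin d) : 0 ≤ exitCount s xc kc r x i := by
  induction r generalizing x i with
  | zero => exact ind_nonneg _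
  | succ r ih =>
    change 0 ≤ ∑ j ∈ nextColours s xc kc x i, exitCount s xc kc r (x * s j) j
    exact Finset.sum_nonneg fun j _ => ih (x * s j) j

lemma sum_exitCount_succ (r : ℕ) (x : Q) (i : Fin d) :
    ∑ t ∈ Finset.range (r + 1), exitCount s xc kc t x i =
      exitCount s xc kc 0 x i + ∑ j ∈ nextColours s xc kc x i,
        ∑ t ∈ Finset.range r, exitCount s xc kc t (x * s j) j := by
  rw [Finset.sum_range_succ', add_comm, Finset.sum_comm]
  rfl

lemma exists_word_of_sum_exitCount_ne_zero (r : ℕ) (x : Q) (i : Fin d)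
    (h : ∑ t ∈ Finset.range r, exitCount s xc kc t x i ≠ 0) :
    ∃ w : List (Fin d), (i :: (w ++ [kc])).IsChain (· ≠ ·) ∧ w.length < r ∧
      (x * (w.map s).prod = xc ∨ x * (w.map s).prod = xc * s kc) := by
  induction r generalizing x i with
  | zero => simp at h
  | succ r ih =>
    rw [sum_exitCount_succ] at h
    by_cases h0 : exitCount s xc kc 0 x i = 0
    · rw [h0, zero_add] at h
      obtain ⟨j, hj, hj2⟩ := Finset.exists_ne_zero_of_sum_ne_zero h
      obtain ⟨w, h1, h2, h3⟩ := ih _ _ hj2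
      refine ⟨j :: w, ?_, by simpa using h2, by simpa [mul_assoc] using h3⟩
      exact List.isChain_cons_cons.2 ⟨(mem_nextColours.1 hj).1.symm, h1⟩
    · refine ⟨[], ?_, by simp, ?_⟩ <;>
      by_cases hx : kc ≠ i ∧ (x = xc ∨ x = xc * s kc)
      · simpa using hx.1.symm
      · exact absurd (ind_of_false hx) h0
      · simpa using hx.2
      · exact absurd (ind_of_false hx) h0

lemma exit_word_unique {g : ℕ} (hs : ∀ k, s k * s k = 1) (hfree : FreeUpTo s g) {x : Q}
    {w w' : List (Fin d)} (hw : (w ++ [kc]).IsChain (· ≠ ·)) (hl : w.length < g)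
    (hw' : (w' ++ [kc]).IsChain (· ≠ ·)) (hl' : w'.length < g)
    (h : x * (w.map s).prod = xc ∨ x * (w.map s).prod = xc * s kc)
    (h' : x * (w'.map s).prod = xc ∨ x * (w'.map s).prod = xc * s kc) : w = w' := by
  have hcw := (List.isChain_append.1 hw).1
  have hcw' := (List.isChain_append.1 hw').1
  have same : x * (w.map s).prod = x * (w'.map s).prod → w = w' := fun he =>
    hfree w w' hcw hl.le hcw' hl'.le (mul_left_cancel he)
  have diff : (w.map s).prod = (w'.map s).prod * s kc → w = w' := by
    intro he
    have he' : (w'.map s).prod = (w.map s).prod * s kc := by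
      rw [he, mul_assoc, hs, mul_one]
    have h1 := hfree w (w' ++ [kc]) hcw hl.le hw' (by simpa using hl') (by simpa using he)
    have h2 := hfree w' (w ++ [kc]) hcw' hl'.le hw (by simpa using hl) (by simpa using he')
    have h3 := congrArg List.length h1
    have h4 := congrArg List.length h2
    simp at h3 h4
    omega
  rcases h with h | h <;> rcases h' with h' | h'
  · exact same (h.trans h'.symm)
  · apply diff
    apply mul_left_cancel (a := x)
    rw [← mul_assoc, h', h, mul_assoc, hs, mul_one]
  · apply diff
    apply mul_left_cancel (a := x)
    rw [← mul_assoc, h', h]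
  · exact same (h.trans h'.symm)

lemma sum_exitCount_le_one {g : ℕ} (hs : ∀ k, s k * s k = 1) (hfree : FreeUpTo s g) (r : ℕ)
    (hr : r ≤ g) (x : Q) (i : Fin d) :
    ∑ t ∈ Finset.range r, exitCount s xc kc t x i ≤ 1 := by
  induction r generalizing x i with
  | zero => simp
  | succ r ih =>
    rw [sum_exitCount_succ]
    have hword : ∀ j ∈ nextColours s xc kc x i,
        ∑ t ∈ Finset.range r, exitCount s xc kc t (x * s j) j ≠ 0 →
        ∃ w : List (Fin d), ((j :: w) ++ [kc]).IsChain (· ≠ ·) ∧ (j :: w).length < g ∧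
          (x * ((j :: w).map s).prod = xc ∨ x * ((j :: w).map s).prod = xc * s kc) := by
      intro j _ hj
      obtain ⟨w, h1, h2, h3⟩ := exists_word_of_sum_exitCount_ne_zero _ _ _ hj
      exact ⟨w, h1, by simp only [List.length_cons]; omega, by simpa [mul_assoc] using h3⟩
    by_cases hx : kc ≠ i ∧ (x = xc ∨ x = xc * s kc)
    · have h0 : ∀ j ∈ nextColours s xc kc x i,
          ∑ t ∈ Finset.range r, exitCount s xc kc t (x * s j) j = 0 := by
        intro j hj
        by_contra hne
        obtain ⟨w, h1, h2, h3⟩ := hword j hj hne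
        have := exit_word_unique hs hfree (w := []) (kc := kc) (x := x) (xc := xc) (by simp)
          (by simp; omega) h1 h2 (by simpa using hx.2) h3
        simp at this
      rw [Finset.sum_congr rfl h0]
      simp [exitCount, ind_of_true hx]
    · rw [exitCount_zero, ind_of_false hx, zero_add]
      by_cases hall : ∀ j ∈ nextColours s xc kc x i,
          ∑ t ∈ Finset.range r, exitCount s xc kc t (x * s j) j = 0
      · rw [Finset.sum_congr rfl hall]
        simp
      · push Not at hall
        obtain ⟨j, hj, hne⟩ := hall
        obtain ⟨w, h1, h2, h3⟩ := hword j hj hne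
        rw [Finset.sum_eq_single j]
        · exact ih (by omega) _ _
        · intro j' hj' hjj
          by_contra hne'
          obtain ⟨w', h1', h2', h3'⟩ := hword j' hj' hne'
          have := exit_word_unique hs hfree h1 h2 h1' h2' h3 h3'
          exact hjj (List.cons.inj this).1.symm
        · exact fun h => absurd hj h

lemma walkCount_ge (hd : 2 ≤ d) (r : ℕ) (x : Q) (i : Fin d) :
    ((d : ℝ) - 1) ^ r * (1 - (∑ t ∈ Finset.range r, exitCount s xc kc t x i) / ((d : ℝ) - 1)) ≤
      walkCount s xc kc r x i := by
  have hd' : (1 : ℝ) ≤ (d : ℝ) - 1 := by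
    have : (2 : ℝ) ≤ d := by exact_mod_cast hd
    linarith
  induction r with
  | zero => simp [walkCount]
  | succ r ih =>
    rw [walkCount_succ, Finset.sum_range_succ, pow_succ]
    have he := exitCount_nonneg (s := s) (xc := xc) (kc := kc) r x i
    have h1 : (1 : ℝ) ≤ ((d : ℝ) - 1) ^ r := one_le_pow₀ hd'
    set D := (d : ℝ) - 1
    set S := ∑ t ∈ Finset.range r, exitCount s xc kc t x i
    have h2 : D ^ r * D * (1 - (S + exitCount s xc kc r x i) / D) =
        D * (D ^ r * (1 - S / D)) - D ^ r * exitCount s xc kc r x i := by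
      field_simp
      ring
    rw [h2]
    nlinarith [mul_le_mul_of_nonneg_left ih (by linarith : (0 : ℝ) ≤ D),
      mul_le_mul_of_nonneg_right h1 he]

lemma walkCount_le (r : ℕ) (x : Q) (i : Fin d) :
    walkCount s xc kc r x i ≤ ((d : ℝ) - 1) ^ r := by
  have hd : (0 : ℝ) ≤ (d : ℝ) - 1 := by
    have : 1 ≤ d := by have := i.2; omega
    have : (1 : ℝ) ≤ d := by exact_mod_cast this
    linarith
  induction r with
  | zero => simp [walkCount]
  | succ r ih =>
    rw [walkCount_succ, pow_succ]
    nlinarith [exitCount_nonneg (s := s) (xc := xc) (kc := kc) r x i,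
      mul_le_mul_of_nonneg_left ih hd]

end Growth

/-- In a Cayley graph of large girth, removing one edge does not destroy supercriticality. -/
lemma exists_supercritical_weight (d : ℕ) (hd : 3 ≤ d) (p : ℝ) (hp : 1 / ((d : ℝ) - 1) < p)
    (hp1 : p < 1) : ∃ g : ℕ, ∃ η > (0 : ℝ), ∃ H : ℝ, ∀ (Q : Type) [Group Q] (s : Fin d → Q),
      (∀ k, s k * s k = 1) → FreeUpTo s g → ∀ (xc : Q) (kc : Fin d),
      ∃ h : Q → Fin d → ℝ, (∀ x i, 1 / 2 ≤ h x i) ∧ (∀ x i, h x i ≤ H) ∧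
        ∀ x i, (1 + η) * h x i ≤ p * nextSum s xc kc h x i := by
  have hD : (2 : ℝ) ≤ (d : ℝ) - 1 := by
    have : (3 : ℝ) ≤ d := by exact_mod_cast hd
    linarith
  set D := (d : ℝ) - 1 with hDdef
  have hpD : 1 < p * D := by
    rwa [div_lt_iff₀ (by linarith)] at hp
  set η := (p * D - 1) / 2 with hη
  have hηpos : 0 < η := by rw [hη]; linarith
  obtain ⟨r, hr⟩ := pow_unbounded_of_one_lt (2 / η) (by linarith : (1 : ℝ) < D)
  refine ⟨r + 1, η, hηpos, D ^ r, ?_⟩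
  intro Q _ s hs hfree xc kc
  have hge : ∀ x i, D ^ r / 2 ≤ walkCount s xc kc r x i := by
    intro x i
    refine le_trans ?_ (walkCount_ge (by omega) r x i)
    rw [div_eq_mul_one_div]
    gcongr
    have h1 := sum_exitCount_le_one (xc := xc) (kc := kc) hs hfree r (Nat.le_succ r) x i
    have h2 : (∑ t ∈ Finset.range r, exitCount s xc kc t x i) / D ≤ 1 / 2 := by
      rw [div_le_iff₀ (by linarith)]
      linarith
    linarith
  refine ⟨walkCount s xc kc r, fun x i => ?_, fun x i => walkCount_le r x i, fun x i => ?_⟩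
  · have : (1 : ℝ) ≤ D ^ r := one_le_pow₀ (by linarith)
    linarith [hge x i]
  · have h1 : nextSum s xc kc (walkCount s xc kc r) x i =
        D * walkCount s xc kc r x i - exitCount s xc kc r x i := walkCount_succ r x i
    rw [h1]
    have h2 := sum_exitCount_le_one (xc := xc) (kc := kc) hs hfree (r + 1) le_rfl x i
    have h3 : exitCount s xc kc r x i ≤ 1 := by
      refine le_trans ?_ h2
      exact Finset.single_le_sum (f := fun t => exitCount s xc kc t x i)
        (fun t _ => exitCount_nonneg t x i) (Finset.self_mem_range_succ r)
    have h4 : 1 ≤ η * walkCount s xc kc r x i := by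
      have : 2 < D ^ r * η := by rwa [div_lt_iff₀ hηpos] at hr
      nlinarith [hge x i]
    have hp0 : 0 < p := lt_trans (by positivity) hp
    have h5 : p * D = 1 + 2 * η := by rw [hη]; ring
    have h6 : p * exitCount s xc kc r x i ≤ 1 := by nlinarith
    calc (1 + η) * walkCount s xc kc r x i
        ≤ (p * D) * walkCount s xc kc r x i - 1 := by rw [h5]; linarith
      _ ≤ _ := by linarith

/-! ### Covers of Cayley graphs -/

/-- Voltage data for a cover, with fibre `I`, of the Cayley graph of `Q` with respect to
involutions `s k`. -/
structure Cover (d : ℕ) (Q I : Type) [Group Q] where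
  /-- The generators. -/
  s : Fin d → Q
  s_mul : ∀ k, s k * s k = 1
  /-- An orientation of the edges of the Cayley graph. -/
  o : Q → Fin d → Bool
  o_mul : ∀ x k, o (x * s k) k = !o x k
  /-- The permutation of the fibre along a positively oriented edge. -/
  π : Q → Fin d → Equiv.Perm I

namespace Cover

variable {d : ℕ} {Q I : Type} [Group Q] (C : Cover d Q I)

/-- The neighbour of `v` along the edge of colour `k`. -/
def move (k : Fin d) (v : I × Q) : I × Q :=
  (if C.o v.2 k then C.π v.2 k v.1 else (C.π (v.2 * C.s k) k)⁻¹ v.1, v.2 * C.s k)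

/-- The name of the edge of colour `k` at `v`. -/
def lab (k : Fin d) (v : I × Q) : (I × Q) × Fin d :=
  (if C.o v.2 k then v else C.move k v, k)

lemma move_snd (k : Fin d) (v : I × Q) : (C.move k v).2 = v.2 * C.s k := rfl

lemma mul_s_mul_s (x : Q) (k : Fin d) : x * C.s k * C.s k = x := by
  rw [mul_assoc, C.s_mul, mul_one]

lemma move_move (k : Fin d) (v : I × Q) : C.move k (C.move k v) = v := by
  obtain ⟨i, x⟩ := v
  have h := C.o_mul x k
  by_cases hx : C.o x k = true
  · simp [move, hx, h, C.mul_s_mul_s]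
  · simp [move, hx, h, C.mul_s_mul_s]

lemma move_ne (k : Fin d) (v : I × Q) : C.move k v ≠ v := by
  intro h
  have h1 := C.o_mul v.2 k
  have h2 : v.2 * C.s k = v.2 := by rw [← C.move_snd, h]
  rw [h2] at h1
  revert h1
  cases C.o v.2 k <;> simp

lemma lab_move (k : Fin d) (v : I × Q) : C.lab k (C.move k v) = C.lab k v := by
  unfold lab
  rw [C.move_move, C.move_snd, C.o_mul]
  by_cases hx : C.o v.2 k = true
  · simp [hx]
  · simp [hx]

variable {W : Type} (e : W ≃ I × Q)

/-- The covering graph. -/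
def graph : SimpleGraph W where
  Adj v w := ∃ k, e w = C.move k (e v)
  symm := ⟨by
    rintro v w ⟨k, hk⟩
    exact ⟨k, by rw [hk, C.move_move]⟩⟩
  loopless := ⟨by
    rintro v ⟨k, hk⟩
    exact C.move_ne k _ hk.symm⟩

/-- The subgraph of open edges. -/
def openGraph (ω : (I × Q) × Fin d → Bool) : SimpleGraph W where
  Adj v w := ∃ k, e w = C.move k (e v) ∧ ω (C.lab k (e v)) = true
  symm := ⟨by
    rintro v w ⟨k, hk, hω⟩
    exact ⟨k, by rw [hk, C.move_move], by rw [hk, C.lab_move, hω]⟩⟩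
  loopless := ⟨by
    rintro v ⟨k, hk, -⟩
    exact C.move_ne k _ hk.symm⟩

/-- The edge with a given name. -/
def edgeOf (l : (I × Q) × Fin d) : Sym2 W := s(e.symm l.1, e.symm (C.move l.2 l.1))

lemma edgeOf_lab (k : Fin d) (v : I × Q) :
    C.edgeOf e (C.lab k v) = s(e.symm v, e.symm (C.move k v)) := by
  unfold edgeOf lab
  by_cases hx : C.o v.2 k = true
  · simp [hx]
  · simp only [hx, Bool.false_eq_true, if_false, C.move_move]
    exact Sym2.eq_swap

lemma colour_unique (hs : Function.Injective C.s) {v : I × Q} {k k' : Fin d}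
    (h : C.move k v = C.move k' v) : k = k' := by
  have := congrArg Prod.snd h
  rw [C.move_snd, C.move_snd] at this
  exact hs (mul_left_cancel this)

lemma lab_eq_of_edge_eq (hs : Function.Injective C.s) {v v' : I × Q} {k k' : Fin d}
    (h : s(e.symm v, e.symm (C.move k v)) = s(e.symm v', e.symm (C.move k' v'))) :
    C.lab k v = C.lab k' v' := by
  simp only [Sym2.eq_iff, EmbeddingLike.apply_eq_iff_eq] at h
  rcases h with ⟨rfl, h⟩ | ⟨h1, h2⟩
  · rw [C.colour_unique hs h]
  · have h3 : C.move k' v = v' := by rw [h1, C.move_move]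
    have : k = k' := C.colour_unique hs (h2.trans h3.symm)
    subst this
    rw [← h2, C.lab_move]

lemma ncard_neighborSet (hs : Function.Injective C.s) (v : W) :
    ((C.graph e).neighborSet v).ncard = d := by
  have : (C.graph e).neighborSet v = Set.range fun k => e.symm (C.move k (e v)) := by
    ext w
    constructor
    · rintro ⟨k, hk⟩
      exact ⟨k, by simp [← hk]⟩
    · rintro ⟨k, rfl⟩
      exact ⟨k, by simp⟩
  rw [this, ← Set.image_univ, Set.ncard_image_of_injective, Set.ncard_univ, Nat.card_fin]
  intro k k' h
  exact C.colour_unique hs (e.symm.injective h)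

variable [Fintype W] [DecidableEq W]

lemma card_crossing_le (hs : Function.Injective C.s)
    [Fintype I] [Fintype Q] (S : Finset W) :
    ((Finset.univ : Finset ((I × Q) × Fin d)).filter
      fun q => e.symm q.1 ∈ S ∧ e.symm (C.move q.2 q.1) ∉ S).card ≤ cutCard (C.graph e) S := by
  unfold cutCard
  refine Finset.card_le_card_of_injOn
    (fun q => s(e.symm q.1, e.symm (C.move q.2 q.1))) ?_ ?_
  · rintro ⟨v, k⟩ hq
    simp only [Finset.coe_filter, Finset.mem_univ, true_and, Set.mem_ofPred_eq] at hq
    simp only [edgeFinset', Finset.coe_filter, Finset.mem_filter, Finset.mem_univ, true_and,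
      Set.mem_ofPred_eq, SimpleGraph.mem_edgeSet]
    exact ⟨⟨k, by simp⟩, _, hq.1, _, hq.2, rfl⟩
  · rintro ⟨v, k⟩ hq ⟨v', k'⟩ hq' h
    simp only [Finset.coe_filter, Finset.mem_univ, true_and, Set.mem_ofPred_eq] at hq hq'
    simp only [Sym2.eq_iff, EmbeddingLike.apply_eq_iff_eq] at h
    rcases h with ⟨rfl, h⟩ | ⟨h1, h2⟩
    · rw [C.colour_unique hs h]
    · rw [h1] at hq
      exact absurd hq.1 hq'.2

end Cover

lemma percProb_eq_Pr {W : Type} [Fintype W] [DecidableEq W] (G : SimpleGraph W) (p : ℝ)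
    (P : SimpleGraph W → Prop) :
    percProb G p P = Pr p (fun ω : {a // a ∈ edgeFinset' G} → Bool =>
      P (SimpleGraph.fromEdgeSet {a | ∃ h : a ∈ edgeFinset' G, ω ⟨a, h⟩ = true})) := by
  unfold percProb Pr Ex
  refine Finset.sum_bij' (fun s _ => fun a => decide (a.1 ∈ s))
    (fun ω _ => (Finset.univ.filter fun a => ω a = true).map (Function.Embedding.subtype _))
    ?_ ?_ ?_ ?_ ?_
  · intro s _
    simp
  · intro ω _
    rw [Finset.mem_powerset]
    intro a ha
    simp only [Finset.mem_map, Finset.mem_filter, Function.Embedding.coe_subtype] at ha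
    obtain ⟨b, -, rfl⟩ := ha
    exact b.2
  · intro s hs
    rw [Finset.mem_powerset] at hs
    ext a
    simp only [decide_eq_true_eq, Finset.mem_map, Finset.mem_filter, Finset.mem_univ, true_and,
      Function.Embedding.coe_subtype, Subtype.exists, exists_and_left, exists_prop]
    exact ⟨fun ⟨b, hb, _, h⟩ => h ▸ hb, fun h => ⟨a, h, hs h, rfl⟩⟩
  · intro ω _
    funext a
    by_cases h : ω a = true
    · simp [h]
    · simp [h]
  · intro s hs
    rw [Finset.mem_powerset] at hs
    have h1 : ∏ a : {a // a ∈ edgeFinset' G}, bernWeight p (decide (a.1 ∈ s))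
        = p ^ s.card * (1 - p) ^ ((edgeFinset' G).card - s.card) := by
      rw [Finset.univ_eq_attach,
        Finset.prod_attach (edgeFinset' G) (fun a => bernWeight p (decide (a ∈ s)))]
      unfold bernWeight
      simp only [decide_eq_true_eq]
      rw [Finset.prod_ite, Finset.prod_const, Finset.prod_const, Finset.filter_mem_eq_inter,
        Finset.inter_eq_right.2 hs, Finset.filter_notMem_eq_sdiff, Finset.card_sdiff_of_subset hs]
    have h2 : {a | ∃ h : a ∈ edgeFinset' G,
        (fun a : {a // a ∈ edgeFinset' G} => decide (a.1 ∈ s)) ⟨a, h⟩ = true} = (↑s : Set _) := by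
      ext a
      simp only [decide_eq_true_eq, exists_prop, Set.mem_ofPred_eq, Finset.mem_coe]
      exact ⟨fun h => h.2, fun h => ⟨hs h, h⟩⟩
    dsimp only
    rw [h1, h2, ind]

namespace Cover

variable {d : ℕ} {Q I : Type} [Group Q] (C : Cover d Q I) {W : Type} (e : W ≃ I × Q)
  [Fintype W] [DecidableEq W]

lemma percProb_graph [Fintype I] [Fintype Q] (hs : Function.Injective C.s) (p : ℝ)
    (P : SimpleGraph W → Prop) :
    percProb (C.graph e) p P
      = Pr p (fun ω : (I × Q) × Fin d → Bool => P (C.openGraph e ω)) := by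
  have hex : ∀ a : {a // a ∈ edgeFinset' (C.graph e)}, ∃ v k,
      a.1 = s(e.symm v, e.symm (C.move k v)) := by
    rintro ⟨a, ha⟩
    induction a using Sym2.ind with
    | _ v w =>
      simp only [edgeFinset', Finset.mem_filter, Finset.mem_univ, true_and,
        SimpleGraph.mem_edgeSet] at ha
      obtain ⟨k, hk⟩ := ha
      exact ⟨e v, k, by simp [← hk]⟩
  choose v k hvk using hex
  have hinj : Function.Injective fun a => C.lab (k a) (v a) := by
    intro a b hab
    have := congrArg (C.edgeOf e) hab
    simp only [edgeOf_lab] at this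
    exact Subtype.ext ((hvk a).trans (this.trans (hvk b).symm))
  rw [percProb_eq_Pr]
  unfold Pr
  rw [← Ex_comp_injective hinj]
  congr 1
  funext ω
  refine congrArg (fun H => ind (P H)) ?_
  ext x y
  simp only [SimpleGraph.fromEdgeSet_adj, Set.mem_ofPred_eq, Function.comp]
  constructor
  · rintro ⟨⟨h, hω⟩, -⟩
    have h' := h
    simp only [edgeFinset', Finset.mem_filter, Finset.mem_univ, true_and,
        SimpleGraph.mem_edgeSet] at h'
    obtain ⟨k', hk'⟩ := h'
    refine ⟨k', hk', ?_⟩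
    rw [← hω]
    congr 1
    apply C.lab_eq_of_edge_eq e hs
    rw [← hvk, ← hk']
    simp
  · rintro ⟨k', hk', hω⟩
    have hadj : (C.graph e).Adj x y := ⟨k', hk'⟩
    have h : s(x, y) ∈ edgeFinset' (C.graph e) := by
      simp only [edgeFinset', Finset.mem_filter, Finset.mem_univ, true_and,
        SimpleGraph.mem_edgeSet]
      exact hadj
    refine ⟨⟨h, ?_⟩, hadj.ne⟩
    rw [← hω]
    congr 1
    apply C.lab_eq_of_edge_eq e hs
    rw [← hvk, ← hk']
    simp

end Cover

namespace Cover

/-! ### Girth of covers -/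

variable {d : ℕ} {Q I : Type} [Group Q] (C : Cover d Q I) {W : Type} (e : W ≃ I × Q)

lemma exists_word_of_isTrail {v w : W} (q : (C.graph e).Walk v w) (hq : q.IsTrail) :
    ∃ l : List (Fin d), l.length = q.length ∧ l.IsChain (· ≠ ·) ∧
      (e w).2 = (e v).2 * (l.map C.s).prod ∧
      ∀ k ∈ l.head?, s(v, e.symm (C.move k (e v))) ∈ q.edges := by
  induction q with
  | nil => exact ⟨[], by simp⟩
  | @cons v u w h q ih =>
    rw [SimpleGraph.Walk.isTrail_cons] at hq
    obtain ⟨l, hl, hc, hp, hh⟩ := ih hq.1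
    obtain ⟨k, hk⟩ := id h
    refine ⟨k :: l, by simp [hl], ?_, ?_, ?_⟩
    · rw [List.isChain_cons]
      refine ⟨?_, hc⟩
      rintro k' hk' rfl
      have := hh k hk'
      rw [hk, C.move_move, Equiv.symm_apply_apply, Sym2.eq_swap] at this
      exact hq.2 this
    · rw [hp, hk, C.move_snd, List.map_cons, List.prod_cons, mul_assoc]
    · intro k' hk'
      simp only [List.head?_cons, Option.mem_def, Option.some.injEq] at hk'
      subst hk'
      rw [← hk]
      simp

lemma exists_nonbacktracking_walk (hs : Function.Injective C.s) {k₀ k₁ : Fin d} (h01 : k₀ ≠ k₁)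
    (n : ℕ) : ∀ (v : W) (b : Bool), ∃ (w : W) (q : (C.graph e).Walk v w), q.length = n ∧
      q.edges.IsChain (· ≠ ·) ∧
      ∀ a ∈ q.edges.head?, a = s(v, e.symm (C.move (if b then k₀ else k₁) (e v))) := by
  induction n with
  | zero => exact fun v b => ⟨v, .nil, by simp⟩
  | succ n ih =>
    intro v b
    set k := if b then k₀ else k₁ with hk
    obtain ⟨w, q, hl, hc, hh⟩ := ih (e.symm (C.move k (e v))) (!b)
    have hadj : (C.graph e).Adj v (e.symm (C.move k (e v))) := ⟨k, by simp⟩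
    refine ⟨w, .cons hadj q, by simp [hl], ?_, ?_⟩
    · rw [SimpleGraph.Walk.edges_cons, List.isChain_cons]
      refine ⟨?_, hc⟩
      intro a ha hva
      have h1 := hva.trans (hh a ha)
      have h2 : s(e.symm (e v), e.symm (C.move k (e v)))
          = s(e.symm (C.move k (e v)),
            e.symm (C.move (if !b then k₀ else k₁) (C.move k (e v)))) := by
        simpa using h1
      have h3 := congrArg Prod.snd (C.lab_eq_of_edge_eq e hs h2)
      simp only [lab] at h3
      rw [hk] at h3
      cases b
      · exact h01 (by simpa using h3.symm)
      · exact h01 (by simpa using h3)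
    · simp

lemma not_isAcyclic [Finite W] [Nonempty W] (hs : Function.Injective C.s) (hd : 2 ≤ d) :
    ¬ (C.graph e).IsAcyclic := by
  intro h
  have := Fintype.ofFinite W
  have h01 : (⟨0, by omega⟩ : Fin d) ≠ ⟨1, by omega⟩ := by simp
  obtain ⟨w, q, hl, hc, -⟩ := C.exists_nonbacktracking_walk e hs h01 (Fintype.card W)
    (Classical.arbitrary W) true
  have := ((h.isPath_iff_isChain q).2 hc).length_lt
  omega

lemma le_girth [Finite W] [Nonempty W] {g : ℕ} (hg : 1 ≤ g) (hs : FreeUpTo C.s g) (hd : 2 ≤ d) :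
    g ≤ (C.graph e).girth := by
  obtain ⟨a, q, hq, hl⟩ := SimpleGraph.exists_girth_eq_length.2
    (C.not_isAcyclic e (hs.injective hg) hd)
  by_contra! hlt
  obtain ⟨l, hll, hc, hp, -⟩ := C.exists_word_of_isTrail e q hq.isTrail
  have h1 : (l.map C.s).prod = 1 := by simpa using hp.symm
  have h2 := hs l [] hc (by omega) (by simp) (by simp) (by simpa using h1)
  have h3 := hq.three_le_length
  rw [h2] at hll
  simp at hll
  omega

end Cover

/-! ### Edges outside a spanning tree of a Cayley graph -/

section Base

variable {d : ℕ} {Q : Type} [Group Q] {s : Fin d → Q}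

lemma exists_orientation [Fintype Q] (hs : ∀ k, s k * s k = 1) (hs1 : ∀ k, s k ≠ 1) :
    ∃ o : Q → Fin d → Bool, ∀ x k, o (x * s k) k = !o x k := by
  let f := Fintype.equivFin Q
  refine ⟨fun x k => decide (f x < f (x * s k)), fun x k => ?_⟩
  dsimp only
  have hne : f x ≠ f (x * s k) := fun h => hs1 k (by simpa using f.injective h)
  rw [mul_assoc, hs, mul_one]
  by_cases h : f x < f (x * s k)
  · simp [h, h.le]
  · simp [h, lt_of_le_of_ne (not_lt.1 h) hne.symm]

/-- The Cayley graph of `Q` with respect to the involutions `s k`. -/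
def cayley (hs : ∀ k, s k * s k = 1) (hs1 : ∀ k, s k ≠ 1) : SimpleGraph Q where
  Adj x y := ∃ k, y = x * s k
  symm := ⟨by
    rintro x y ⟨k, rfl⟩
    exact ⟨k, by rw [mul_assoc, hs, mul_one]⟩⟩
  loopless := ⟨by
    rintro x ⟨k, hk⟩
    exact hs1 k (by simpa using hk.symm)⟩

lemma cayley_connected (hs : ∀ k, s k * s k = 1) (hs1 : ∀ k, s k ≠ 1)
    (ht : Subgroup.closure (Set.range s) = ⊤) : (cayley hs hs1).Connected := by
  have key : ∀ (w : List (Fin d)) (x : Q), (cayley hs hs1).Reachable x (x * (w.map s).prod) := by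
    intro w
    induction w with
    | nil => intro x; simp
    | cons k w ih =>
      intro x
      have h1 : (cayley hs hs1).Adj x (x * s k) := ⟨k, rfl⟩
      have h2 := h1.reachable.trans (ih (x * s k))
      simpa [mul_assoc] using h2
  have : Nonempty Q := ⟨1⟩
  refine ⟨fun x y => ?_⟩
  obtain ⟨w, hw⟩ := exists_word hs ht (x⁻¹ * y)
  have := key w x
  rwa [hw, mul_inv_cancel_left] at this

variable [Fintype Q]

lemma two_mul_card_oriented (hs : ∀ k, s k * s k = 1) {o : Q → Fin d → Bool}
    (ho : ∀ x k, o (x * s k) k = !o x k) :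
    2 * (Finset.univ.filter fun q : Q × Fin d => o q.1 q.2 = true).card = Fintype.card Q * d := by
  have h1 : (Finset.univ.filter fun q : Q × Fin d => o q.1 q.2 = true).card
      = (Finset.univ.filter fun q : Q × Fin d => ¬ o q.1 q.2 = true).card := by
    refine Finset.card_bij' (fun q _ => (q.1 * s q.2, q.2)) (fun q _ => (q.1 * s q.2, q.2))
      ?_ ?_ ?_ ?_
    · intro q hq
      simp only [Finset.mem_filter, Finset.mem_univ, true_and] at hq ⊢
      simp [ho, hq]
    · intro q hq
      simp only [Finset.mem_filter, Finset.mem_univ, true_and] at hq ⊢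
      simp [ho, hq]
    · intro q _
      simp [mul_assoc, hs]
    · intro q _
      simp [mul_assoc, hs]
  have h2 := Finset.card_filter_add_card_filter_not (s := (Finset.univ : Finset (Q × Fin d)))
    (fun q => o q.1 q.2 = true)
  rw [← h1, Finset.card_univ, Fintype.card_prod, Fintype.card_fin] at h2
  omega

lemma exists_mobile_edges (hd : 3 ≤ d) (hs : ∀ k, s k * s k = 1) (hs1 : ∀ k, s k ≠ 1)
    (hinj : Function.Injective s) (ht : Subgroup.closure (Set.range s) = ⊤)
    {o : Q → Fin d → Bool} (ho : ∀ x k, o (x * s k) k = !o x k)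
    (Ty : Type) [Fintype Ty] (hTy : 2 * Fintype.card Ty ≤ Fintype.card Q) :
    ∃ mob : Ty → Q × Fin d, Function.Injective mob ∧
      (∀ τ, o (mob τ).1 (mob τ).2 = true) ∧
      ∀ x y, Relation.ReflTransGen
        (fun x y => ∃ k, y = x * s k ∧ (x, k) ∉ Set.range mob ∧ (y, k) ∉ Set.range mob) x y := by
  obtain ⟨T, hTle, hT⟩ := (cayley_connected hs hs1 ht).exists_isTree_le
  have hcard := hT.card_edgeFinset
  set P := Finset.univ.filter fun q : Q × Fin d => o q.1 q.2 = true with hP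
  have hP2 : 2 * P.card = Fintype.card Q * d := two_mul_card_oriented hs ho
  have htree : (P.filter fun q => T.Adj q.1 (q.1 * s q.2)).card ≤ T.edgeFinset.card := by
    refine Finset.card_le_card_of_injOn (fun q => s(q.1, q.1 * s q.2)) ?_ ?_
    · intro q hq
      have := (Finset.mem_filter.1 (Finset.mem_coe.1 hq)).2
      simpa using this
    · rintro ⟨x, k⟩ hq ⟨y, l⟩ hq' h
      have h1 := (Finset.mem_filter.1 (Finset.mem_filter.1 (Finset.mem_coe.1 hq)).1).2
      have h2 := (Finset.mem_filter.1 (Finset.mem_filter.1 (Finset.mem_coe.1 hq')).1).2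
      simp only [Sym2.eq_iff] at h h1 h2
      rcases h with ⟨rfl, h⟩ | ⟨h3, h4⟩
      · rw [hinj (mul_left_cancel h)]
      · have h5 : s k = s l := by
          have : y * s l * s k = y := by rw [← h3, h4]
          rw [mul_assoc] at this
          have h6 : s l * s k = 1 := by simpa using this
          have h7 := hs l
          exact mul_left_cancel (h6.trans h7.symm)
        have h6 := hinj h5
        subst h6
        have h7 := ho x k
        rw [h4] at h7
        rw [h1, h2] at h7
        simp at h7
  have hsplit := Finset.card_filter_add_card_filter_not (s := P) (fun q => T.Adj q.1 (q.1 * s q.2))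
  set F := P.filter fun q => ¬ T.Adj q.1 (q.1 * s q.2) with hF
  have hle : Fintype.card Ty ≤ Fintype.card F := by
    rw [Fintype.card_coe]
    have : Fintype.card Q * 3 ≤ Fintype.card Q * d := Nat.mul_le_mul_left _ hd
    omega
  obtain ⟨f⟩ := Function.Embedding.nonempty_of_card_le hle
  have hf : ∀ τ, o (f τ).1.1 (f τ).1.2 = true ∧ ¬ T.Adj (f τ).1.1 ((f τ).1.1 * s (f τ).1.2) := by
    intro τ
    have h1 := Finset.mem_filter.1 (f τ).2
    exact ⟨(Finset.mem_filter.1 h1.1).2, h1.2⟩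
  refine ⟨fun τ => (f τ).1, fun a b h => f.injective (Subtype.ext h), fun τ => (hf τ).1, ?_⟩
  intro x y
  have hreach := hT.connected.preconnected x y
  rw [SimpleGraph.reachable_iff_reflTransGen] at hreach
  refine Relation.ReflTransGen.mono ?_ _ _ hreach
  intro a b hab
  obtain ⟨k, rfl⟩ := hTle hab
  refine ⟨k, rfl, ?_, ?_⟩
  · rintro ⟨τ, hτ⟩
    apply (hf τ).2
    simpa [hτ] using hab
  · rintro ⟨τ, hτ⟩
    apply (hf τ).2
    simpa [hτ, mul_assoc, hs] using hab.symm

end Base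

/-! ### The construction -/

/-- The types of edges of the base graph whose lifts carry the tree structure: `cEdge` joins cores
to roots, `rEdge` joins roots to roots, `linkEdge` joins levels of the trees, `exEdge` joins
leaves. -/
abbrev EdgeType : Type := Bool ⊕ ((Bool × Fin 2) ⊕ Fin 30)

/-- The type of edges joining cores to roots. -/
def cEdge : EdgeType := .inl false
/-- The type of edges joining roots to roots. -/
def rEdge : EdgeType := .inl true
/-- The types of edges joining consecutive levels of the trees. -/
def linkEdge (b : Bool) (q : Fin 2) : EdgeType := .inr (.inl (b, q))
/-- The types of edges joining leaves to leaves. -/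
def exEdge (j : Fin 30) : EdgeType := .inr (.inr j)

/-- A base Cayley graph with marked edges outside a spanning tree. -/
structure Base (d : ℕ) (Q : Type) [Group Q] where
  /-- The generators. -/
  s : Fin d → Q
  s_mul : ∀ k, s k * s k = 1
  /-- An orientation. -/
  o : Q → Fin d → Bool
  o_mul : ∀ x k, o (x * s k) k = !o x k
  /-- The marked edges. -/
  mob : EdgeType → Q × Fin d
  mob_injective : Function.Injective mob
  mob_pos : ∀ τ, o (mob τ).1 (mob τ).2 = true
  tree : ∀ x y, Relation.ReflTransGen
    (fun x y => ∃ k, y = x * s k ∧ (x, k) ∉ Set.range mob ∧ (y, k) ∉ Set.range mob) x y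

/-- Addresses in a tree in which the vertices at levels divisible by `L` have two children and
the other ones have one. -/
def ValidAddr (L : ℕ) : List Bool → Prop
  | [] => True
  | b :: w => ValidAddr L w ∧ (b = true → L ∣ w.length)

/-- Addresses of length at most `h`. -/
abbrev Addr (L h : ℕ) : Type := {w : List Bool // ValidAddr L w ∧ w.length ≤ h}

instance (L h : ℕ) : Finite (Addr L h) :=
  ((List.finite_length_le Bool h).subset fun _ hw => hw.2).to_subtype

instance (L h : ℕ) : Fintype (Addr L h) := Fintype.ofFinite _

/-- The root address. -/
def rootAddr (L h : ℕ) : Addr L h := ⟨[], trivial, Nat.zero_le _⟩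

/-- Tree nodes; each element of `Bool × J` is the root of one tree. -/
abbrev TreeNode (J : Type) (L h : ℕ) : Type := (Bool × J) × Addr L h

/-- The leaves of the trees. -/
abbrev Leaf (J : Type) (L h : ℕ) : Type := {n : TreeNode J L h // n.2.1.length = h}

/-- The fibre of the construction. -/
abbrev Idx (J : Type) (L h : ℕ) : Type := (Bool × J) ⊕ TreeNode J L h

/-- Exchange of `w` and `b :: w` when `w` has the parity `q`. -/
def linkFun (L h : ℕ) (b : Bool) (q : Fin 2) (w : List Bool) : List Bool :=
  if w.length % 2 = q.val ∧ w.length < h ∧ (b = true → L ∣ w.length) then b :: w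
  else if w.head? = some b ∧ w.tail.length % 2 = q.val then w.tail else w

lemma linkFun_mem {L h : ℕ} (b : Bool) (q : Fin 2) {w : List Bool}
    (hw : ValidAddr L w ∧ w.length ≤ h) :
    ValidAddr L (linkFun L h b q w) ∧ (linkFun L h b q w).length ≤ h := by
  unfold linkFun
  split_ifs with h1 h2
  · exact ⟨⟨hw.1, h1.2.2⟩, h1.2.1⟩
  · cases w with
    | nil => exact hw
    | cons a w => exact ⟨hw.1.1, by have := hw.2; simp at this ⊢; omega⟩
  · exact hw

lemma linkFun_of_cond {L h : ℕ} {b : Bool} {q : Fin 2} {w : List Bool}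
    (hw : w.length % 2 = q.val ∧ w.length < h ∧ (b = true → L ∣ w.length)) :
    linkFun L h b q w = b :: w := if_pos hw

lemma linkFun_linkFun {L h : ℕ} (b : Bool) (q : Fin 2) {w : List Bool}
    (hw : ValidAddr L w ∧ w.length ≤ h) :
    linkFun L h b q (linkFun L h b q w) = w := by
  by_cases h1 : w.length % 2 = q.val ∧ w.length < h ∧ (b = true → L ∣ w.length)
  · rw [linkFun_of_cond h1]
    unfold linkFun
    rw [if_neg, if_pos]
    · simp
    · simpa using h1.1
    · rintro ⟨h2, -⟩
      simp only [List.length_cons] at h2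
      omega
  · have h2 : linkFun L h b q w
        = if w.head? = some b ∧ w.tail.length % 2 = q.val then w.tail else w := if_neg h1
    rw [h2]
    split_ifs with h3
    · cases w with
      | nil => simp at h3
      | cons a w =>
        simp only [List.head?_cons, Option.some.injEq, List.tail_cons] at h3 ⊢
        obtain ⟨rfl, h3⟩ := h3
        apply linkFun_of_cond
        refine ⟨h3, ?_, hw.1.2⟩
        have := hw.2
        simp at this
        omega
    · unfold linkFun
      rw [if_neg h1, if_neg h3]

/-- `linkFun` as a permutation of the addresses. -/
def linkPerm (L h : ℕ) (b : Bool) (q : Fin 2) : Equiv.Perm (Addr L h) :=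
  Function.Involutive.toPerm (fun w => ⟨linkFun L h b q w.1, linkFun_mem b q w.2⟩)
    (fun w => Subtype.ext (linkFun_linkFun b q w.2))

/-- The data determining the lifts of the marked edges. -/
structure Fibre (d : ℕ) (J : Type) (L h : ℕ) where
  /-- The voltages of the cores. -/
  κ : Fin d → Equiv.Perm J
  κ_inv : ∀ k j, κ k (κ k j) = j
  /-- The matching of the roots. -/
  ρ : Equiv.Perm J
  /-- The expanding permutations of the leaves. -/
  f : Fin 30 → Equiv.Perm (Leaf J L h)

variable {d : ℕ} {Q J : Type} [Group Q] {L h : ℕ}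

/-- The exchange of cores and roots. -/
def coreSwap (J : Type) (L h : ℕ) : Equiv.Perm (Idx J L h) :=
  Function.Involutive.toPerm
    (fun i => match i with
      | .inl i => .inr (i, rootAddr L h)
      | .inr n => if n.2 = rootAddr L h then .inl n.1 else .inr n)
    (fun i => by
      match i with
      | .inl i => simp
      | .inr n =>
        by_cases hn : n.2 = rootAddr L h
        · simp only [hn, if_true]; rw [← hn]
        · simp [hn])

namespace Fibre

variable (F : Fibre d J L h)

/-- The permutation of the cores. -/
def corePerm (k : Fin d) : Equiv.Perm (Bool × J) := (Equiv.refl Bool).prodCongr (F.κ k)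

/-- The permutation of the tree nodes along a marked edge. -/
def nodePerm : EdgeType → Equiv.Perm (TreeNode J L h)
  | .inl false => 1
  | .inl true => Equiv.prodCongrLeft fun w =>
      if w = rootAddr L h then (Equiv.refl Bool).prodCongr F.ρ else 1
  | .inr (.inl (b, q)) => (Equiv.refl _).prodCongr (linkPerm L h b q)
  | .inr (.inr j) => Equiv.Perm.ofSubtype (F.f j)

/-- The permutation of the fibre along an edge of given type. -/
def act (k : Fin d) (τ : Option EdgeType) : Equiv.Perm (Idx J L h) :=
  match τ with
  | none => Equiv.Perm.sumCongr (F.corePerm k) 1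
  | some τ =>
    if τ = cEdge then coreSwap J L h else Equiv.Perm.sumCongr (F.corePerm k) (F.nodePerm τ)

end Fibre

namespace Base

variable (B : Base d Q) (F : Fibre d J L h)

/-- The type of an edge. -/
def typ (x : Q) (k : Fin d) : Option EdgeType :=
  if h : ∃ τ, B.mob τ = (x, k) then some h.choose else none

lemma typ_mob (τ : EdgeType) : B.typ (B.mob τ).1 (B.mob τ).2 = some τ := by
  have h : ∃ τ', B.mob τ' = ((B.mob τ).1, (B.mob τ).2) := ⟨τ, rfl⟩
  unfold typ
  rw [dif_pos h, B.mob_injective h.choose_spec]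

lemma typ_eq_some {x : Q} {k : Fin d} {τ : EdgeType} (h : B.typ x k = some τ) :
    B.mob τ = (x, k) := by
  unfold typ at h
  split_ifs at h with h1
  have := h1.choose_spec
  rwa [Option.some.inj h] at this

lemma typ_eq_none {x : Q} {k : Fin d} (h : (x, k) ∉ Set.range B.mob) : B.typ x k = none :=
  dif_neg h

/-- The cover. -/
def cover : Cover d Q (Idx J L h) where
  s := B.s
  s_mul := B.s_mul
  o := B.o
  o_mul := B.o_mul
  π x k := F.act k (B.typ x k)

/-- The initial vertex of a marked edge. -/
abbrev src (τ : EdgeType) : Q := (B.mob τ).1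
/-- The colour of a marked edge. -/
abbrev col (τ : EdgeType) : Fin d := (B.mob τ).2
/-- The final vertex of a marked edge. -/
abbrev tgt (τ : EdgeType) : Q := B.src τ * B.s (B.col τ)

lemma move_of_pos {x : Q} {k : Fin d} (hx : B.o x k = true) (i : Idx J L h) :
    (B.cover F).move k (i, x) = (F.act k (B.typ x k) i, x * B.s k) := by
  simp [Cover.move, cover, hx]

lemma move_of_neg {x : Q} {k : Fin d} (hx : ¬ B.o x k = true) (i : Idx J L h) :
    (B.cover F).move k (i, x) = ((F.act k (B.typ (x * B.s k) k))⁻¹ i, x * B.s k) := by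
  simp [Cover.move, cover, hx]

lemma lab_of_pos {x : Q} {k : Fin d} (hx : B.o x k = true) (i : Idx J L h) :
    (B.cover F).lab k (i, x) = ((i, x), k) := by
  simp [Cover.lab, cover, hx]

lemma corePerm_corePerm (k : Fin d) (i : Bool × J) : F.corePerm k (F.corePerm k i) = i := by
  obtain ⟨σ, j⟩ := i
  simp [Fibre.corePerm, F.κ_inv]

lemma act_inl_of_ne {k : Fin d} {τ : Option EdgeType} (hτ : τ ≠ some cEdge) (i : Bool × J) :
    F.act k τ (.inl i) = .inl (F.corePerm k i) := by
  cases τ with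
  | none => rfl
  | some τ =>
    have : τ ≠ cEdge := fun h => hτ (by rw [h])
    simp [Fibre.act, this]

lemma move_core {x : Q} {k : Fin d} (hx : ¬ IsCut B.s (B.src cEdge) (B.col cEdge) x k)
    (i : Bool × J) :
    (B.cover F).move k (.inl i, x) = (.inl (F.corePerm k i), x * B.s k) := by
  by_cases ho : B.o x k = true
  · rw [move_of_pos B F ho, act_inl_of_ne]
    intro h
    have := B.typ_eq_some h
    exact hx ⟨by simp [col, this], Or.inl (by simp [src, this])⟩
  · rw [move_of_neg B F ho]
    congr 1
    rw [Equiv.Perm.inv_eq_iff_eq, act_inl_of_ne, corePerm_corePerm]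
    · intro h
      have := B.typ_eq_some h
      refine hx ⟨by simp [col, this], Or.inr ?_⟩
      simp [src, this, col, mul_assoc, B.s_mul]

lemma move_cEdge (i : Bool × J) :
    (B.cover F).move (B.col cEdge) (.inl i, B.src cEdge)
      = (.inr (i, rootAddr L h), B.tgt cEdge) := by
  rw [move_of_pos B F (B.mob_pos _), typ_mob]
  simp only [Fibre.act, if_true]
  rfl

lemma move_none {x : Q} {k : Fin d} (h1 : (x, k) ∉ Set.range B.mob)
    (h2 : (x * B.s k, k) ∉ Set.range B.mob) (n : TreeNode J L h) :
    (B.cover F).move k (.inr n, x) = (.inr n, x * B.s k) := by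
  by_cases ho : B.o x k = true
  · rw [move_of_pos B F ho, B.typ_eq_none h1]
    rfl
  · rw [move_of_neg B F ho, B.typ_eq_none h2]
    rfl

lemma move_mob {τ : EdgeType} (hτ : τ ≠ cEdge) (n : TreeNode J L h) :
    (B.cover F).move (B.col τ) (.inr n, B.src τ) = (.inr (F.nodePerm τ n), B.tgt τ) := by
  rw [move_of_pos B F (B.mob_pos _), typ_mob]
  simp [Fibre.act, hτ]

lemma nodePerm_link (b : Bool) (q : Fin 2) (i : Bool × J) (w : Addr L h) :
    F.nodePerm (linkEdge b q) (i, w) = (i, linkPerm L h b q w) := rfl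

lemma nodePerm_root (i : Bool × J) :
    F.nodePerm rEdge (i, rootAddr L h) = ((i.1, F.ρ i.2), rootAddr L h) := by
  obtain ⟨σ, j⟩ := i
  simp [Fibre.nodePerm, rEdge, Equiv.prodCongrLeft]

lemma nodePerm_root_of_ne {n : TreeNode J L h} (hn : n.2 ≠ rootAddr L h) :
    F.nodePerm rEdge n = n := by
  simp [Fibre.nodePerm, rEdge, Equiv.prodCongrLeft, hn]

lemma nodePerm_ex (j : Fin 30) (l : Leaf J L h) :
    F.nodePerm (exEdge j) l.1 = (F.f j l).1 := by
  simp [Fibre.nodePerm, exEdge]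

lemma nodePerm_ex_of_ne (j : Fin 30) {n : TreeNode J L h} (hn : n.2.1.length ≠ h) :
    F.nodePerm (exEdge j) n = n :=
  Equiv.Perm.ofSubtype_apply_of_not_mem _ hn

end Base

/-! ### Expansion of the construction -/

lemma sum_levels_le {L h : ℕ} (hL : 1 ≤ L) (a c : ℕ → ℕ) (h1 : ∀ l < h, a l ≤ a (l + 1) + c l)
    (h2 : ∀ l < h, L ∣ l → 2 * a l ≤ a (l + 1) + 2 * c l) :
    ∑ j ∈ Finset.range (h + 1), a j ≤ 2 * L * a h + 2 * L * ∑ j ∈ Finset.range h, c j := by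
  have key : ∀ l ≤ h, ∑ j ∈ Finset.range (l + 1), a j
      ≤ (L + if l % L = 0 then L else l % L) * a l + 2 * L * ∑ j ∈ Finset.range l, c j := by
    intro l
    induction l with
    | zero => intro _; simp; nlinarith [Nat.zero_le (a 0)]
    | succ l ih =>
      intro hl
      have ih' := ih (by omega)
      rw [Finset.sum_range_succ, Finset.sum_range_succ (f := c)]
      by_cases hd : l % L = 0
      · have h3 := h2 l (by omega) (Nat.dvd_of_mod_eq_zero hd)
        have h4 : L + 1 ≤ L + if (l + 1) % L = 0 then L else (l + 1) % L := by
          split_ifs with h5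
          · omega
          · have := Nat.pos_of_ne_zero h5; omega
        have h5 := Nat.mul_le_mul_right (a (l + 1)) h4
        rw [if_pos hd] at ih'
        nlinarith [Nat.mul_le_mul_left L h3]
      · have h3 := h1 l (by omega)
        have hlt := Nat.mod_lt l (show 0 < L by omega)
        have h4 : l % L + 1 ≤ if (l + 1) % L = 0 then L else (l + 1) % L := by
          split_ifs with h5
          · omega
          · rw [← Nat.mod_add_mod] at h5
            rw [← Nat.mod_add_mod l]
            by_cases h6 : l % L + 1 = L
            · rw [h6] at h5; simp at h5
            · rw [Nat.mod_eq_of_lt (a := l % L + 1) (by omega)]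
        have h5 := Nat.mul_le_mul_right (a (l + 1)) h4
        rw [if_neg hd] at ih'
        have h6 : (L + l % L) * c l ≤ 2 * L * c l := Nat.mul_le_mul_right _ (by omega)
        nlinarith [Nat.mul_le_mul_left (L + l % L) h3]
  have := key h le_rfl
  refine this.trans ?_
  have h4 : (L + if h % L = 0 then L else h % L) ≤ 2 * L := by
    have hlt := Nat.mod_lt h (show 0 < L by omega)
    split_ifs <;> omega
  exact Nat.add_le_add_right (Nat.mul_le_mul_right _ h4) _

section Expansion

variable {d : ℕ} {Q : Type} [Group Q] [Fintype Q] (B : Base d Q)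
  {J : Type} [Fintype J] {L h : ℕ} (F : Fibre d J L h) (S : Finset (Idx J L h × Q))

/-- The half-edges with exactly one end in `S`. -/
def crossing : Finset ((Idx J L h × Q) × Fin d) :=
  Finset.univ.filter fun q => ¬ (q.1 ∈ S ↔ (B.cover F).move q.2 q.1 ∈ S)

/-- The nodes whose copies are incident to an edge crossing the boundary of `S`. -/
def mixedNodes : Finset (TreeNode J L h) :=
  Finset.univ.filter fun n => ∃ x k, ((Sum.inr n, x), k) ∈ crossing B F S

lemma mem_iff_of_not_mem_crossing {v : Idx J L h × Q} {k : Fin d} (hv : (v, k) ∉ crossing B F S) :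
    v ∈ S ↔ (B.cover F).move k v ∈ S := by
  by_contra hne
  exact hv (Finset.mem_filter.2 ⟨Finset.mem_univ _, hne⟩)

lemma crossing_compl : crossing B F Sᶜ = crossing B F S := by
  ext q
  simp only [crossing, Finset.mem_filter, Finset.mem_univ, true_and, Finset.mem_compl]
  tauto

lemma card_mixedNodes_le : (mixedNodes B F S).card ≤ (crossing B F S).card := by
  rw [← Finset.card_map ⟨_, Sum.inr_injective (α := Bool × J)⟩]
  refine (Finset.card_le_card (t := (crossing B F S).image fun q => q.1.1) ?_).trans
    Finset.card_image_le
  intro i hi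
  obtain ⟨n, hn, rfl⟩ := Finset.mem_map.1 hi
  obtain ⟨x, k, hq⟩ := (Finset.mem_filter.1 hn).2
  exact Finset.mem_image.2 ⟨_, hq, rfl⟩

lemma card_crossing_le_two_mul : (crossing B F S).card
    ≤ 2 * (Finset.univ.filter fun q : (Idx J L h × Q) × Fin d =>
        q.1 ∈ S ∧ (B.cover F).move q.2 q.1 ∉ S).card := by
  set X := Finset.univ.filter fun q : (Idx J L h × Q) × Fin d =>
        q.1 ∈ S ∧ (B.cover F).move q.2 q.1 ∉ S with hX
  have hsub : crossing B F S ⊆ X ∪ X.image fun q => ((B.cover F).move q.2 q.1, q.2) := by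
    rintro ⟨v, k⟩ hq
    have hq' := (Finset.mem_filter.1 hq).2
    rw [Finset.mem_union, Finset.mem_image]
    by_cases hv : v ∈ S
    · left
      refine Finset.mem_filter.2 ⟨Finset.mem_univ _, hv, ?_⟩
      tauto
    · right
      refine ⟨((B.cover F).move k v, k), Finset.mem_filter.2 ⟨Finset.mem_univ _, ?_, ?_⟩, ?_⟩
      · tauto
      · simpa [Cover.move_move] using hv
      · simp [Cover.move_move]
  refine (Finset.card_le_card hsub).trans ((Finset.card_union_le _ _).trans ?_)
  have := Finset.card_image_le (s := X) (f := fun q => ((B.cover F).move q.2 q.1, q.2))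
  omega

variable {S}

lemma mem_iff_of_not_mixed {n : TreeNode J L h} (hn : n ∉ mixedNodes B F S) (x : Q) (k : Fin d) :
    ((.inr n, x) : Idx J L h × Q) ∈ S ↔ (B.cover F).move k (.inr n, x) ∈ S := by
  refine mem_iff_of_not_mem_crossing B F S fun hq => hn ?_
  exact Finset.mem_filter.2 ⟨Finset.mem_univ _, x, k, hq⟩

lemma mem_iff_of_not_mixed_of_base {n : TreeNode J L h} (hn : n ∉ mixedNodes B F S) (x y : Q) :
    ((.inr n, x) : Idx J L h × Q) ∈ S ↔ ((.inr n, y) : Idx J L h × Q) ∈ S := by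
  have := B.tree x y
  induction this with
  | refl => rfl
  | tail _ hyz ih =>
    obtain ⟨k, rfl, h1, h2⟩ := hyz
    refine ih.trans ?_
    rw [mem_iff_of_not_mixed B F hn _ k, B.move_none F h1 h2]

lemma mem_iff_nodePerm {n : TreeNode J L h} {τ : EdgeType} (hτ : τ ≠ cEdge)
    (hn : n ∉ mixedNodes B F S) (hn' : F.nodePerm τ n ∉ mixedNodes B F S) :
    ((.inr n, 1) : Idx J L h × Q) ∈ S ↔ ((.inr (F.nodePerm τ n), 1) : Idx J L h × Q) ∈ S := by
  rw [mem_iff_of_not_mixed_of_base B F hn 1 (B.src τ), mem_iff_of_not_mixed B F hn _ (B.col τ),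
    B.move_mob F hτ, mem_iff_of_not_mixed_of_base B F hn' _ 1]

variable (S) in
/-- The nodes whose base copy lies in `S`. -/
def nodesIn : Finset (TreeNode J L h) :=
  Finset.univ.filter fun n => ((.inr n, 1) : Idx J L h × Q) ∈ S

/-- The elements of `T` at level `l`. -/
def level (T : Finset (TreeNode J L h)) (l : ℕ) : Finset (TreeNode J L h) :=
  T.filter fun n => n.2.1.length = l

omit [Fintype J] in
lemma sum_card_level (T : Finset (TreeNode J L h)) :
    ∑ l ∈ Finset.range (h + 1), (level T l).card = T.card := by
  rw [Finset.card_eq_sum_card_fiberwise (f := fun n => n.2.1.length) (t := Finset.range (h + 1))]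
  · rfl
  · intro n _
    have := n.2.2.2
    simp only [Finset.coe_range, Set.mem_Iio]
    omega

/-- The child of a node in direction `b`, for `b` allowed. -/
def child (b : Bool) (n : TreeNode J L h) : TreeNode J L h :=
  (n.1, linkPerm L h b ⟨n.2.1.length % 2, Nat.mod_lt _ two_pos⟩ n.2)

omit [Fintype J] in
lemma child_val {b : Bool} {n : TreeNode J L h} (hl : n.2.1.length < h)
    (hb : b = true → L ∣ n.2.1.length) : (child b n).2.1 = b :: n.2.1 :=
  linkFun_of_cond ⟨rfl, hl, hb⟩

lemma card_level_le_head {l : ℕ} (hl : l < h) (b : Bool) (hb : b = true → L ∣ l) :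
    (level (nodesIn S) l).card ≤ ((level (nodesIn S) (l + 1)).filter
        fun n => n.2.1.head? = some b).card + ((level (mixedNodes B F S) l).card
        + ((level (mixedNodes B F S) (l + 1)).filter fun n => n.2.1.head? = some b).card) := by
  set Y := (level (nodesIn S) (l + 1)).filter fun n => n.2.1.head? = some b
  set Z := (level (mixedNodes B F S) (l + 1)).filter fun n => n.2.1.head? = some b
  have hchild : ∀ n : TreeNode J L h, n.2.1.length = l → (child b n).2.1 = b :: n.2.1 :=
    fun n hn => child_val (by omega) (by rwa [hn])
  have hsub : level (nodesIn S) l \ level (mixedNodes B F S) l ⊆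
      (level (nodesIn S) l).filter fun n => child b n ∈ Y ∪ Z := by
    intro n hn
    obtain ⟨hn1, hn2⟩ := Finset.mem_sdiff.1 hn
    obtain ⟨hn3, hn4⟩ := Finset.mem_filter.1 hn1
    have hn5 : n ∉ mixedNodes B F S := fun h => hn2 (Finset.mem_filter.2 ⟨h, hn4⟩)
    refine Finset.mem_filter.2 ⟨hn1, Finset.mem_union.2 ?_⟩
    by_cases hm : child b n ∈ mixedNodes B F S
    · right
      exact Finset.mem_filter.2 ⟨Finset.mem_filter.2 ⟨hm, by rw [hchild n hn4]; simp [hn4]⟩,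
        by rw [hchild n hn4]; rfl⟩
    · left
      refine Finset.mem_filter.2 ⟨Finset.mem_filter.2 ⟨?_, by rw [hchild n hn4]; simp [hn4]⟩,
        by rw [hchild n hn4]; rfl⟩
      refine Finset.mem_filter.2 ⟨Finset.mem_univ _, ?_⟩
      exact (mem_iff_nodePerm B F (τ := linkEdge b ⟨n.2.1.length % 2, Nat.mod_lt _ two_pos⟩)
        (by simp [linkEdge, cEdge]) hn5 hm).1 (Finset.mem_filter.1 hn3).2
  have hinj : ((level (nodesIn S) l).filter fun n => child b n ∈ Y ∪ Z).card ≤ (Y ∪ Z).card := by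
    refine Finset.card_le_card_of_injOn (child b) (fun n hn => (Finset.mem_filter.1 hn).2) ?_
    intro n hn m hm hnm
    have hn' := (Finset.mem_filter.1 (Finset.mem_filter.1 (Finset.mem_coe.1 hn)).1).2
    have hm' := (Finset.mem_filter.1 (Finset.mem_filter.1 (Finset.mem_coe.1 hm)).1).2
    have h1 := congrArg (fun n => n.2.1) hnm
    have h2 := congrArg (fun n => n.1) hnm
    simp only [hchild n hn', hchild m hm', List.cons.injEq, true_and] at h1
    exact Prod.ext h2 (Subtype.ext h1)
  have h1 := Finset.card_le_card hsub
  have h2 := Finset.le_card_sdiff (level (mixedNodes B F S) l) (level (nodesIn S) l)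
  have h3 := Finset.card_union_le Y Z
  omega

omit [Fintype J] in
lemma card_filter_head_add_le (T : Finset (TreeNode J L h)) :
    (T.filter fun n => n.2.1.head? = some false).card
      + (T.filter fun n => n.2.1.head? = some true).card ≤ T.card := by
  rw [← Finset.card_union_of_disjoint]
  · exact Finset.card_le_card (Finset.union_subset (Finset.filter_subset _ _)
      (Finset.filter_subset _ _))
  · rw [Finset.disjoint_filter]
    intro n _ h1 h2
    rw [h1] at h2
    simp at h2

lemma card_nodesIn_le (hL : 1 ≤ L) : (nodesIn S).card
    ≤ 2 * L * (level (nodesIn S) h).card + 4 * L * (mixedNodes B F S).card := by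
  have h1 := sum_levels_le (h := h) hL (fun l => (level (nodesIn S) l).card)
    (fun l => (level (mixedNodes B F S) l).card + (level (mixedNodes B F S) (l + 1)).card) ?_ ?_
  · rw [sum_card_level, Finset.sum_add_distrib] at h1
    have h2 := sum_card_level (mixedNodes B F S)
    have h3 := h2
    rw [Finset.sum_range_succ] at h2
    rw [Finset.sum_range_succ'] at h3
    have h4 : ∑ l ∈ Finset.range h, (level (mixedNodes B F S) l).card
        + ∑ l ∈ Finset.range h, (level (mixedNodes B F S) (l + 1)).card
        ≤ 2 * (mixedNodes B F S).card := by omega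
    refine h1.trans (Nat.add_le_add_left ((Nat.mul_le_mul_left (2 * L) h4).trans ?_) _)
    exact le_of_eq (by ring)
  · intro l hl
    refine (card_level_le_head B F hl false (by simp)).trans ?_
    have h1 := Finset.card_filter_le (level (nodesIn S) (l + 1)) fun n => n.2.1.head? = some false
    have h2 := Finset.card_filter_le (level (mixedNodes B F S) (l + 1))
      fun n => n.2.1.head? = some false
    omega
  · intro l hl hd
    have h1 := card_level_le_head B F (S := S) hl false (by simp)
    have h2 := card_level_le_head B F (S := S) hl true (fun _ => hd)
    have h3 := card_filter_head_add_le (level (nodesIn S) (l + 1))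
    have h4 := card_filter_head_add_le (level (mixedNodes B F S) (l + 1))
    omega

lemma card_nodes_le : (S.filter fun v => v.1.isRight = true).card
    ≤ Fintype.card Q * ((nodesIn S).card + (mixedNodes B F S).card) := by
  have hsub : (S.filter fun v => v.1.isRight = true)
      ⊆ (Finset.univ ×ˢ (nodesIn S ∪ mixedNodes B F S)).image
        fun q : Q × TreeNode J L h => ((.inr q.2, q.1) : Idx J L h × Q) := by
    rintro ⟨i, x⟩ hv
    obtain ⟨hv1, hv2⟩ := Finset.mem_filter.1 hv
    match i with
    | .inr n =>
      refine Finset.mem_image.2 ⟨(x, n), Finset.mem_product.2 ⟨Finset.mem_univ _, ?_⟩, rfl⟩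
      rw [Finset.mem_union]
      by_cases hn : n ∈ mixedNodes B F S
      · exact Or.inr hn
      · exact Or.inl (Finset.mem_filter.2 ⟨Finset.mem_univ _,
          (mem_iff_of_not_mixed_of_base B F hn x 1).1 hv1⟩)
  refine (Finset.card_le_card hsub).trans (Finset.card_image_le.trans ?_)
  rw [Finset.card_product, Finset.card_univ]
  exact Nat.mul_le_mul_left _ (Finset.card_union_le _ _)

lemma card_roots_le : (Finset.univ.filter fun i : Bool × J =>
      ((.inr (i, rootAddr L h), B.tgt cEdge) : Idx J L h × Q) ∈ S).card
    ≤ (nodesIn S).card + (mixedNodes B F S).card := by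
  refine le_trans ?_ (Finset.card_union_le _ _)
  refine Finset.card_le_card_of_injOn (fun i => (i, rootAddr L h)) ?_ ?_
  · intro i hi
    have hi' := (Finset.mem_filter.1 (Finset.mem_coe.1 hi)).2
    rw [Finset.mem_coe, Finset.mem_union]
    by_cases hn : (i, rootAddr L h) ∈ mixedNodes B F S
    · exact Or.inr hn
    · exact Or.inl (Finset.mem_filter.2 ⟨Finset.mem_univ _,
        (mem_iff_of_not_mixed_of_base B F hn _ 1).1 hi'⟩)
  · intro i _ j _ hij
    exact (Prod.mk.inj hij).1

variable (S) in
lemma card_core_step {x : Q} {k : Fin d} (hk : ¬ IsCut B.s (B.src cEdge) (B.col cEdge) x k) :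
    (Finset.univ.filter fun i : Bool × J => ((.inl i, x) : Idx J L h × Q) ∈ S).card
    ≤ (Finset.univ.filter fun i : Bool × J => ((.inl i, x * B.s k) : Idx J L h × Q) ∈ S).card
      + (crossing B F S).card := by
  rw [← Finset.card_filter_add_card_filter_not (fun i => ((.inl i, x), k) ∉ crossing B F S)]
  refine Nat.add_le_add ?_ ?_
  · refine Finset.card_le_card_of_injOn (F.corePerm k) ?_ ((F.corePerm k).injective.injOn)
    intro i hi
    simp only [Finset.coe_filter, Finset.mem_filter, Finset.mem_univ, true_and,
      Set.mem_ofPred_eq] at hi ⊢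
    rw [← B.move_core F hk]
    exact (mem_iff_of_not_mem_crossing B F S hi.2).1 hi.1
  · refine Finset.card_le_card_of_injOn (fun i => ((.inl i, x), k)) ?_ ?_
    · intro i hi
      simpa using (Finset.mem_filter.1 (Finset.mem_coe.1 hi)).2
    · intro i _ j _ hij
      simpa using hij

variable (S) in
lemma card_core_cEdge :
    (Finset.univ.filter fun i : Bool × J => ((.inl i, B.src cEdge) : Idx J L h × Q) ∈ S).card
    ≤ (Finset.univ.filter fun i : Bool × J =>
        ((.inr (i, rootAddr L h), B.tgt cEdge) : Idx J L h × Q) ∈ S).card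
      + (crossing B F S).card := by
  rw [← Finset.card_filter_add_card_filter_not
    (fun i => ((.inl i, B.src cEdge), B.col cEdge) ∉ crossing B F S)]
  refine Nat.add_le_add (Finset.card_le_card ?_) ?_
  · intro i hi
    simp only [Finset.mem_filter, Finset.mem_univ, true_and] at hi ⊢
    rw [← B.move_cEdge F]
    exact (mem_iff_of_not_mem_crossing B F S hi.2).1 hi.1
  · refine Finset.card_le_card_of_injOn (fun i => ((.inl i, B.src cEdge), B.col cEdge)) ?_ ?_
    · intro i hi
      simpa using (Finset.mem_filter.1 (Finset.mem_coe.1 hi)).2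
    · intro i _ j _ hij
      simpa using hij

end Expansion

section Expander

variable {d : ℕ} {Q : Type} [Group Q] [Fintype Q] (B : Base d Q)

lemma exists_core_bound_at (x : Q) : ∃ M : ℕ, ∀ (J : Type) [Fintype J] (L h : ℕ) (F : Fibre d J L h)
    (S : Finset (Idx J L h × Q)),
    (Finset.univ.filter fun i : Bool × J => ((.inl i, x) : Idx J L h × Q) ∈ S).card
    ≤ (Finset.univ.filter fun i : Bool × J =>
        ((.inr (i, rootAddr L h), B.tgt cEdge) : Idx J L h × Q) ∈ S).card
      + M * (crossing B F S).card := by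
  have := B.tree x (B.src cEdge)
  induction this using Relation.ReflTransGen.head_induction_on with
  | refl => exact ⟨1, fun J _ L h F S => by simpa using card_core_cEdge B F S⟩
  | @head x y hxy _ ih =>
    obtain ⟨M, hM⟩ := ih
    obtain ⟨k, rfl, h1, h2⟩ := hxy
    refine ⟨M + 1, fun J _ L h F S => ?_⟩
    have hk : ¬ IsCut B.s (B.src cEdge) (B.col cEdge) x k := by
      rintro ⟨rfl, rfl | hx⟩
      · exact h1 ⟨cEdge, rfl⟩
      · refine h2 ⟨cEdge, Prod.ext ?_ rfl⟩
        rw [hx, mul_assoc, B.s_mul, mul_one]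
    have h3 := card_core_step B F S hk
    have h4 := hM J L h F S
    rw [add_mul]
    omega

lemma exists_core_bound : ∃ M : ℕ, ∀ (J : Type) [Fintype J] (L h : ℕ) (F : Fibre d J L h)
    (S : Finset (Idx J L h × Q)) (x : Q),
    (Finset.univ.filter fun i : Bool × J => ((.inl i, x) : Idx J L h × Q) ∈ S).card
    ≤ (Finset.univ.filter fun i : Bool × J =>
        ((.inr (i, rootAddr L h), B.tgt cEdge) : Idx J L h × Q) ∈ S).card
      + M * (crossing B F S).card := by
  choose M hM using exists_core_bound_at B
  refine ⟨∑ x, M x, fun J _ L h F S x => (hM x J L h F S).trans ?_⟩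
  gcongr
  exact Finset.single_le_sum (f := M) (fun _ _ => Nat.zero_le _) (Finset.mem_univ x)

omit [Group Q] in
lemma card_cores_eq {J : Type} [Fintype J] {L h : ℕ} (S : Finset (Idx J L h × Q)) :
    (S.filter fun v => ¬ v.1.isRight = true).card
      = ∑ x, (Finset.univ.filter fun i : Bool × J => ((.inl i, x) : Idx J L h × Q) ∈ S).card := by
  rw [Finset.card_eq_sum_card_fiberwise (f := fun v => v.2) (t := Finset.univ) (by simp)]
  refine Finset.sum_congr rfl fun x _ => ?_
  symm
  refine Finset.card_bij (fun i _ => ((.inl i, x) : Idx J L h × Q)) ?_ ?_ ?_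
  · intro i hi
    simpa using hi
  · intro i _ j _ hij
    simpa using hij
  · rintro ⟨i, y⟩ hv
    simp only [Finset.mem_filter] at hv
    obtain ⟨⟨hv1, hv2⟩, rfl⟩ := hv
    match i with
    | .inl i => exact ⟨i, by simpa using hv1, rfl⟩
    | .inr n => simp at hv2

section

variable {J : Type} [Fintype J] {L h : ℕ} (F : Fibre d J L h) (S : Finset (Idx J L h × Q))

/-- The leaves whose base copy lies in `S`. -/
def leavesIn : Finset (Leaf J L h) :=
  Finset.univ.filter fun l => ((.inr l.1, 1) : Idx J L h × Q) ∈ S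

omit [Fintype Q] in
lemma card_level_eq_card_leavesIn : (level (nodesIn S) h).card = (leavesIn S).card := by
  rw [← Finset.card_map (Function.Embedding.subtype _)]
  congr 1
  ext n
  simp only [level, nodesIn, leavesIn, Finset.mem_filter, Finset.mem_univ, true_and,
    Finset.mem_map, Function.Embedding.coe_subtype, Subtype.exists]
  exact ⟨fun ⟨h1, h2⟩ => ⟨n, h2, h1, rfl⟩, fun ⟨_, h2, h1, h⟩ => h ▸ ⟨h1, h2⟩⟩

lemma card_image_sdiff_leavesIn_le (j : Fin 30) :
    (((leavesIn S).image (F.f j)) \ leavesIn S).card ≤ 2 * (mixedNodes B F S).card := by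
  set D := Finset.univ.filter fun l : Leaf J L h => l.1 ∈ mixedNodes B F S with hD
  have hDle : D.card ≤ (mixedNodes B F S).card :=
    Finset.card_le_card_of_injOn (fun l => l.1) (fun l hl => (Finset.mem_filter.1 hl).2)
      Subtype.val_injective.injOn
  have hsub : ((leavesIn S).image (F.f j)) \ leavesIn S ⊆ D.image (F.f j) ∪ D := by
    intro l hl
    obtain ⟨h1, h2⟩ := Finset.mem_sdiff.1 hl
    obtain ⟨l, hl', rfl⟩ := Finset.mem_image.1 h1
    rw [Finset.mem_union]
    by_contra! hcon
    have h3 : l.1 ∉ mixedNodes B F S := fun h =>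
      hcon.1 (Finset.mem_image_of_mem _ (Finset.mem_filter.2 ⟨Finset.mem_univ _, h⟩))
    have h4 : (F.f j l).1 ∉ mixedNodes B F S := fun h =>
      hcon.2 (Finset.mem_filter.2 ⟨Finset.mem_univ _, h⟩)
    rw [← Base.nodePerm_ex] at h4
    have h5 := (mem_iff_nodePerm B F (by simp [exEdge, cEdge]) h3 h4).1
      (Finset.mem_filter.1 hl').2
    rw [Base.nodePerm_ex] at h5
    exact h2 (Finset.mem_filter.2 ⟨Finset.mem_univ _, h5⟩)
  have h1 := Finset.card_le_card hsub
  have h2 := Finset.card_union_le (D.image (F.f j)) D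
  have h3 := Finset.card_image_le (s := D) (f := F.f j)
  omega

end

/-- The permutations `F.f` expand small sets of leaves. -/
def Fibre.Expanding {J : Type} [Fintype J] {L h : ℕ} (F : Fibre d J L h) : Prop :=
  ∀ T : Finset (Leaf J L h), 2 * T.card ≤ Fintype.card (Leaf J L h) →
    T.card ≤ 2 * ∑ j, ((T.image (F.f j)) \ T).card

lemma exists_card_le_mul_crossing (L : ℕ) (hL : 1 ≤ L) : ∃ M : ℕ, 0 < M ∧
    ∀ (J : Type) [Fintype J] (h : ℕ)
    (F : Fibre d J L h), F.Expanding → ∀ S : Finset (Idx J L h × Q),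
    2 * (leavesIn S).card ≤ Fintype.card (Leaf J L h) → S.card ≤ M * (crossing B F S).card := by
  obtain ⟨M, hM⟩ := exists_core_bound B
  refine ⟨Fintype.card Q * (2 * (2 * L * 120 + 4 * L) + 2 + M) + 1, by positivity,
    fun J _ h F hF S hS => ?_⟩
  have h0 := card_mixedNodes_le B F S
  have h1 := card_nodes_le B F (S := S)
  have h2 : (S.filter fun v => ¬ v.1.isRight = true).card ≤ Fintype.card Q *
      ((nodesIn S).card + (mixedNodes B F S).card + M * (crossing B F S).card) := by
    rw [card_cores_eq, ← smul_eq_mul, ← Finset.card_univ]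
    refine Finset.sum_le_card_nsmul _ _ _ fun x _ => (hM J L h F S x).trans ?_
    exact Nat.add_le_add_right (card_roots_le B F) _
  have h3 := Finset.card_filter_add_card_filter_not (s := S) (fun v => v.1.isRight = true)
  have h4 := card_nodesIn_le B F (S := S) hL
  rw [card_level_eq_card_leavesIn] at h4
  have h5 : (leavesIn S).card ≤ 120 * (crossing B F S).card := by
    have h6 : ∑ j, (((leavesIn S).image (F.f j)) \ leavesIn S).card
        ≤ 30 * (2 * (mixedNodes B F S).card) := by
      have := Finset.sum_le_card_nsmul Finset.univ _ _
        fun j (_ : j ∈ Finset.univ) => card_image_sdiff_leavesIn_le B F S j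
      simpa using this
    have := hF _ hS
    omega
  have h6 : (nodesIn S).card ≤ (2 * L * 120 + 4 * L) * (crossing B F S).card := by
    nlinarith [Nat.mul_le_mul_left (2 * L) h5, Nat.mul_le_mul_left (4 * L) h0]
  rw [← h3]
  have h7 := Nat.mul_le_mul_left (Fintype.card Q) h6
  have h8 := Nat.mul_le_mul_left (Fintype.card Q) h0
  nlinarith

lemma exists_expander_constant (L : ℕ) (hL : 1 ≤ L) :
    ∃ b > (0 : ℝ), ∀ (J : Type) [Fintype J] (h : ℕ)
    (F : Fibre d J L h), F.Expanding → Function.Injective B.s →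
    ∀ (W : Type) [Fintype W] [DecidableEq W] (e : W ≃ Idx J L h × Q),
      IsRegularExpander ((B.cover F).graph e) b d := by
  obtain ⟨M, hM0, hM⟩ := exists_card_le_mul_crossing B L hL
  have hM0' : (0 : ℝ) < M := by exact_mod_cast hM0
  refine ⟨1 / (2 * M), by positivity, fun J _ h F hF hs W _ _ e => ?_⟩
  have hdeg := (B.cover F).ncard_neighborSet e hs
  refine ⟨⟨fun v => (hdeg v).le, fun S hS => ?_⟩, hdeg⟩
  set T : Finset (Idx J L h × Q) := S.map e.toEmbedding with hT
  have hTcard : T.card = S.card := Finset.card_map _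
  have hcross : (crossing B F T).card ≤ 2 * cutCard ((B.cover F).graph e) S := by
    refine (card_crossing_le_two_mul B F T).trans (Nat.mul_le_mul_left 2 ?_)
    refine le_trans (le_of_eq ?_) ((B.cover F).card_crossing_le e hs S)
    congr 1
    ext q
    simp [hT, Finset.mem_map_equiv]
  have hle : T.card ≤ M * (crossing B F T).card := by
    by_cases hl : 2 * (leavesIn T).card ≤ Fintype.card (Leaf J L h)
    · exact hM J h F hF T hl
    · have h1 : (leavesIn Tᶜ).card + (leavesIn T).card = Fintype.card (Leaf J L h) := by
        have : leavesIn Tᶜ = (leavesIn T)ᶜ := by ext; simp [leavesIn]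
        rw [this, Finset.card_compl]
        have := Finset.card_le_univ (leavesIn T)
        omega
      have h2 := hM J h F hF Tᶜ (by omega)
      rw [crossing_compl] at h2
      refine le_trans ?_ h2
      rw [Finset.card_compl, ← Fintype.card_congr e, hTcard]
      have : (S.card : ℝ) * 2 ≤ Fintype.card W := by linarith
      have : S.card * 2 ≤ Fintype.card W := by exact_mod_cast this
      omega
  have h3 : S.card ≤ M * (2 * cutCard ((B.cover F).graph e) S) := by
    rw [← hTcard]
    exact hle.trans (Nat.mul_le_mul_left _ hcross)
  have h4 : (S.card : ℝ) ≤ M * (2 * cutCard ((B.cover F).graph e) S) := by exact_mod_cast h3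
  rw [div_mul_eq_mul_div, one_mul, div_le_iff₀ (by positivity)]
  linarith

end Expander

/-! ### Long open paths in locally tree-like covers -/

section Survival

variable {d : ℕ} {Q Γ : Type} [Group Q] [Group Γ]

/-- The neighbour along the edge of colour `k` in the product Cayley graph. -/
def prodMove (s : Fin d → Q) (t : Fin d → Γ) (k : Fin d) (v : Γ × Q) : Γ × Q :=
  (v.1 * t k, v.2 * s k)

/-- The name of the edge of colour `k` at `v` in the product Cayley graph. -/
def prodLab (s : Fin d → Q) (t : Fin d → Γ) (o : Q → Fin d → Bool) (k : Fin d) (v : Γ × Q) :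
    (Γ × Q) × Fin d :=
  (if o v.2 k then v else prodMove s t k v, k)

/-- There is an open nonbacktracking path of `n` uncut edges from `v` whose first colour is
not `i`. -/
def Survives (s : Fin d → Q) (t : Fin d → Γ) (o : Q → Fin d → Bool) (xc : Q) (kc : Fin d)
    (ω : (Γ × Q) × Fin d → Bool) : ℕ → Γ × Q → Fin d → Prop
  | 0, _, _ => True
  | n + 1, v, i => ∃ k ∈ nextColours s xc kc v.2 i,
      ω (prodLab s t o k v) = true ∧ Survives s t o xc kc ω n (prodMove s t k v) k

variable {s : Fin d → Q} {t : Fin d → Γ} {o : Q → Fin d → Bool} {xc : Q} {kc : Fin d}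

/-- The end of the walk with colours `w` from `v`. -/
def prodPt (s : Fin d → Q) (t : Fin d → Γ) (v : Γ × Q) (w : List (Fin d)) : Γ × Q :=
  (v.1 * (w.map t).prod, v.2 * (w.map s).prod)

lemma prodPt_cons (v : Γ × Q) (k : Fin d) (w : List (Fin d)) :
    prodPt s t v (k :: w) = prodPt s t (prodMove s t k v) w := by
  simp [prodPt, prodMove, mul_assoc]

lemma prodMove_prodPt (v : Γ × Q) (k : Fin d) (w : List (Fin d)) :
    prodMove s t k (prodPt s t v w) = prodPt s t v (w ++ [k]) := by
  simp [prodPt, prodMove, mul_assoc]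

/-- The name of the last edge of the walk with colours `k :: w` from `v`. -/
def lastLab (s : Fin d → Q) (t : Fin d → Γ) (o : Q → Fin d → Bool) :
    Γ × Q → Fin d → List (Fin d) → (Γ × Q) × Fin d
  | v, k, [] => prodLab s t o k v
  | v, k, k' :: w => lastLab s t o (prodMove s t k v) k' w

lemma lastLab_eq (v : Γ × Q) (k : Fin d) (w : List (Fin d)) :
    lastLab s t o v k w = prodLab s t o ((k :: w).getLast (by simp))
      (prodPt s t v (k :: w).dropLast) := by
  induction w generalizing v k with
  | nil => simp [lastLab, prodPt]
  | cons k' w ih =>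
    rw [lastLab, ih, List.dropLast_cons_cons, prodPt_cons, List.getLast_cons_cons]

lemma eq_or_eq_of_prodLab_eq (hs : ∀ k, s k * s k = 1) (ht : ∀ k, t k * t k = 1) {k k' : Fin d}
    {v v' : Γ × Q} (h : prodLab s t o k v = prodLab s t o k' v') :
    k = k' ∧ (v = v' ∨ v' = prodMove s t k v ∧ v = prodMove s t k v') := by
  have hinv : ∀ v, prodMove s t k (prodMove s t k v) = v := by
    intro v
    simp [prodMove, mul_assoc, hs, ht]
  have hk : k = k' := congrArg Prod.snd h
  subst hk
  refine ⟨rfl, ?_⟩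
  have h1 := congrArg Prod.fst h
  simp only [prodLab] at h1
  split_ifs at h1
  · exact Or.inl h1
  · exact Or.inr ⟨by rw [h1, hinv], h1⟩
  · exact Or.inr ⟨h1.symm, by rw [← h1, hinv]⟩
  · left
    rw [← hinv v, h1, hinv]

lemma lastLab_injective (hs : ∀ k, s k * s k = 1) (ht : ∀ k, t k * t k = 1) {n : ℕ}
    (hfree : FreeUpTo t n) (v : Γ × Q) {k k' : Fin d} {w w' : List (Fin d)}
    (hw : (k :: w).IsChain (· ≠ ·)) (hwn : w.length < n) (hw' : (k' :: w').IsChain (· ≠ ·))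
    (hwn' : w'.length < n) (h : lastLab s t o v k w = lastLab s t o v k' w') :
    k :: w = k' :: w' := by
  rw [lastLab_eq, lastLab_eq] at h
  set W := k :: w with hW
  set W' := k' :: w' with hW'
  have hne : W ≠ [] := by simp [hW]
  have hne' : W' ≠ [] := by simp [hW']
  have hlen : W.length ≤ n := by simp [hW]; omega
  have hlen' : W'.length ≤ n := by simp [hW']; omega
  have hpt : ∀ a b : List (Fin d), a.IsChain (· ≠ ·) → a.length ≤ n → b.IsChain (· ≠ ·) →
      b.length ≤ n → prodPt s t v a = prodPt s t v b → a = b := by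
    intro a b ha ha' hb hb' hab
    exact hfree a b ha ha' hb hb' (mul_left_cancel (congrArg Prod.fst hab))
  obtain ⟨hk, h1 | ⟨h1, h2⟩⟩ := eq_or_eq_of_prodLab_eq hs ht h
  · have h3 := hpt _ _ hw.dropLast (by simp; omega) hw'.dropLast (by simp; omega) h1
    rw [← List.dropLast_append_getLast hne, ← List.dropLast_append_getLast hne', h3, hk]
  · rw [prodMove_prodPt, List.dropLast_append_getLast hne] at h1
    rw [hk, prodMove_prodPt, List.dropLast_append_getLast hne'] at h2
    have h3 := congrArg List.length (hpt _ _ hw'.dropLast (by simp; omega) hw hlen h1)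
    have h4 := congrArg List.length (hpt _ _ hw.dropLast (by simp; omega) hw' hlen' h2)
    simp [hW, hW'] at h3 h4
    omega

/-- The names of the last edges of reduced walks of length at most `n` with first colour `k`. -/
def branchLabs (s : Fin d → Q) (t : Fin d → Γ) (o : Q → Fin d → Bool) (n : ℕ) (v : Γ × Q)
    (k : Fin d) : Set ((Γ × Q) × Fin d) :=
  {l | ∃ w : List (Fin d), (k :: w).IsChain (· ≠ ·) ∧ w.length < n ∧ l = lastLab s t o v k w}

lemma branchLabs_disjoint (hs : ∀ k, s k * s k = 1) (ht : ∀ k, t k * t k = 1) {n : ℕ}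
    (hfree : FreeUpTo t n) (v : Γ × Q) {k k' : Fin d} (hk : k ≠ k') :
    Disjoint (branchLabs s t o n v k) (branchLabs s t o n v k') := by
  rw [Set.disjoint_left]
  rintro l ⟨w, hw, hwn, rfl⟩ ⟨w', hw', hwn', h⟩
  exact hk (List.cons.inj (lastLab_injective hs ht hfree v hw hwn hw' hwn' h)).1

lemma prodLab_mem_branchLabs (n : ℕ) (v : Γ × Q) (k : Fin d) :
    prodLab s t o k v ∈ branchLabs s t o (n + 1) v k :=
  ⟨[], by simp, by simp, rfl⟩

lemma branchLabs_child_subset (n : ℕ) (v : Γ × Q) {k k' : Fin d} (hk : k' ≠ k) :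
    branchLabs s t o n (prodMove s t k v) k' ⊆ branchLabs s t o (n + 1) v k := by
  rintro l ⟨w, hw, hwn, rfl⟩
  exact ⟨k' :: w, List.isChain_cons_cons.2 ⟨hk.symm, hw⟩, by simp; omega, rfl⟩

lemma prodLab_not_mem_child (hs : ∀ k, s k * s k = 1) (ht : ∀ k, t k * t k = 1) {n : ℕ}
    (hfree : FreeUpTo t (n + 1)) (v : Γ × Q) {k k' : Fin d} (hk : k' ≠ k) :
    prodLab s t o k v ∉ branchLabs s t o n (prodMove s t k v) k' := by
  rintro ⟨w, hw, hwn, h⟩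
  have := lastLab_injective (o := o) hs ht hfree v (k := k) (k' := k) (w := []) (w' := k' :: w)
    (by simp) (by simp) (List.isChain_cons_cons.2 ⟨hk.symm, hw⟩) (by simp; omega) h
  simp at this

/-- The names of the edges on which `Survives` depends. -/
def survivalLabs (s : Fin d → Q) (t : Fin d → Γ) (o : Q → Fin d → Bool) (n : ℕ) (v : Γ × Q)
    (i : Fin d) : Set ((Γ × Q) × Fin d) :=
  ⋃ k, ⋃ _ : k ≠ i, branchLabs s t o n v k

lemma dependsOn_survives (n : ℕ) (v : Γ × Q) (i : Fin d) :
    DependsOn (fun ω => Survives s t o xc kc ω n v i) (survivalLabs s t o n v i) := by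
  induction n generalizing v i with
  | zero => exact fun _ _ _ => rfl
  | succ n ih =>
    intro ω ω' h
    have hb : ∀ k, k ≠ i → ∀ l ∈ branchLabs s t o (n + 1) v k, ω l = ω' l := fun k hk l hl =>
      h l (Set.mem_iUnion₂.2 ⟨k, hk, hl⟩)
    simp only [Survives, eq_iff_iff]
    refine exists_congr fun k => and_congr_right fun hk => ?_
    have hki : k ≠ i := (mem_nextColours.1 hk).1
    rw [hb k hki _ (prodLab_mem_branchLabs n v k)]
    refine and_congr_right fun _ => ?_
    refine eq_iff_iff.1 (ih _ _ fun l hl => ?_)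
    obtain ⟨k', hk', hl'⟩ := Set.mem_iUnion₂.1 hl
    exact hb k hki l (branchLabs_child_subset n v hk' hl')

lemma FreeUpTo.mono {n m : ℕ} (h : FreeUpTo t n) (hmn : m ≤ n) : FreeUpTo t m :=
  fun w w' hw hl hw' hl' => h w w' hw (hl.trans hmn) hw' (hl'.trans hmn)

variable [Fintype Q] [Fintype Γ] {p : ℝ}

lemma Pr_survives_succ (hs : ∀ k, s k * s k = 1) (ht : ∀ k, t k * t k = 1) {n : ℕ}
    (hfree : FreeUpTo t (n + 1)) (v : Γ × Q) (i : Fin d) :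
    Pr p (fun ω => Survives s t o xc kc ω (n + 1) v i)
      = 1 - ∏ k ∈ nextColours s xc kc v.2 i,
        (1 - p * Pr p (fun ω => Survives s t o xc kc ω n (prodMove s t k v) k)) := by
  have hdep : ∀ k, DependsOn (fun ω : (Γ × Q) × Fin d → Bool => ω (prodLab s t o k v) = true ∧
      Survives s t o xc kc ω n (prodMove s t k v) k) (branchLabs s t o (n + 1) v k) := by
    intro k
    exact dependsOn_and
      (dependsOn_mono (Set.singleton_subset_iff.2 (prodLab_mem_branchLabs n v k))
        (dependsOn_coord _))
      (dependsOn_mono (S := survivalLabs s t o n (prodMove s t k v) k)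
        (Set.iUnion₂_subset fun k' hk' => branchLabs_child_subset n v hk')
        (dependsOn_survives n _ k))
  have h := Pr_exists_of_disjoint (p := p) (nextColours s xc kc v.2 i)
    (fun k => branchLabs s t o (n + 1) v k)
    (fun k _ k' _ hk => branchLabs_disjoint hs ht hfree v hk) _ (fun k _ => hdep k)
  simp only [Survives]
  rw [h]
  congr 1
  refine Finset.prod_congr rfl fun k _ => ?_
  rw [Pr_and_of_disjoint (S := {prodLab s t o k v})
    (T := survivalLabs s t o n (prodMove s t k v) k), Pr_coord]
  · rw [Set.disjoint_singleton_left]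
    intro hmem
    obtain ⟨k', hk', hl'⟩ := Set.mem_iUnion₂.1 hmem
    exact prodLab_not_mem_child hs ht hfree v hk' hl'
  · exact dependsOn_coord _
  · exact dependsOn_survives n _ k

lemma one_sub_prod_ge {ι : Type} (S : Finset ι) (z : ι → ℝ) (hz1 : ∀ k ∈ S, z k ≤ 1)
    {η : ℝ} (h0 : 0 ≤ ∑ k ∈ S, z k) (hZ : ∑ k ∈ S, z k ≤ η) :
    (∑ k ∈ S, z k) / (1 + η) ≤ 1 - ∏ k ∈ S, (1 - z k) := by
  set Z := ∑ k ∈ S, z k with hZdef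
  have h1 : ∏ k ∈ S, (1 - z k) ≤ Real.exp (-Z) := by
    rw [hZdef, ← Finset.sum_neg_distrib, Real.exp_sum]
    refine Finset.prod_le_prod (fun k hk => by linarith [hz1 k hk]) fun k _ => ?_
    have := Real.add_one_le_exp (-z k)
    linarith
  have h2 : Real.exp (-Z) ≤ 1 / (1 + Z) := by
    rw [Real.exp_neg, ← one_div]
    exact one_div_le_one_div_of_le (by linarith) (by linarith [Real.add_one_le_exp Z])
  have h3 : Z / (1 + η) ≤ Z / (1 + Z) :=
    div_le_div_of_nonneg_left h0 (by linarith) (by linarith)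
  have h4 : Z / (1 + Z) = 1 - 1 / (1 + Z) := by
    field_simp
    ring
  linarith

lemma exists_survival_probability (d : ℕ) (hd : 3 ≤ d) (p : ℝ) (hp : 1 / ((d : ℝ) - 1) < p)
    (hp1 : p < 1) : ∃ g : ℕ, ∃ γ > (0 : ℝ), ∀ (Q : Type) [Group Q] [Fintype Q] (s : Fin d → Q),
      (∀ k, s k * s k = 1) → FreeUpTo s g → ∀ (o : Q → Fin d → Bool) (xc : Q) (kc : Fin d)
      (Γ : Type) [Group Γ] [Fintype Γ] (t : Fin d → Γ), (∀ k, t k * t k = 1) →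
      ∀ n, FreeUpTo t n → ∀ v i,
        γ ≤ Pr p (fun ω : (Γ × Q) × Fin d → Bool => Survives s t o xc kc ω n v i) := by
  obtain ⟨g, η, hη, H, hw⟩ := exists_supercritical_weight d hd p hp hp1
  have hd0 : (0 : ℝ) < d := by exact_mod_cast (by omega : 0 < d)
  have hp0 : 0 ≤ p := by
    refine le_trans ?_ hp.le
    have : (3 : ℝ) ≤ d := by exact_mod_cast hd
    exact div_nonneg zero_le_one (by linarith)
  set θ : ℝ := min 1 η / (d * (|H| + 1)) with hθ
  have hm : 0 < min 1 η := lt_min one_pos hη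
  have hθ0 : 0 < θ := by positivity
  have hθH : d * (θ * H) ≤ min 1 η := by
    have h1 : θ * (d * (|H| + 1)) = min 1 η := div_mul_cancel₀ _ (by positivity)
    have h2 : θ * (d * H) ≤ θ * (d * (|H| + 1)) := by
      gcongr
      linarith [le_abs_self H]
    linarith
  have hθ1 : ∀ y, y ≤ H → 0 ≤ y → θ * y ≤ 1 := by
    intro y hy hy0
    have h3 : 0 ≤ θ * H := mul_nonneg hθ0.le (hy0.trans hy)
    have h1 : (1 : ℝ) ≤ d := by exact_mod_cast (by omega : 1 ≤ d)
    have h4 : θ * y ≤ θ * H := mul_le_mul_of_nonneg_left hy hθ0.le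
    nlinarith [min_le_left 1 η]
  refine ⟨g, θ / 2, by positivity, ?_⟩
  intro Q _ _ s hs hfree o xc kc Γ _ _ t ht n
  obtain ⟨f, hf1, hf2, hf3⟩ := hw Q s hs hfree xc kc
  have key : ∀ n, FreeUpTo t n → ∀ v i, θ * f v.2 i
      ≤ Pr p (fun ω : (Γ × Q) × Fin d → Bool => Survives s t o xc kc ω n v i) := by
    intro n
    induction n with
    | zero =>
      intro _ v i
      have : Pr p (fun ω : (Γ × Q) × Fin d → Bool => Survives s t o xc kc ω 0 v i) = 1 := by
        simp only [Survives, Pr, ind_of_true trivial]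
        exact Ex_const 1
      rw [this]
      exact hθ1 _ (hf2 _ _) (by linarith [hf1 v.2 i])
    | succ n ih =>
      intro hn v i
      rw [Pr_survives_succ hs ht hn]
      have ih' := ih (hn.mono (Nat.le_succ n))
      set S := nextColours s xc kc v.2 i with hS
      have hf0 : ∀ k, 0 ≤ f (v.2 * s k) k := fun k => by linarith [hf1 (v.2 * s k) k]
      have hz1 : ∀ k, p * (θ * f (v.2 * s k) k) ≤ 1 := by
        intro k
        have h1 := hθ1 _ (hf2 (v.2 * s k) k) (hf0 k)
        have h2 : 0 ≤ θ * f (v.2 * s k) k := mul_nonneg hθ0.le (hf0 k)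
        nlinarith
      have hsum : ∑ k ∈ S, p * (θ * f (v.2 * s k) k) = θ * (p * nextSum s xc kc f v.2 i) := by
        simp only [nextSum, Finset.mul_sum, ← hS]
        exact Finset.sum_congr rfl fun k _ => by ring
      have hZ0 : 0 ≤ ∑ k ∈ S, p * (θ * f (v.2 * s k) k) :=
        Finset.sum_nonneg fun k _ => mul_nonneg hp0 (mul_nonneg hθ0.le (hf0 k))
      have hZη : ∑ k ∈ S, p * (θ * f (v.2 * s k) k) ≤ η := by
        have h1 : ∑ k ∈ S, p * (θ * f (v.2 * s k) k) ≤ ∑ k : Fin d, θ * H := by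
          refine (Finset.sum_le_sum fun k _ => ?_).trans
            (Finset.sum_le_sum_of_subset_of_nonneg (Finset.subset_univ S) fun k _ _ => ?_)
          · have h2 : θ * f (v.2 * s k) k ≤ θ * H :=
              mul_le_mul_of_nonneg_left (hf2 _ _) hθ0.le
            have h3 : 0 ≤ θ * f (v.2 * s k) k := mul_nonneg hθ0.le (hf0 k)
            nlinarith
          · exact mul_nonneg hθ0.le ((hf0 k).trans (hf2 _ _))
        rw [Finset.sum_const, Finset.card_univ, Fintype.card_fin, nsmul_eq_mul] at h1
        exact h1.trans (hθH.trans (min_le_right _ _))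
      have h1 := one_sub_prod_ge S _ (fun k _ => hz1 k) hZ0 hZη
      have h2 : θ * f v.2 i ≤ (∑ k ∈ S, p * (θ * f (v.2 * s k) k)) / (1 + η) := by
        rw [le_div_iff₀ (by linarith), hsum]
        nlinarith [hf3 v.2 i]
      refine h2.trans (h1.trans (sub_le_sub_left (Finset.prod_le_prod ?_ ?_) 1))
      · intro k _
        have := Pr_le_one hp0 hp1.le
          (fun ω : (Γ × Q) × Fin d → Bool => Survives s t o xc kc ω n (prodMove s t k v) k)
        nlinarith [Pr_nonneg hp0 hp1.le
          (fun ω : (Γ × Q) × Fin d → Bool => Survives s t o xc kc ω n (prodMove s t k v) k)]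
      · intro k _
        have := ih' (prodMove s t k v) k
        exact sub_le_sub_left (mul_le_mul_of_nonneg_left this hp0) 1
  intro hn v i
  refine le_trans ?_ (key n hn v i)
  nlinarith [hf1 v.2 i]

/-- Adjacency along open uncut edges of the product Cayley graph. -/
def CoreStep (s : Fin d → Q) (t : Fin d → Γ) (o : Q → Fin d → Bool) (xc : Q) (kc : Fin d)
    (ω : (Γ × Q) × Fin d → Bool) (v v' : Γ × Q) : Prop :=
  ∃ k, ¬ IsCut s xc kc v.2 k ∧ v' = prodMove s t k v ∧ ω (prodLab s t o k v) = true

omit [Fintype Q] [Fintype Γ] in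
lemma Survives.exists_walk {ω : (Γ × Q) × Fin d → Bool} {n : ℕ} {v : Γ × Q} {i : Fin d}
    (h : Survives s t o xc kc ω n v i) :
    ∃ w : List (Fin d), (i :: w).IsChain (· ≠ ·) ∧ w.length = n ∧
      ∀ m, Relation.ReflTransGen (CoreStep s t o xc kc ω) v (prodPt s t v (w.take m)) := by
  induction n generalizing v i with
  | zero => exact ⟨[], by simp, rfl, fun m => by simp [prodPt, Relation.ReflTransGen.refl]⟩
  | succ n ih =>
    obtain ⟨k, hk, ho, hS⟩ := h
    obtain ⟨hki, hcut⟩ := mem_nextColours.1 hk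
    obtain ⟨w, hw, hl, hr⟩ := ih hS
    refine ⟨k :: w, List.isChain_cons_cons.2 ⟨hki.symm, hw⟩, by simp [hl], fun m => ?_⟩
    cases m with
    | zero => simp [prodPt, Relation.ReflTransGen.refl]
    | succ m =>
      rw [List.take_succ_cons, prodPt_cons]
      exact Relation.ReflTransGen.head ⟨k, hcut, rfl, ho⟩ (hr m)

omit [Fintype Q] [Fintype Γ] in
lemma Survives.exists_cluster {ω : (Γ × Q) × Fin d → Bool} {n : ℕ} {v : Γ × Q} {i : Fin d}
    (hfree : FreeUpTo t n) (h : Survives s t o xc kc ω n v i) :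
    ∃ T : Finset (Γ × Q), n ≤ T.card ∧
      ∀ y ∈ T, Relation.ReflTransGen (CoreStep s t o xc kc ω) v y := by
  obtain ⟨w, hw, hl, hr⟩ := h.exists_walk
  refine ⟨(Finset.range n).image fun m => prodPt s t v (w.take m), ?_, ?_⟩
  · rw [Finset.card_image_of_injOn, Finset.card_range]
    intro m hm m' hm' hmm
    simp only [Finset.coe_range, Set.mem_Iio] at hm hm'
    have h1 := hfree _ _ (hw.tail.take m) (by simp; omega) (hw.tail.take m') (by simp; omega)
      (mul_left_cancel (congrArg Prod.fst hmm))
    have h2 := congrArg List.length h1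
    simp at h2
    omega
  · intro y hy
    obtain ⟨m, -, rfl⟩ := Finset.mem_image.1 hy
    exact hr m

end Survival

/-! ### Good trees -/

section SecondMoment

variable {E : Type} [Fintype E] {p : ℝ}

lemma Ex_sq_sum_le {u : ℕ} {Γ : Type} [Fintype Γ] (hp0 : 0 ≤ p) (hp1 : p ≤ 1)
    (f : Fin u × Γ → (E → Bool) → ℝ) (S : Fin u → Set E)
    (hS : ∀ j j', j ≠ j' → Disjoint (S j) (S j')) (hf : ∀ i, DependsOn (f i) (S i.1))
    (hf0 : ∀ i, Ex p (f i) = 0) (hf1 : ∀ i ω, |f i ω| ≤ 1) :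
    Ex p (fun ω => (∑ i, f i ω) ^ 2) ≤ u * (Fintype.card Γ : ℝ) ^ 2 := by
  have h1 : (fun ω => (∑ i, f i ω) ^ 2) = fun ω => ∑ i, ∑ i', f i ω * f i' ω := by
    funext ω
    rw [sq, Finset.sum_mul_sum]
  have h2 : ∀ i i', Ex p (fun ω => f i ω * f i' ω) ≤ if i.1 = i'.1 then 1 else 0 := by
    intro i i'
    split_ifs with h
    · rw [← Ex_const (p := p) (E := E) 1]
      refine Ex_mono hp0 hp1 fun ω => ?_
      refine (le_abs_self _).trans ?_
      rw [abs_mul]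
      exact mul_le_one₀ (hf1 i ω) (abs_nonneg _) (hf1 i' ω)
    · rw [Ex_mul_of_disjoint (hS _ _ h) (hf i) (hf i'), hf0, zero_mul]
  have h3 : ∑ i : Fin u × Γ, ∑ i' : Fin u × Γ, (if i.1 = i'.1 then (1 : ℝ) else 0)
      = u * (Fintype.card Γ : ℝ) ^ 2 := by
    have h4 : ∀ x : Fin u, (∑ x' : Fin u, ∑ _ : Γ, if x = x' then (1 : ℝ) else 0)
        = Fintype.card Γ := by
      intro x
      rw [Finset.sum_comm]
      simp
    simp only [Fintype.sum_prod_type, h4, Finset.sum_const, Finset.card_univ, nsmul_eq_mul,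
      Fintype.card_prod, Fintype.card_fin, Nat.cast_mul]
    ring
  rw [h1, Ex_sum, ← h3]
  refine Finset.sum_le_sum fun i _ => ?_
  rw [Ex_sum]
  exact Finset.sum_le_sum fun i' _ => h2 i i'

lemma Pr_card_lt_le {u : ℕ} {Γ : Type} [Fintype Γ] [Nonempty Γ] (hu : 1 ≤ u) (hp0 : 0 ≤ p)
    (hp1 : p ≤ 1) (A : Fin u × Γ → (E → Bool) → Prop) (S : Fin u → Set E)
    (hS : ∀ j j', j ≠ j' → Disjoint (S j) (S j')) (hA : ∀ i, DependsOn (A i) (S i.1)) {γ : ℝ}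
    (hγ : 0 < γ) (hAγ : ∀ i, γ ≤ Pr p (A i)) :
    Pr p (fun ω => ((Finset.univ.filter fun i => A i ω).card : ℝ)
      < γ / 2 * Fintype.card (Fin u × Γ)) ≤ 4 / (γ ^ 2 * u) := by
  set N : ℝ := (Fintype.card (Fin u × Γ) : ℝ) with hN
  have hNu : N = u * Fintype.card Γ := by rw [hN]; simp
  have hu0 : (0 : ℝ) < u := by exact_mod_cast hu
  have hΓ : (0 : ℝ) < Fintype.card Γ := by exact_mod_cast Fintype.card_pos
  have hN0 : 0 < N := by rw [hNu]; positivity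
  set f : Fin u × Γ → (E → Bool) → ℝ := fun i ω => ind (A i ω) - Pr p (A i) with hf
  have h1 := Ex_sq_sum_le hp0 hp1 f S hS
    (fun i ω ω' h => by simp only [hf, hA i h])
    (fun i => by rw [hf]; simp only [Ex_sub, Ex_const]; simp [Pr])
    (fun i ω => by
      rw [abs_le]
      simp only [hf]
      constructor <;> linarith [ind_nonneg (A i ω), ind_le_one (A i ω),
        Pr_nonneg hp0 hp1 (A i), Pr_le_one hp0 hp1 (A i)])
  have h2 : ∀ ω, (γ / 2 * N) ^ 2 * ind (((Finset.univ.filter fun i => A i ω).card : ℝ)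
      < γ / 2 * N) ≤ (∑ i, f i ω) ^ 2 := by
    intro ω
    by_cases h : ((Finset.univ.filter fun i => A i ω).card : ℝ) < γ / 2 * N
    · rw [ind_of_true h, mul_one]
      have h3 : ∑ i, ind (A i ω) = ((Finset.univ.filter fun i => A i ω).card : ℝ) := by
        simp [ind]
      have h4 : γ * N ≤ ∑ i, Pr p (A i) := by
        have := Finset.card_nsmul_le_sum (Finset.univ : Finset (Fin u × Γ)) _ γ fun i _ => hAγ i
        rw [Finset.card_univ, nsmul_eq_mul, ← hN] at this
        linarith
      have h5 : ∑ i, f i ω ≤ -(γ / 2 * N) := by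
        simp only [hf, Finset.sum_sub_distrib, h3]
        linarith
      have h6 : 0 < γ / 2 * N := by positivity
      nlinarith
    · rw [ind_of_false h, mul_zero]
      positivity
  have h3 := (Ex_mono hp0 hp1 h2).trans h1
  rw [Ex_const_mul] at h3
  rw [le_div_iff₀ (by positivity)]
  change (γ / 2 * N) ^ 2 * Pr p _ ≤ _ at h3
  set P := Pr p (fun ω => ((Finset.univ.filter fun i => A i ω).card : ℝ) < γ / 2 * N)
  rw [hNu] at h3
  have h4 : u * (Fintype.card Γ : ℝ) ^ 2 * (P * (γ ^ 2 * u))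
      ≤ u * (Fintype.card Γ : ℝ) ^ 2 * 4 := by
    nlinarith
  exact le_of_mul_le_mul_left h4 (by positivity)

end SecondMoment

section Good

variable {d : ℕ} {Q Γ : Type} [Group Q] [Group Γ] {u L h : ℕ}

/-- The fibre data in which the cores are copies of a second Cayley graph. -/
def groupFibre (t : Fin d → Γ) (ht : ∀ k, t k * t k = 1) (ρ : Equiv.Perm (Fin u × Γ))
    (f : Fin 30 → Equiv.Perm (Leaf (Fin u × Γ) L h)) : Fibre d (Fin u × Γ) L h where
  κ k := (Equiv.refl _).prodCongr (Equiv.mulRight (t k))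
  κ_inv k j := Prod.ext rfl (by simp [mul_assoc, ht])
  ρ := ρ
  f := f

/-- The inclusion of the `j`-th core on the side `σ`. -/
def coreEmb (L h : ℕ) (σ : Bool) (j : Fin u) (l : (Γ × Q) × Fin d) :
    (Idx (Fin u × Γ) L h × Q) × Fin d :=
  ((.inl (σ, (j, l.1.1)), l.1.2), l.2)

omit [Group Q] [Group Γ] in
lemma coreEmb_injective (σ : Bool) (j : Fin u) :
    Function.Injective (coreEmb (d := d) (Q := Q) (Γ := Γ) L h σ j) := by
  rintro ⟨⟨a, x⟩, k⟩ ⟨⟨a', x'⟩, k'⟩ hh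
  simp only [coreEmb, Prod.mk.injEq, Sum.inl.injEq] at hh
  obtain ⟨⟨⟨-, -, rfl⟩, rfl⟩, rfl⟩ := hh
  rfl

/-- The core to which an element of the fibre belongs. -/
def owner : Idx (Fin u × Γ) L h → Bool × Fin u
  | .inl i => (i.1, i.2.1)
  | .inr n => (n.1.1, n.1.2.1)

variable (B : Base d Q) (t : Fin d → Γ)

/-- The names of the edges at the root of a tree, and of the edge joining it to the core. -/
def nearLabs [Fintype Q] (L h : ℕ) (i : Bool × (Fin u × Γ)) :
    Finset ((Idx (Fin u × Γ) L h × Q) × Fin d) :=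
  insert ((.inl i, B.src cEdge), B.col cEdge)
    ((Finset.univ : Finset (Q × Fin d)).image fun l => ((.inr (i, rootAddr L h), l.1), l.2))

/-- All edges at the root are open and the core vertex has a large cluster. -/
def Good [Fintype Q] (K : ℕ) (ω : (Idx (Fin u × Γ) L h × Q) × Fin d → Bool)
    (i : Bool × (Fin u × Γ)) : Prop :=
  Survives B.s t B.o (B.src cEdge) (B.col cEdge) (ω ∘ coreEmb L h i.1 i.2.1) K
    (i.2.2, B.src cEdge) (B.col cEdge) ∧ ∀ e ∈ nearLabs B L h i, ω e = true

variable [Fintype Q]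

lemma dependsOn_good (K : ℕ) (i : Bool × (Fin u × Γ)) :
    DependsOn (fun ω => Good (L := L) (h := h) B t K ω i)
      {e | owner e.1.1 = (i.1, i.2.1)} := by
  intro ω ω' hω
  have h1 : ω ∘ coreEmb L h i.1 i.2.1 = ω' ∘ coreEmb L h i.1 i.2.1 := by
    funext l
    exact hω _ rfl
  have h2 : ∀ e ∈ nearLabs B L h i, ω e = ω' e := by
    intro e he
    refine hω e ?_
    simp only [nearLabs, Finset.mem_insert, Finset.mem_image] at he
    rcases he with rfl | ⟨l, -, rfl⟩ <;> rfl
  simp only [Good, h1]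
  exact congrArg _ (propext (forall₂_congr fun e he => by rw [h2 e he]))

lemma Pr_good_ge [Fintype Γ] {p : ℝ} (hp0 : 0 ≤ p) (hp1 : p ≤ 1) (ht : ∀ k, t k * t k = 1) {K : ℕ}
    (hK : 1 ≤ K) (hfree : FreeUpTo t K) {γ : ℝ}
    (hsurv : ∀ v i, γ ≤ Pr p (fun ω : (Γ × Q) × Fin d → Bool =>
      Survives B.s t B.o (B.src cEdge) (B.col cEdge) ω K v i)) (i : Bool × (Fin u × Γ)) :
    γ * p ^ (Fintype.card Q * d + 1) ≤ Pr p (fun ω => Good (L := L) (h := h) B t K ω i) := by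
  set v : Γ × Q := (i.2.2, B.src cEdge) with hv
  have h1 := Pr_and_of_disjoint (p := p)
    (S := Set.image (coreEmb L h i.1 i.2.1) (survivalLabs B.s t B.o K v (B.col cEdge)))
    (T := (nearLabs B L h i : Set ((Idx (Fin u × Γ) L h × Q) × Fin d)))
    (A := fun ω => Survives B.s t B.o (B.src cEdge) (B.col cEdge) (ω ∘ coreEmb L h i.1 i.2.1) K
      v (B.col cEdge)) (B := fun ω => ∀ e ∈ nearLabs B L h i, ω e = true) ?_ ?_ ?_
  · unfold Good
    rw [h1, Pr_forall_coord]
    refine mul_le_mul ?_ ?_ (pow_nonneg hp0 _) (Pr_nonneg hp0 hp1 _)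
    · have h2 := Ex_comp_injective (p := p) (coreEmb_injective (L := L) (h := h) i.1 i.2.1)
        (fun ω => ind (Survives B.s t B.o (B.src cEdge) (B.col cEdge) ω K v (B.col cEdge)))
      exact (hsurv v _).trans h2.ge
    · refine pow_le_pow_of_le_one hp0 hp1 ((Finset.card_insert_le _ _).trans ?_)
      gcongr
      refine Finset.card_image_le.trans ?_
      simp
  · rw [Set.disjoint_left]
    rintro _ ⟨l, hl, rfl⟩ hmem
    simp only [nearLabs, Finset.coe_insert, Finset.coe_image, Set.mem_insert_iff] at hmem
    rcases hmem with hmem | ⟨l', -, hl'⟩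
    · have hlab : l = prodLab B.s t B.o (B.col cEdge) v := by
        refine coreEmb_injective i.1 i.2.1 (hmem.trans ?_)
        simp [coreEmb, prodLab, hv, B.mob_pos]
      obtain ⟨k, hk, hlk⟩ := Set.mem_iUnion₂.1 hl
      obtain ⟨K, rfl⟩ : ∃ K', K = K' + 1 := ⟨K - 1, by omega⟩
      refine Set.disjoint_left.1 (branchLabs_disjoint B.s_mul ht hfree v hk) hlk ?_
      rw [hlab]
      exact prodLab_mem_branchLabs K v _
    · simp [coreEmb] at hl'
  · intro ω ω' hω
    have hd := dependsOn_survives (s := B.s) (t := t) (o := B.o) (xc := B.src cEdge)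
      (kc := B.col cEdge) K v (B.col cEdge)
    exact hd fun l hl => hω _ ⟨l, hl, rfl⟩
  · intro ω ω' hω
    exact propext (forall₂_congr fun e he => by rw [hω e he])

/-- The good trees on one side. -/
def goodSet [Fintype Γ] (K : ℕ) (ω : (Idx (Fin u × Γ) L h × Q) × Fin d → Bool) (σ : Bool) :
    Finset (Fin u × Γ) :=
  Finset.univ.filter fun j => Good B t K ω (σ, j)

lemma Pr_goodSet_lt_le [Fintype Γ] {p : ℝ} (hp0 : 0 ≤ p) (hp1 : p ≤ 1) (hu : 1 ≤ u) {K : ℕ} {γ : ℝ}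
    (hγ : 0 < γ)
    (hgood : ∀ i, γ ≤ Pr p (fun ω => Good (u := u) (L := L) (h := h) B t K ω i)) (σ : Bool) :
    Pr p (fun ω => ((goodSet (u := u) (L := L) (h := h) B t K ω σ).card : ℝ)
      < γ / 2 * Fintype.card (Fin u × Γ)) ≤ 4 / (γ ^ 2 * u) := by
  refine Pr_card_lt_le hu hp0 hp1 (fun j ω => Good B t K ω (σ, j))
    (fun j => {e | owner e.1.1 = (σ, j)}) ?_ (fun j => dependsOn_good B t K (σ, j)) hγ
    fun j => hgood (σ, j)
  intro j j' hj
  rw [Set.disjoint_left]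
  intro e he he'
  exact hj (congrArg Prod.snd (he.symm.trans he'))

/-- Adjacency along open edges inside the cores of one side. -/
def coreRel (ω : (Idx (Fin u × Γ) L h × Q) × Fin d → Bool) (σ : Bool)
    (v w : (Fin u × Γ) × Q) : Prop :=
  v.1.1 = w.1.1 ∧ CoreStep B.s t B.o (B.src cEdge) (B.col cEdge) (ω ∘ coreEmb L h σ v.1.1)
    (v.1.2, v.2) (w.1.2, w.2)

/-- The cluster of a core vertex within its core. -/
def coreClass (ω : (Idx (Fin u × Γ) L h × Q) × Fin d → Bool) (σ : Bool) (j : Fin u × Γ) :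
    Quot (coreRel B t ω σ) :=
  Quot.mk _ (j, B.src cEdge)

lemma card_coreClass_le [Fintype Γ] {K : ℕ} (hfree : FreeUpTo t K)
    (ω : (Idx (Fin u × Γ) L h × Q) × Fin d → Bool) (σ : Bool) :
    ((goodSet B t K ω σ).image (coreClass B t ω σ)).card * K
      ≤ Fintype.card (Fin u × Γ) * Fintype.card Q := by
  set s := (goodSet B t K ω σ).image (coreClass B t ω σ) with hs
  have h1 : ∀ q ∈ s, K ≤ (Finset.univ.filter fun v : (Fin u × Γ) × Q =>
      Quot.mk (coreRel B t ω σ) v = q).card := by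
    intro q hq
    obtain ⟨⟨j, a⟩, hj, rfl⟩ := Finset.mem_image.1 hq
    obtain ⟨T, hT, hr⟩ := (Finset.mem_filter.1 hj).2.1.exists_cluster hfree
    refine hT.trans (Finset.card_le_card_of_injOn (fun y => ((j, y.1), y.2)) ?_ ?_)
    · intro y hy
      simp only [Finset.coe_filter, Finset.mem_univ, true_and, Set.mem_ofPred_eq]
      have h2 := hr y hy
      clear hy
      induction h2 with
      | refl => rfl
      | tail _ hst ih =>
        rw [← ih]
        exact (Quot.sound ⟨rfl, hst⟩).symm
    · rintro ⟨a, x⟩ - ⟨a', x'⟩ - hh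
      simp only [Prod.mk.injEq, true_and] at hh
      exact Prod.ext hh.1 hh.2
  have h2 := Finset.card_nsmul_le_sum s _ K h1
  rw [smul_eq_mul] at h2
  refine h2.trans ?_
  rw [← Finset.card_biUnion]
  · refine (Finset.card_le_univ _).trans ?_
    simp
  · intro q _ q' _ hqq
    simp only [Function.onFun]
    rw [Finset.disjoint_left]
    intro v hv hv'
    exact hqq ((Finset.mem_filter.1 hv).2.symm.trans (Finset.mem_filter.1 hv').2)

end Good

/-! ### Large clusters -/

section Hubs

variable {d : ℕ} {Q Γ : Type} [Group Q] [Group Γ] {u L h : ℕ} (B : Base d Q) {t : Fin d → Γ}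
  (ht : ∀ k, t k * t k = 1) (ρ : Equiv.Perm (Fin u × Γ))
  (f : Fin 30 → Equiv.Perm (Leaf (Fin u × Γ) L h)) {W : Type}
  (e : W ≃ Idx (Fin u × Γ) L h × Q) {ω : (Idx (Fin u × Γ) L h × Q) × Fin d → Bool}

/-- The vertex of the root copy adjacent to the core. -/
def hub (i : Bool × (Fin u × Γ)) : W := e.symm (.inr (i, rootAddr L h), B.tgt cEdge)

lemma adj_of_coreRel {σ : Bool} {v w : (Fin u × Γ) × Q} (hvw : coreRel B t ω σ v w) :
    ((B.cover (groupFibre t ht ρ f)).openGraph e ω).Adj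
      (e.symm (.inl (σ, v.1), v.2)) (e.symm (.inl (σ, w.1), w.2)) := by
  obtain ⟨⟨j, a⟩, x⟩ := v
  obtain ⟨⟨j', a'⟩, x'⟩ := w
  obtain ⟨hj, k, hk, hm, ho⟩ := hvw
  obtain rfl : j = j' := hj
  simp only [prodMove, Prod.mk.injEq] at hm
  obtain ⟨rfl, rfl⟩ := hm
  have hmove : (B.cover (groupFibre t ht ρ f)).move k (.inl (σ, (j, a)), x)
      = (.inl (σ, (j, a * t k)), x * B.s k) := B.move_core _ hk _
  refine ⟨k, by rw [Equiv.apply_symm_apply, Equiv.apply_symm_apply, hmove], ?_⟩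
  rw [Equiv.apply_symm_apply]
  refine Eq.trans (congrArg ω ?_) ho
  unfold Cover.lab prodLab coreEmb
  rw [hmove]
  change ((if B.o x k = true then _ else _), k) = _
  dsimp only
  split_ifs <;> rfl

variable [Fintype Q] {K : ℕ}

omit [Group Γ] in
lemma mem_nearLabs_root (i : Bool × (Fin u × Γ)) (x : Q) (k : Fin d) :
    ((.inr (i, rootAddr L h), x), k) ∈ nearLabs B L h i :=
  Finset.mem_insert_of_mem (Finset.mem_image_of_mem _ (Finset.mem_univ (x, k)))

lemma Good.component_root {i : Bool × (Fin u × Γ)} (hi : Good B t K ω i) (x y : Q) :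
    ((B.cover (groupFibre t ht ρ f)).openGraph e ω).connectedComponentMk
        (e.symm (.inr (i, rootAddr L h), x)) =
      ((B.cover (groupFibre t ht ρ f)).openGraph e ω).connectedComponentMk
        (e.symm (.inr (i, rootAddr L h), y)) := by
  induction B.tree x y with
  | refl => rfl
  | tail _ hst ih =>
    rw [ih]
    obtain ⟨k, rfl, h1, h2⟩ := hst
    have hmove := B.move_none (groupFibre t ht ρ f) h1 h2 (i, rootAddr L h)
    refine SimpleGraph.ConnectedComponent.sound (SimpleGraph.Adj.reachable
      ⟨k, by rw [Equiv.apply_symm_apply, Equiv.apply_symm_apply, hmove], ?_⟩)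
    rw [Equiv.apply_symm_apply]
    refine hi.2 _ ?_
    unfold Cover.lab
    rw [hmove]
    split_ifs
    · exact mem_nearLabs_root B i _ k
    · exact mem_nearLabs_root B i _ k

lemma Good.component_core {i : Bool × (Fin u × Γ)} (hi : Good B t K ω i) :
    ((B.cover (groupFibre t ht ρ f)).openGraph e ω).connectedComponentMk
        (e.symm (.inl i, B.src cEdge)) =
      ((B.cover (groupFibre t ht ρ f)).openGraph e ω).connectedComponentMk (hub B e i) := by
  refine SimpleGraph.ConnectedComponent.sound (SimpleGraph.Adj.reachable
    ⟨B.col cEdge, by rw [hub, Equiv.apply_symm_apply, Equiv.apply_symm_apply, B.move_cEdge], ?_⟩)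
  rw [Equiv.apply_symm_apply, B.lab_of_pos _ (B.mob_pos _)]
  exact hi.2 _ (Finset.mem_insert_self _ _)

lemma Good.component_match {σ : Bool} {j : Fin u × Γ} (hj : Good B t K ω (σ, j))
    (hj' : Good B t K ω (σ, ρ j)) :
    ((B.cover (groupFibre t ht ρ f)).openGraph e ω).connectedComponentMk (hub B e (σ, j)) =
      ((B.cover (groupFibre t ht ρ f)).openGraph e ω).connectedComponentMk (hub B e (σ, ρ j)) := by
  refine (hj.component_root B ht ρ f e _ (B.src rEdge)).trans
    (Eq.trans ?_ (hj'.component_root B ht ρ f e (B.tgt rEdge) _))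
  have hmove := B.move_mob (groupFibre t ht ρ f) (τ := rEdge) (by simp [rEdge, cEdge])
    ((σ, j), rootAddr L h)
  rw [Base.nodePerm_root] at hmove
  refine SimpleGraph.ConnectedComponent.sound (SimpleGraph.Adj.reachable
    ⟨B.col rEdge, by rw [Equiv.apply_symm_apply, Equiv.apply_symm_apply, hmove]; rfl, ?_⟩)
  rw [Equiv.apply_symm_apply, B.lab_of_pos _ (B.mob_pos _)]
  exact hj.2 _ (mem_nearLabs_root B _ _ _)

/-- The number of roots on the side `σ` in a block of linked good trees is at most the number of
hubs in some component. -/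
lemma exists_component_of_linked [Fintype Γ] (σ : Bool)
    (q : Quot (Linked (goodSet B t K ω σ) (coreClass B t ω σ) ρ)) :
    ∃ c : ((B.cover (groupFibre t ht ρ f)).openGraph e ω).ConnectedComponent,
      ∀ j ∈ (goodSet B t K ω σ).filter fun i => Quot.mk _ i = q,
        ((B.cover (groupFibre t ht ρ f)).openGraph e ω).connectedComponentMk (hub B e (σ, j))
          = c := by
  set H := (B.cover (groupFibre t ht ρ f)).openGraph e ω with hH
  let g : Quot (coreRel B t ω σ) → H.ConnectedComponent :=
    Quot.lift (fun v => H.connectedComponentMk (e.symm (.inl (σ, v.1), v.2))) fun v w hvw =>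
      SimpleGraph.ConnectedComponent.sound (adj_of_coreRel B ht ρ f e hvw).reachable
  let g' : Quot (Linked (goodSet B t K ω σ) (coreClass B t ω σ) ρ) → H.ConnectedComponent :=
    Quot.lift (fun j => H.connectedComponentMk (e.symm (.inl (σ, j), B.src cEdge))) (by
      rintro j j' ⟨hj, hj', hc | hc⟩
      · exact congrArg g hc
      · subst hc
        have h1 := (Finset.mem_filter.1 hj).2
        have h2 := (Finset.mem_filter.1 hj').2
        change H.connectedComponentMk _ = H.connectedComponentMk _
        rw [h1.component_core B ht ρ f e, h2.component_core B ht ρ f e,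
          h1.component_match B ht ρ f e h2])
  refine ⟨g' q, fun j hj => ?_⟩
  obtain ⟨hj1, rfl⟩ := Finset.mem_filter.1 hj
  have h1 := (Finset.mem_filter.1 hj1).2
  exact (h1.component_core B ht ρ f e).symm

omit [Group Γ] [Fintype Q] in
lemma hub_injective (σ : Bool) : Function.Injective fun j : Fin u × Γ => hub B e (σ, j) := by
  intro j j' hj
  simpa [hub] using hj

end Hubs

section Averaging

variable {E : Type} [Fintype E] {p : ℝ}

lemma sum_Pr_le_of_card_le {P : Type} [Fintype P] (hp0 : 0 ≤ p) (hp1 : p ≤ 1)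
    (N : P → (E → Bool) → Prop) (F : (E → Bool) → Prop) {β δ : ℝ} (hβ : 0 ≤ β)
    (hF : Pr p F ≤ δ)
    (hN : ∀ ω, ¬ F ω → ((Finset.univ.filter fun ρ => N ρ ω).card : ℝ) ≤ Fintype.card P * β) :
    ∑ ρ, Pr p (N ρ) ≤ Fintype.card P * (δ + β) := by
  have h1 : ∑ ρ, Pr p (N ρ) = Ex p fun ω => ∑ ρ, ind (N ρ ω) := by
    rw [Ex_sum]
    rfl
  have h2 : ∀ ω, ∑ ρ, ind (N ρ ω) ≤ Fintype.card P * (ind (F ω) + β) := by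
    intro ω
    have h3 : ∑ ρ, ind (N ρ ω) = ((Finset.univ.filter fun ρ => N ρ ω).card : ℝ) := by
      simp [ind]
    rw [h3]
    have hP : (0 : ℝ) ≤ Fintype.card P := Nat.cast_nonneg _
    by_cases h : F ω
    · rw [ind_of_true h]
      have h4 : ((Finset.univ.filter fun ρ => N ρ ω).card : ℝ) ≤ Fintype.card P := by
        exact_mod_cast Finset.card_le_univ _
      nlinarith
    · rw [ind_of_false h, zero_add]
      exact hN ω h
  rw [h1]
  refine (Ex_mono hp0 hp1 h2).trans ?_
  rw [Ex_const_mul, Ex_add, Ex_const]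
  exact mul_le_mul_of_nonneg_left (add_le_add_left hF β) (Nat.cast_nonneg _)

lemma exists_Pr_or_le {P : Type} [Fintype P] [Nonempty P] (hp0 : 0 ≤ p) (hp1 : p ≤ 1)
    (N : Bool → P → (E → Bool) → Prop) {δ : ℝ}
    (hN : ∀ σ, ∑ ρ, Pr p (N σ ρ) ≤ Fintype.card P * δ) :
    ∃ ρ, Pr p (fun ω => ∃ σ, N σ ρ ω) ≤ 2 * δ := by
  by_contra! hcon
  have h1 : ∑ _ρ : P, 2 * δ < ∑ ρ, (Pr p (N true ρ) + Pr p (N false ρ)) := by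
    refine Finset.sum_lt_sum_of_nonempty Finset.univ_nonempty fun ρ _ => (hcon ρ).trans_le ?_
    refine le_trans ?_ (Pr_or_le hp0 hp1 _ _)
    refine Pr_mono hp0 hp1 fun ω hω => ?_
    simpa [or_comm] using hω
  rw [Finset.sum_add_distrib, Finset.sum_const, Finset.card_univ, nsmul_eq_mul] at h1
  linarith [hN true, hN false]

lemma two_pow_mul_pow_le {η N : ℝ} {m : ℕ} (hη0 : 0 < η) (hη1 : η ≤ 1) (hN : 0 < N)
    (hm : (m : ℝ) ≤ η ^ 2 * N / 2) :
    (2 : ℝ) ^ m * (1 - η) ^ ⌈η * N⌉₊ ≤ 2 / (η ^ 2 * N) := by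
  have h1 : (2 : ℝ) ^ m ≤ Real.exp (η ^ 2 * N / 2) := by
    calc (2 : ℝ) ^ m ≤ (Real.exp 1) ^ m := by
          gcongr
          have := Real.add_one_le_exp (1 : ℝ)
          linarith
      _ = Real.exp m := by rw [← Real.exp_nat_mul, mul_one]
      _ ≤ _ := Real.exp_le_exp.2 hm
  have h2 : (1 - η) ^ ⌈η * N⌉₊ ≤ Real.exp (-(η ^ 2 * N)) := by
    calc (1 - η) ^ ⌈η * N⌉₊ ≤ (Real.exp (-η)) ^ ⌈η * N⌉₊ := by
          refine pow_le_pow_left₀ (by linarith) ?_ _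
          linarith [Real.add_one_le_exp (-η)]
      _ = Real.exp (⌈η * N⌉₊ * (-η)) := by rw [← Real.exp_nat_mul]
      _ ≤ _ := by
          refine Real.exp_le_exp.2 ?_
          nlinarith [Nat.le_ceil (η * N)]
  have h3 : 0 < η ^ 2 * N / 2 := by positivity
  calc (2 : ℝ) ^ m * (1 - η) ^ ⌈η * N⌉₊
      ≤ Real.exp (η ^ 2 * N / 2) * Real.exp (-(η ^ 2 * N)) :=
        mul_le_mul h1 h2 (pow_nonneg (by linarith) _) (Real.exp_nonneg _)
    _ = (Real.exp (η ^ 2 * N / 2))⁻¹ := by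
        rw [← Real.exp_add, ← Real.exp_neg]
        congr 1
        ring
    _ ≤ (η ^ 2 * N / 2)⁻¹ := inv_anti₀ h3 (by linarith [Real.add_one_le_exp (η ^ 2 * N / 2)])
    _ = 2 / (η ^ 2 * N) := inv_div _ _

/-- Some permutation is likely to join the classes of the two families of random sets into
linear-size blocks. -/
lemma exists_joining_perm {J : Type} [Fintype J] [Nonempty J] (hp0 : 0 ≤ p) (hp1 : p ≤ 1)
    (Gd : Bool → (E → Bool) → Finset J) {ι : Bool → (E → Bool) → Type}
    (cl : ∀ σ ω, J → ι σ ω) {m : ℕ} (hm : ∀ σ ω, ((Gd σ ω).image (cl σ ω)).card ≤ m) {η δ : ℝ}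
    (hη : 0 < η) (hη1 : η ≤ 1) (hmη : (m : ℝ) ≤ η ^ 2 * Fintype.card J / 2)
    (hδ : ∀ σ, Pr p (fun ω => ((Gd σ ω).card : ℝ) < 3 * η * Fintype.card J) ≤ δ) :
    ∃ ρ : Equiv.Perm J, Pr p (fun ω => ∃ σ, ∀ q : Quot (Linked (Gd σ ω) (cl σ ω) ρ),
      (((Gd σ ω).filter fun i => Quot.mk _ i = q).card : ℝ) < η * Fintype.card J)
        ≤ 2 * (δ + 2 / (η ^ 2 * Fintype.card J)) := by
  have hJ : (0 : ℝ) < Fintype.card J := by exact_mod_cast Fintype.card_pos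
  refine exists_Pr_or_le hp0 hp1 (fun σ ρ ω => ∀ q : Quot (Linked (Gd σ ω) (cl σ ω) ρ),
    (((Gd σ ω).filter fun i => Quot.mk _ i = q).card : ℝ) < η * Fintype.card J) fun σ => ?_
  refine sum_Pr_le_of_card_le hp0 hp1 _ _ (by positivity) (hδ σ) fun ω hω => ?_
  refine (card_perms_no_giant_le (Gd σ ω) (cl σ ω) (hm σ ω) hη (not_lt.1 hω)).trans ?_
  exact mul_le_mul_of_nonneg_left (two_pow_mul_pow_le hη hη1 hJ hmη) (Nat.cast_nonneg _)

end Averaging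

section Giant

variable {d : ℕ} {Q Γ : Type} [Group Q] [Group Γ] [Fintype Q] [Fintype Γ] {u L h : ℕ}

/-- On both sides there is a component containing a positive proportion of the hubs. -/
lemma exists_matching_with_giants (B : Base d Q) {t : Fin d → Γ} (ht : ∀ k, t k * t k = 1)
    (f : Fin 30 → Equiv.Perm (Leaf (Fin u × Γ) L h)) {p : ℝ} (hp0 : 0 ≤ p) (hp1 : p ≤ 1)
    (hu : 1 ≤ u) {K : ℕ} (hfree : FreeUpTo t K) {η : ℝ} (hη : 0 < η) (hη1 : η ≤ 1)
    (hgood : ∀ i, 6 * η ≤ Pr p (fun ω => Good (u := u) (L := L) (h := h) B t K ω i))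
    (hK : 2 * Fintype.card Q ≤ η ^ 2 * K) :
    ∃ ρ : Equiv.Perm (Fin u × Γ), ∀ (W : Type) (e : W ≃ Idx (Fin u × Γ) L h × Q),
      Pr p (fun ω => ¬ ∀ σ,
        ∃ c : ((B.cover (groupFibre t ht ρ f)).openGraph e ω).ConnectedComponent,
        η * Fintype.card (Fin u × Γ) ≤ ((Finset.univ.filter fun j : Fin u × Γ =>
          ((B.cover (groupFibre t ht ρ f)).openGraph e ω).connectedComponentMk (hub B e (σ, j))
            = c).card : ℝ)) ≤ 5 / (η ^ 2 * u) := by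
  have : Nonempty (Fin u) := ⟨⟨0, hu⟩⟩
  set N : ℝ := (Fintype.card (Fin u × Γ) : ℝ) with hN
  have hu0 : (0 : ℝ) < u := by exact_mod_cast hu
  have hNu : (u : ℝ) ≤ N := by
    rw [hN, Fintype.card_prod, Fintype.card_fin, Nat.cast_mul]
    have : (1 : ℝ) ≤ Fintype.card Γ := by exact_mod_cast Fintype.card_pos
    nlinarith
  have hN0 : 0 < N := hu0.trans_le hNu
  have hQ : (1 : ℝ) ≤ Fintype.card Q := by exact_mod_cast Fintype.card_pos
  have hK0 : (0 : ℝ) < K := by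
    by_contra hcon
    have : (K : ℝ) = 0 := le_antisymm (not_lt.1 hcon) (Nat.cast_nonneg _)
    rw [this] at hK
    linarith
  have hm : ((Fintype.card (Fin u × Γ) * Fintype.card Q / K : ℕ) : ℝ) ≤ η ^ 2 * N / 2 := by
    refine Nat.cast_div_le.trans ?_
    rw [div_le_iff₀ hK0, Nat.cast_mul, ← hN]
    nlinarith
  obtain ⟨ρ, hρ⟩ := exists_joining_perm hp0 hp1 (fun σ ω => goodSet (L := L) (h := h) B t K ω σ)
    (fun σ ω => coreClass B t ω σ)
    (fun σ ω => (Nat.le_div_iff_mul_le (by exact_mod_cast hK0)).2 (card_coreClass_le B t hfree ω σ))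
    hη hη1 hm (δ := 4 / ((6 * η) ^ 2 * u)) (fun σ => by
      have := Pr_goodSet_lt_le B t hp0 hp1 hu (by positivity) hgood σ
      rwa [show 6 * η / 2 = 3 * η by ring] at this)
  rw [← hN] at hρ
  refine ⟨ρ, fun W e => ?_⟩
  refine (Pr_mono hp0 hp1 fun ω hω => ?_).trans (hρ.trans ?_)
  · by_contra hcon
    push Not at hcon
    refine hω fun σ => ?_
    obtain ⟨q, hq⟩ := hcon σ
    obtain ⟨c, hc⟩ := exists_component_of_linked B ht ρ f e σ q
    refine ⟨c, hq.trans ?_⟩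
    exact_mod_cast Finset.card_le_card fun j hj => Finset.mem_filter.2 ⟨Finset.mem_univ _, hc j hj⟩
  · have h1 : 4 / ((6 * η) ^ 2 * u) = 1 / 9 * (1 / (η ^ 2 * u)) := by
      field_simp
      norm_num
    have h2 : 2 / (η ^ 2 * N) ≤ 2 / (η ^ 2 * u) := by gcongr
    have h3 : 2 / (η ^ 2 * u) = 2 * (1 / (η ^ 2 * u)) := by ring
    have h4 : 5 / (η ^ 2 * u) = 5 * (1 / (η ^ 2 * u)) := by ring
    have h5 : 0 < 1 / (η ^ 2 * u) := by positivity
    rw [h1, h4]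
    linarith

end Giant

/-! ### Separation of the two sides -/

section Separation

variable {d : ℕ} {Q J : Type} [Group Q] {L h : ℕ}

/-- The residue modulo two. -/
def parity (n : ℕ) : Fin 2 := ⟨n % 2, Nat.mod_lt _ two_pos⟩

lemma linkEdge_injective {b b' : Bool} {q q' : Fin 2} (h : linkEdge b q = linkEdge b' q') :
    b = b' ∧ q = q' := by
  simpa [linkEdge] using h

variable (B : Base d Q)

/-- One of the (at most two) edges between the tree nodes `w` and `b :: w` is open. -/
def LinkOpen (ω : (Idx J L h × Q) × Fin d → Bool) (i : Bool × J) (b : Bool)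
    (w : List Bool) : Prop :=
  ∃ w' : Addr L h, (w'.1 = w ∨ w'.1 = b :: w) ∧
    ω ((.inr (i, w'), B.src (linkEdge b (parity w.length))),
      B.col (linkEdge b (parity w.length))) = true

/-- Consecutive nodes on the branch from the root to `w` are joined by open edges. -/
def AboveOpen (ω : (Idx J L h × Q) × Fin d → Bool) (i : Bool × J) : List Bool → Prop
  | [] => True
  | b :: w => LinkOpen B ω i b w ∧ AboveOpen ω i w

/-- The upper part of the side `true`. -/
def Upper (ω : (Idx J L h × Q) × Fin d → Bool) : Idx J L h → Prop
  | .inl i => i.1 = true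
  | .inr n => n.1.1 = true ∧ AboveOpen B ω n.1 n.2.1

omit [Group Q] in
lemma coreSwap_inr (n : TreeNode J L h) :
    coreSwap J L h (.inr n) = if n.2 = rootAddr L h then .inl n.1 else .inr n := rfl

lemma linkFun_cases (b : Bool) (q : Fin 2) (w : List Bool) :
    (linkFun L h b q w = b :: w ∧ q = parity w.length) ∨
    (∃ w', w = b :: w' ∧ linkFun L h b q w = w' ∧ q = parity w'.length) ∨
    linkFun L h b q w = w := by
  unfold linkFun
  split_ifs with h1 h2
  · exact Or.inl ⟨rfl, Fin.ext h1.1.symm⟩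
  · cases w with
    | nil => simp at h2
    | cons a w =>
      simp only [List.head?_cons, Option.some.injEq, List.tail_cons] at h2
      obtain ⟨rfl, h2⟩ := h2
      exact Or.inr (Or.inl ⟨w, rfl, rfl, Fin.ext h2.symm⟩)
  · exact Or.inr (Or.inr rfl)

lemma upper_link {ω : (Idx J L h × Q) × Fin d → Bool} (b : Bool) (q : Fin 2) (i : Bool × J)
    (w : Addr L h)
    (hω : ω ((.inr (i, w), B.src (linkEdge b q)), B.col (linkEdge b q)) = true) :
    AboveOpen B ω i (linkPerm L h b q w).1 ↔ AboveOpen B ω i w.1 := by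
  change AboveOpen B ω i (linkFun L h b q w.1) ↔ _
  rcases linkFun_cases (L := L) (h := h) b q w.1 with ⟨h1, h2⟩ | ⟨w', h1, h2, h3⟩ | h1
  · rw [h1]
    subst h2
    exact ⟨fun h => h.2, fun h => ⟨⟨w, Or.inl rfl, hω⟩, h⟩⟩
  · rw [h2, h1]
    subst h3
    exact ⟨fun h => ⟨⟨w, Or.inr h1, hω⟩, h⟩, fun h => h.2⟩
  · rw [h1]

variable (F : Fibre d J L h)

lemma upper_act {ω : (Idx J L h × Q) × Fin d → Bool}
    (hleak : ∀ j, ∀ w : Addr L h, w.1.length = h → ¬ AboveOpen B ω (true, j) w.1)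
    {x : Q} {k : Fin d} (i : Idx J L h) (hω : ω ((i, x), k) = true) :
    Upper B ω (F.act k (B.typ x k) i) ↔ Upper B ω i := by
  by_cases hc : B.typ x k = some cEdge
  · rw [hc]
    simp only [Fibre.act, if_true]
    rcases i with i | ⟨i, w⟩
    · change (i.1 = true ∧ True) ↔ i.1 = true
      simp
    · by_cases hw : w = rootAddr L h
      · subst hw
        rw [coreSwap_inr, if_pos rfl]
        change i.1 = true ↔ (i.1 = true ∧ True)
        simp
      · rw [coreSwap_inr, if_neg hw]
  rcases i with i | n
  · rw [Base.act_inl_of_ne F hc]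
    exact Iff.rfl
  rcases ht : B.typ x k with _ | τ
  · exact Iff.rfl
  have hτ : τ ≠ cEdge := by rintro rfl; exact hc ht
  have hmob := B.typ_eq_some ht
  have hact : F.act k (some τ) (.inr n) = .inr (F.nodePerm τ n) := by
    simp [Fibre.act, hτ]
  rw [hact]
  obtain ⟨i, w⟩ := n
  match τ with
  | .inl false => exact absurd rfl hτ
  | .inl true =>
    by_cases hw : w = rootAddr L h
    · subst hw
      have := Base.nodePerm_root F i
      rw [rEdge] at this
      rw [this]
      exact Iff.rfl
    · have := Base.nodePerm_root_of_ne F (n := (i, w)) hw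
      rw [rEdge] at this
      rw [this]
  | .inr (.inl (b, q)) =>
    have := Base.nodePerm_link F b q i w
    rw [linkEdge] at this
    rw [this]
    refine and_congr Iff.rfl (upper_link B b q i w ?_)
    rw [← hω, linkEdge, Base.src, Base.col, hmob]
  | .inr (.inr j) =>
    by_cases hw : w.1.length = h
    · have := Base.nodePerm_ex F j ⟨(i, w), hw⟩
      rw [exEdge] at this
      rw [this]
      have key : ∀ l : Leaf J L h, ¬ Upper B ω (.inr l.1) := by
        rintro ⟨⟨⟨σ, j⟩, w⟩, hw⟩ ⟨hσ, h2⟩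
        obtain rfl : σ = true := hσ
        exact hleak j w hw h2
      exact iff_of_false (key _) (key ⟨(i, w), hw⟩)
    · have := Base.nodePerm_ex_of_ne F j (n := (i, w)) hw
      rw [exEdge] at this
      rw [this]

lemma upper_move {ω : (Idx J L h × Q) × Fin d → Bool}
    (hleak : ∀ j, ∀ w : Addr L h, w.1.length = h → ¬ AboveOpen B ω (true, j) w.1)
    (v : Idx J L h × Q) (k : Fin d) (hω : ω ((B.cover F).lab k v) = true) :
    Upper B ω ((B.cover F).move k v).1 ↔ Upper B ω v.1 := by
  have pos : ∀ (v : Idx J L h × Q), B.o v.2 k = true → ω ((B.cover F).lab k v) = true →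
      (Upper B ω ((B.cover F).move k v).1 ↔ Upper B ω v.1) := by
    rintro ⟨i, x⟩ hx hω
    rw [B.lab_of_pos F hx] at hω
    rw [B.move_of_pos F hx]
    exact upper_act B F hleak i hω
  by_cases hx : B.o v.2 k = true
  · exact pos v hx hω
  · have h2 : B.o ((B.cover F).move k v).2 k = true := by
      rw [Cover.move_snd]
      have := B.o_mul v.2 k
      change B.o (v.2 * B.s k) k = true
      rw [this]
      simpa using hx
    have := pos _ h2 (by rwa [Cover.lab_move])
    rw [Cover.move_move] at this
    exact this.symm

/-- If no branch of the side `true` is open, then its upper part is a union of components. -/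
lemma component_ne_of_upper {W : Type} (e : W ≃ Idx J L h × Q)
    {ω : (Idx J L h × Q) × Fin d → Bool}
    (hleak : ∀ j, ∀ w : Addr L h, w.1.length = h → ¬ AboveOpen B ω (true, j) w.1) {v w : W}
    (hv : Upper B ω (e v).1) (hw : ¬ Upper B ω (e w).1) :
    ((B.cover F).openGraph e ω).connectedComponentMk v ≠
      ((B.cover F).openGraph e ω).connectedComponentMk w := by
  intro h
  rw [SimpleGraph.ConnectedComponent.eq, SimpleGraph.reachable_iff_reflTransGen] at h
  refine hw ?_
  clear hw
  induction h with
  | refl => exact hv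
  | tail _ h2 ih =>
    obtain ⟨k, hk, hω⟩ := h2
    rw [hk, upper_move B F hleak _ _ hω]
    exact ih

/-- The names of the edges between the levels `m` and `m + 1`. -/
def levelLabs (J : Type) (L h : ℕ) (m : ℕ) : Set ((Idx J L h × Q) × Fin d) :=
  {l | ∃ i, ∃ w : Addr L h, ∃ b, (w.1.length = m ∨ w.1.length = m + 1) ∧
    l = ((.inr (i, w), B.src (linkEdge b (parity m))), B.col (linkEdge b (parity m)))}

lemma disjoint_levelLabs {m n : ℕ} (hmn : m < n) :
    Disjoint (levelLabs B J L h m) (levelLabs B J L h n) := by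
  rw [Set.disjoint_left]
  rintro _ ⟨i, w, b, hw, rfl⟩ ⟨i', w', b', hw', h⟩
  simp only [Prod.mk.injEq, Sum.inr.injEq] at h
  obtain ⟨⟨⟨-, rfl⟩, h1⟩, h2⟩ := h
  have := (linkEdge_injective (B.mob_injective (Prod.ext h1 h2))).2
  have : m % 2 = n % 2 := congrArg Fin.val this
  omega

lemma dependsOn_linkOpen (i : Bool × J) (b : Bool) (w : List Bool) :
    DependsOn (fun ω => LinkOpen (L := L) (h := h) B ω i b w) (levelLabs B J L h w.length) := by
  intro ω ω' hω
  refine propext (exists_congr fun w' => and_congr_right fun hw' => ?_)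
  rw [hω _ ⟨i, w', b, ?_, rfl⟩]
  rcases hw' with h | h <;> simp [h]

lemma dependsOn_aboveOpen (i : Bool × J) (w : List Bool) :
    DependsOn (fun ω => AboveOpen (L := L) (h := h) B ω i w)
      {l | ∃ m < w.length, l ∈ levelLabs B J L h m} := by
  induction w with
  | nil => exact fun _ _ _ => rfl
  | cons b w ih =>
    refine dependsOn_and (dependsOn_mono ?_ (dependsOn_linkOpen B i b w)) (dependsOn_mono ?_ ih)
    · exact fun l hl => ⟨w.length, by simp, hl⟩
    · rintro l ⟨m, hm, hl⟩
      exact ⟨m, by simp only [List.length_cons]; omega, hl⟩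

variable [Fintype Q] [Fintype J] {p : ℝ}

lemma Pr_linkOpen_le (hp0 : 0 ≤ p) (hp1 : p ≤ 1) (i : Bool × J) (b : Bool) (w : List Bool) :
    Pr p (fun ω => LinkOpen (L := L) (h := h) B ω i b w) ≤ 1 - (1 - p) ^ 2 := by
  set s : Finset (Addr L h) := Finset.univ.filter fun w' => w'.1 = w ∨ w'.1 = b :: w with hs
  have hcard : s.card ≤ 2 := by
    have h1 : (s.map (Function.Embedding.subtype _)).card ≤ ({w, b :: w} : Finset _).card := by
      refine Finset.card_le_card fun x hx => ?_
      simp only [hs, Finset.mem_map, Finset.mem_filter, Finset.mem_univ, true_and] at hx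
      obtain ⟨a, ha, rfl⟩ := hx
      simpa using ha
    rw [Finset.card_map] at h1
    exact h1.trans Finset.card_le_two
  set l : Addr L h → (Idx J L h × Q) × Fin d := fun w' =>
    ((.inr (i, w'), B.src (linkEdge b (parity w.length))),
      B.col (linkEdge b (parity w.length))) with hl
  have h1 := Pr_exists_of_disjoint (p := p) s (fun w' => {l w'})
    (fun a _ a' _ haa => by
      rw [Set.disjoint_singleton]
      intro h
      simp only [hl, Prod.mk.injEq, Sum.inr.injEq, true_and, and_true] at h
      exact haa h)
    (fun w' ω => ω (l w') = true) fun w' _ => dependsOn_coord _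
  simp only [Pr_coord, Finset.prod_const] at h1
  have h2 : Pr p (fun ω => LinkOpen (L := L) (h := h) B ω i b w)
      = Pr p (fun ω => ∃ w' ∈ s, ω (l w') = true) := by
    congr 1
    funext ω
    simp [LinkOpen, hs, hl]
  rw [h2, h1]
  have := pow_le_pow_of_le_one (by linarith : (0 : ℝ) ≤ 1 - p) (by linarith) hcard
  linarith

lemma Pr_aboveOpen_le (hp0 : 0 ≤ p) (hp1 : p ≤ 1) (i : Bool × J) (w : List Bool) :
    Pr p (fun ω => AboveOpen (L := L) (h := h) B ω i w) ≤ (1 - (1 - p) ^ 2) ^ w.length := by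
  induction w with
  | nil => simpa using Pr_le_one hp0 hp1 _
  | cons b w ih =>
    have hdis : Disjoint (levelLabs B J L h w.length)
        {l | ∃ m < w.length, l ∈ levelLabs B J L h m} := by
      rw [Set.disjoint_left]
      rintro l hl ⟨m, hm, hl'⟩
      exact Set.disjoint_left.1 (disjoint_levelLabs B hm) hl' hl
    have h1 := Pr_and_of_disjoint (p := p) hdis (dependsOn_linkOpen B i b w)
      (dependsOn_aboveOpen B i w)
    have h2 : Pr p (fun ω => AboveOpen (L := L) (h := h) B ω i (b :: w)) = _ := h1
    rw [h2, List.length_cons, pow_succ']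
    have := Pr_linkOpen_le (L := L) (h := h) B hp0 hp1 i b w
    exact mul_le_mul this ih (Pr_nonneg hp0 hp1 _) ((Pr_nonneg hp0 hp1 _).trans this)

end Separation

/-- The valid addresses of a given length. -/
def addrLevel (L : ℕ) : ℕ → Finset (List Bool)
  | 0 => {[]}
  | l + 1 => (addrLevel L l).image (List.cons false) ∪
      if L ∣ l then (addrLevel L l).image (List.cons true) else ∅

lemma mem_addrLevel {L : ℕ} (w : List Bool) (hw : ValidAddr L w) : w ∈ addrLevel L w.length := by
  induction w with
  | nil => simp [addrLevel]
  | cons b w ih =>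
    have h1 := ih hw.1
    cases b with
    | false => simp [addrLevel, h1]
    | true => simp [addrLevel, h1, hw.2 rfl]

lemma card_addrLevel_le {L : ℕ} (hL : 1 ≤ L) (l : ℕ) :
    (addrLevel L l).card ≤ 2 ^ ((l + (L - 1)) / L) := by
  induction l with
  | zero => simp [addrLevel, Nat.one_le_two_pow]
  | succ l ih =>
    by_cases hl : L ∣ l
    · obtain ⟨t, rfl⟩ := hl
      have e1 : (L * t + (L - 1)) / L = t := by
        rw [Nat.mul_add_div (by omega), Nat.div_eq_of_lt (by omega), add_zero]
      have e2 : (L * t + 1 + (L - 1)) / L = t + 1 := by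
        rw [show L * t + 1 + (L - 1) = L * (t + 1) by rw [mul_add]; omega,
          Nat.mul_div_cancel_left _ (by omega)]
      rw [e1] at ih
      rw [e2, addrLevel, if_pos (dvd_mul_right _ _), pow_succ]
      refine (Finset.card_union_le _ _).trans ?_
      have := Finset.card_image_le (s := addrLevel L (L * t)) (f := List.cons false)
      have := Finset.card_image_le (s := addrLevel L (L * t)) (f := List.cons true)
      omega
    · rw [addrLevel, if_neg hl, Finset.union_empty]
      refine Finset.card_image_le.trans (ih.trans ?_)
      exact Nat.pow_le_pow_right two_pos (Nat.div_le_div_right (by omega))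

lemma card_addr_le {L : ℕ} (hL : 1 ≤ L) (t : ℕ) :
    Fintype.card (Addr L (L * t)) ≤ (L * t + 1) * 2 ^ t := by
  have h1 : Fintype.card (Addr L (L * t))
      ≤ ((Finset.range (L * t + 1)).biUnion (addrLevel L)).card := by
    rw [← Finset.card_univ, ← Finset.card_map (Function.Embedding.subtype _)]
    refine Finset.card_le_card fun w hw => ?_
    simp only [Finset.mem_map, Finset.mem_univ, true_and] at hw
    obtain ⟨a, rfl⟩ := hw
    refine Finset.mem_biUnion.2 ⟨a.1.length, ?_, mem_addrLevel _ a.2.1⟩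
    exact Finset.mem_range.2 (Nat.lt_succ_of_le a.2.2)
  refine h1.trans (Finset.card_biUnion_le.trans ?_)
  refine (Finset.sum_le_card_nsmul _ _ (2 ^ t) fun l hl => ?_).trans (by simp)
  refine (card_addrLevel_le hL l).trans (Nat.pow_le_pow_right two_pos ?_)
  rw [Finset.mem_range] at hl
  have : l + (L - 1) < L * (t + 1) := by rw [mul_add]; omega
  have := Nat.div_lt_of_lt_mul this
  omega

/-- The probability that some branch of the side `true` is open. -/
lemma Pr_leak_le {d : ℕ} {Q J : Type} [Group Q] [Fintype Q] [Fintype J] (B : Base d Q) {L : ℕ}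
    (hL : 1 ≤ L) (t : ℕ) {p : ℝ} (hp0 : 0 ≤ p) (hp1 : p ≤ 1) :
    Pr p (fun ω : (Idx J L (L * t) × Q) × Fin d → Bool =>
      ¬ ∀ j, ∀ w : Addr L (L * t), w.1.length = L * t → ¬ AboveOpen B ω (true, j) w.1)
      ≤ Fintype.card J * (2 * (1 - (1 - p) ^ 2) ^ L) ^ t := by
  set r : ℝ := 1 - (1 - p) ^ 2
  set S : Finset (J × List Bool) := Finset.univ ×ˢ (addrLevel L (L * t)).filter
    fun w => w.length = L * t with hS
  have h1 : Pr p (fun ω : (Idx J L (L * t) × Q) × Fin d → Bool =>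
      ¬ ∀ j, ∀ w : Addr L (L * t), w.1.length = L * t → ¬ AboveOpen B ω (true, j) w.1)
      ≤ Pr p (fun ω : (Idx J L (L * t) × Q) × Fin d → Bool =>
        ∃ a ∈ S, AboveOpen B ω (true, a.1) a.2) := by
    refine Pr_mono hp0 hp1 fun ω hω => ?_
    push Not at hω
    obtain ⟨j, w, hw, hA⟩ := hω
    refine ⟨(j, w.1), ?_, hA⟩
    simp only [hS, Finset.mem_product, Finset.mem_univ, true_and, Finset.mem_filter]
    exact ⟨by simpa [hw] using mem_addrLevel w.1 w.2.1, hw⟩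
  have h2 := Pr_exists_le hp0 hp1 S
    fun a (ω : (Idx J L (L * t) × Q) × Fin d → Bool) => AboveOpen B ω (true, a.1) a.2
  have h3 : ∑ a ∈ S, Pr p (fun ω : (Idx J L (L * t) × Q) × Fin d → Bool =>
      AboveOpen B ω (true, a.1) a.2) ≤ S.card • r ^ (L * t) := by
    refine Finset.sum_le_card_nsmul _ _ _ fun a ha => ?_
    simp only [hS, Finset.mem_product, Finset.mem_univ, true_and, Finset.mem_filter] at ha
    rw [← ha.2]
    exact Pr_aboveOpen_le B hp0 hp1 _ _
  have h4 : S.card ≤ Fintype.card J * 2 ^ t := by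
    rw [hS, Finset.card_product, Finset.card_univ]
    refine Nat.mul_le_mul_left _ ((Finset.card_filter_le _ _).trans
      ((card_addrLevel_le hL _).trans (Nat.pow_le_pow_right two_pos ?_)))
    rw [Nat.mul_add_div (by omega), Nat.div_eq_of_lt (by omega), add_zero]
  have hr : 0 ≤ r := by
    have : (1 - p) ^ 2 ≤ 1 := pow_le_one₀ (by linarith) (by linarith)
    simp only [r]; linarith
  refine (h1.trans (h2.trans h3)).trans ?_
  rw [nsmul_eq_mul, mul_pow, ← pow_mul, ← mul_assoc]
  refine mul_le_mul_of_nonneg_right ?_ (pow_nonneg hr _)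
  exact_mod_cast h4

/-! ### Conclusion -/

/-- If two components have size at least `m`, then so has the second largest one. -/
lemma exists_second_component {V : Type} [Fintype V] (H : SimpleGraph V)
    {a b : H.ConnectedComponent} (hab : a ≠ b) {m : ℝ} (ha : m ≤ (compVerts H a).card)
    (hb : m ≤ (compVerts H b).card) :
    ∃ c₁ c₂ : H.ConnectedComponent, IsLargestComp H c₁ ∧ c₂ ≠ c₁ ∧
      (∀ c' : H.ConnectedComponent, c' ≠ c₁ →
        (compVerts H c').card ≤ (compVerts H c₂).card) ∧
      m ≤ ((compVerts H c₂).card : ℝ) := by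
  have hfin : Fintype H.ConnectedComponent := Fintype.ofFinite _
  obtain ⟨c₁, -, h1⟩ := Finset.exists_max_image Finset.univ (fun c => (compVerts H c).card)
    ⟨a, Finset.mem_univ a⟩
  obtain ⟨c, hc, hm⟩ : ∃ c, c ≠ c₁ ∧ m ≤ ((compVerts H c).card : ℝ) := by
    by_cases h : a = c₁
    · exact ⟨b, fun hb => hab (h.trans hb.symm), hb⟩
    · exact ⟨a, h, ha⟩
  obtain ⟨c₂, h2, h3⟩ := Finset.exists_max_image (Finset.univ.filter (· ≠ c₁))
    (fun c => (compVerts H c).card) ⟨c, by simpa using hc⟩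
  refine ⟨c₁, c₂, fun c' => h1 c' (Finset.mem_univ _), by simpa using h2,
    fun c' hc' => h3 c' (by simpa using hc'), hm.trans ?_⟩
  exact_mod_cast h3 c (by simpa using hc)

/-- If `N` is a large power of `4 ^ t`, then the `α`-th power of `N * 4 ^ t` is at most linear in
`N`. -/
lemma rpow_le_const_mul {α C N n : ℝ} {s t : ℕ} (hα0 : 0 < α) (hα1 : α < 1)
    (hs : 2 ≤ s * (1 - α)) (hC : 0 ≤ C) (hn0 : 0 ≤ n) (hn : n ≤ C * N * 4 ^ t)
    (hN : 2 ^ (s * t) ≤ N) : n ^ α ≤ C ^ α * N := by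
  have hN0 : 0 < N := lt_of_lt_of_le (by positivity) hN
  have h1 : ((4 : ℝ) ^ t) ^ α ≤ N ^ (1 - α) := by
    calc ((4 : ℝ) ^ t) ^ α ≤ (4 : ℝ) ^ t := by
          have h4 : (1 : ℝ) ≤ 4 ^ t := one_le_pow₀ (by norm_num)
          simpa using Real.rpow_le_rpow_of_exponent_le h4 hα1.le
      _ = (2 : ℝ) ^ ((2 * t : ℕ) : ℝ) := by
          rw [Real.rpow_natCast, pow_mul]
          norm_num
      _ ≤ (2 : ℝ) ^ (((s * t : ℕ) : ℝ) * (1 - α)) := by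
          refine Real.rpow_le_rpow_of_exponent_le one_le_two ?_
          push_cast
          nlinarith [(Nat.cast_nonneg t : (0 : ℝ) ≤ t)]
      _ = ((2 : ℝ) ^ (s * t)) ^ (1 - α) := by
          rw [Real.rpow_mul (by norm_num), Real.rpow_natCast]
      _ ≤ N ^ (1 - α) := Real.rpow_le_rpow (by positivity) hN (by linarith)
  calc n ^ α ≤ (C * N * 4 ^ t) ^ α := Real.rpow_le_rpow hn0 hn hα0.le
    _ = C ^ α * (N ^ α * (4 ^ t) ^ α) := by
        rw [Real.mul_rpow (by positivity) (by positivity), Real.mul_rpow hC hN0.le, mul_assoc]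
    _ ≤ C ^ α * (N ^ α * N ^ (1 - α)) := by gcongr
    _ = C ^ α * N := by rw [← Real.rpow_add hN0]; simp

/-- A base with prescribed freeness. -/
lemma exists_base (d : ℕ) (hd : 3 ≤ d) (g : ℕ) :
    ∃ (Q : Type) (_ : Group Q) (_ : Fintype Q) (B : Base d Q), FreeUpTo B.s g := by
  obtain ⟨Q, hQ1, hQ2, s, hs, hfree, ht⟩ := exists_involution_group d (max g 72)
  have h1 : 1 ≤ max g 72 := le_trans (by norm_num) (le_max_right g 72)
  have hcard := hfree.lt_card (by omega)
  have hs1 := hfree.ne_one h1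
  obtain ⟨o, ho⟩ := exists_orientation hs hs1
  obtain ⟨mob, hm1, hm2, hm3⟩ := exists_mobile_edges hd hs hs1 (hfree.injective h1) ht ho EdgeType
    (by
      have : Fintype.card EdgeType = 36 := by simp [EdgeType]
      have := le_max_right g 72
      omega)
  exact ⟨Q, hQ1, hQ2, ⟨s, hs, o, ho, mob, hm1, hm2, hm3⟩, hfree.mono (le_max_left _ _)⟩

lemma exists_expanding_leaf_perms (d : ℕ) (J : Type) [Fintype J] (L h : ℕ) :
    ∃ f : Fin 30 → Equiv.Perm (Leaf J L h), ∀ F : Fibre d J L h, F.f = f → F.Expanding := by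
  obtain ⟨f, hf⟩ := exists_expanding_perms (Leaf J L h)
  refine ⟨f, fun F hF T hT => ?_⟩
  rw [hF]
  convert hf T hT

lemma card_idx_mul_le {J : Type} [Fintype J] (q : ℕ) {L : ℕ} (hL : 1 ≤ L) (t : ℕ) :
    ((Fintype.card (Idx J L (L * t)) * q : ℕ) : ℝ)
      ≤ (2 * q * (L + 2)) * Fintype.card J * 4 ^ t := by
  have h1 := card_addr_le hL t
  have h2 : L * t + 1 + 1 ≤ (L + 2) * 2 ^ t := by
    have : t ≤ 2 ^ t := Nat.lt_two_pow_self.le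
    have : 1 ≤ 2 ^ t := Nat.one_le_two_pow
    nlinarith
  have h3 : Fintype.card (Addr L (L * t)) + 1 ≤ (L + 2) * 4 ^ t := by
    calc Fintype.card (Addr L (L * t)) + 1 ≤ (L * t + 1) * 2 ^ t + 2 ^ t :=
          Nat.add_le_add h1 Nat.one_le_two_pow
      _ = (L * t + 1 + 1) * 2 ^ t := by ring
      _ ≤ (L + 2) * 2 ^ t * 2 ^ t := Nat.mul_le_mul_right _ h2
      _ = (L + 2) * 4 ^ t := by rw [mul_assoc, ← mul_pow]; norm_num
  have h4 : Fintype.card (Idx J L (L * t))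
      = 2 * Fintype.card J * (Fintype.card (Addr L (L * t)) + 1) := by
    simp only [Fintype.card_sum, Fintype.card_prod, Fintype.card_bool]
    ring
  have h5 : Fintype.card (Idx J L (L * t)) * q
      ≤ (2 * q * (L + 2)) * Fintype.card J * 4 ^ t := by
    rw [h4]
    calc 2 * Fintype.card J * (Fintype.card (Addr L (L * t)) + 1) * q
        ≤ 2 * Fintype.card J * ((L + 2) * 4 ^ t) * q := by gcongr
      _ = _ := by ring
  exact_mod_cast h5

/-- With high probability each side has a large component, and these are different. -/
lemma exists_two_large_components {d u L T : ℕ} {Q Γ : Type} [Group Q] [Fintype Q] [Group Γ]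
    [Fintype Γ] (B : Base d Q) {t : Fin d → Γ} (ht : ∀ k, t k * t k = 1)
    (f : Fin 30 → Equiv.Perm (Leaf (Fin u × Γ) L (L * T))) {p : ℝ} (hp0 : 0 ≤ p) (hp1 : p ≤ 1)
    (hu : 1 ≤ u) (hL : 1 ≤ L) {K : ℕ} (hfree : FreeUpTo t K) {η : ℝ} (hη : 0 < η) (hη1 : η ≤ 1)
    (hgood : ∀ i, 6 * η ≤ Pr p (fun ω => Good (u := u) (L := L) (h := L * T) B t K ω i))
    (hK : 2 * Fintype.card Q ≤ η ^ 2 * K) :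
    ∃ ρ : Equiv.Perm (Fin u × Γ), ∀ (W : Type) [Fintype W]
      (e : W ≃ Idx (Fin u × Γ) L (L * T) × Q),
      1 - (5 / (η ^ 2 * u) + Fintype.card (Fin u × Γ) * (2 * (1 - (1 - p) ^ 2) ^ L) ^ T) ≤
      Pr p (fun ω => ∃ a b : ((B.cover (groupFibre t ht ρ f)).openGraph e ω).ConnectedComponent,
        a ≠ b ∧ η * Fintype.card (Fin u × Γ) ≤ (compVerts _ a).card ∧
          η * Fintype.card (Fin u × Γ) ≤ (compVerts _ b).card) := by
  obtain ⟨ρ, hρ⟩ := exists_matching_with_giants B ht f hp0 hp1 hu hfree hη hη1 hgood hK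
  refine ⟨ρ, fun W _ e => ?_⟩
  have h1 := hρ W e
  have h2 := Pr_leak_le (J := Fin u × Γ) B hL T hp0 hp1
  have h3 := Pr_or_le hp0 hp1
    (fun ω => ¬ ∀ σ, ∃ c : ((B.cover (groupFibre t ht ρ f)).openGraph e ω).ConnectedComponent,
        η * Fintype.card (Fin u × Γ) ≤ ((Finset.univ.filter fun j : Fin u × Γ =>
          ((B.cover (groupFibre t ht ρ f)).openGraph e ω).connectedComponentMk (hub B e (σ, j))
            = c).card : ℝ))
    (fun ω : (Idx (Fin u × Γ) L (L * T) × Q) × Fin d → Bool =>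
      ¬ ∀ j, ∀ w : Addr L (L * T), w.1.length = L * T → ¬ AboveOpen B ω (true, j) w.1)
  refine le_trans ?_ (Pr_mono hp0 hp1 (A := fun ω => ¬ ((¬ ∀ σ, ∃ c : ((B.cover
      (groupFibre t ht ρ f)).openGraph e ω).ConnectedComponent,
        η * Fintype.card (Fin u × Γ) ≤ ((Finset.univ.filter fun j : Fin u × Γ =>
          ((B.cover (groupFibre t ht ρ f)).openGraph e ω).connectedComponentMk (hub B e (σ, j))
            = c).card : ℝ)) ∨
      ¬ ∀ j, ∀ w : Addr L (L * T), w.1.length = L * T → ¬ AboveOpen B ω (true, j) w.1)) ?_)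
  · rw [Pr_not]
    linarith
  intro ω hω
  rw [not_or, not_not, not_not] at hω
  obtain ⟨hbig, hleak⟩ := hω
  set H := (B.cover (groupFibre t ht ρ f)).openGraph e ω with hH
  have hpos : 0 < η * Fintype.card (Fin u × Γ) := by
    have : Nonempty (Fin u) := ⟨⟨0, hu⟩⟩
    have : 0 < Fintype.card (Fin u × Γ) := Fintype.card_pos
    positivity
  have key : ∀ σ (c : H.ConnectedComponent), η * Fintype.card (Fin u × Γ)
      ≤ ((Finset.univ.filter fun j : Fin u × Γ =>
        H.connectedComponentMk (hub B e (σ, j)) = c).card : ℝ) →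
      η * Fintype.card (Fin u × Γ) ≤ (compVerts H c).card ∧
        ∃ j, H.connectedComponentMk (hub B e (σ, j)) = c := by
    intro σ c hc
    constructor
    · refine hc.trans ?_
      have := Finset.card_le_card_of_injOn (s := Finset.univ.filter fun j : Fin u × Γ =>
        H.connectedComponentMk (hub B e (σ, j)) = c) (t := compVerts H c)
        (fun j => hub B e (σ, j)) (fun j hj => by simpa [compVerts] using hj)
        (hub_injective B e σ).injOn
      exact_mod_cast this
    · have : 0 < (Finset.univ.filter fun j : Fin u × Γ =>
          H.connectedComponentMk (hub B e (σ, j)) = c).card := by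
        exact_mod_cast hpos.trans_le hc
      obtain ⟨j, hj⟩ := Finset.card_pos.1 this
      exact ⟨j, (Finset.mem_filter.1 hj).2⟩
  obtain ⟨a, ha⟩ := hbig true
  obtain ⟨b, hb⟩ := hbig false
  obtain ⟨ha, j, rfl⟩ := key true a ha
  obtain ⟨hb, j', rfl⟩ := key false b hb
  refine ⟨_, _, ?_, ha, hb⟩
  refine component_ne_of_upper B (groupFibre t ht ρ f) e hleak ?_ ?_
  · simp [hub, Upper, rootAddr, AboveOpen]
  · simp [hub, Upper]

lemma error_le {η r ε : ℝ} {s T u m : ℕ} (hη : 0 < η) (hr : 0 ≤ r) (hs : 1 ≤ s)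
    (hrs : r ≤ (1 / 2) ^ (s + 1)) (hu : u = 2 ^ (s * T))
    (hε : (5 / η ^ 2 + m) * (1 / 2) ^ T ≤ ε) :
    5 / (η ^ 2 * u) + (u * m : ℕ) * r ^ T ≤ ε := by
  have huT : (1 / 2 : ℝ) ^ (s * T) = (u : ℝ)⁻¹ := by simp [hu]
  have hu0 : (0 : ℝ) < u := by simp [hu]
  have h1 : 5 / (η ^ 2 * u) ≤ 5 / η ^ 2 * (1 / 2) ^ T := by
    rw [← div_div, div_eq_mul_inv _ (u : ℝ), ← huT]
    refine mul_le_mul_of_nonneg_left ?_ (by positivity)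
    exact pow_le_pow_of_le_one (by norm_num) (by norm_num) (Nat.le_mul_of_pos_left _ hs)
  have h2 : ((u * m : ℕ) : ℝ) * r ^ T ≤ m * (1 / 2) ^ T := by
    calc ((u * m : ℕ) : ℝ) * r ^ T
        ≤ (u * m : ℕ) * ((1 / 2) ^ (s + 1)) ^ T := by gcongr
      _ = m * (1 / 2) ^ T * (u * (1 / 2) ^ (s * T)) := by
          rw [← pow_mul, add_mul, one_mul, pow_add]
          push_cast
          ring
      _ = m * (1 / 2) ^ T := by
          rw [huT, mul_inv_cancel₀ hu0.ne', mul_one]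
  linarith

theorem large_second_component (d : ℕ) (hd : 3 ≤ d) (R : ℕ) (hR : 1 ≤ R)
    (p : ℝ) (hp : 1 / ((d : ℝ) - 1) < p) (hp1 : p < 1)
    (α : ℝ) (hα0 : 0 < α) (hα1 : α < 1) :
    ∃ b > (0:ℝ), ∃ c > (0:ℝ), ∀ ε > (0:ℝ), ∀ n₀ : ℕ, ∃ n ≥ n₀,
      ∃ G : SimpleGraph (Fin n), IsRegularExpander G b d ∧ (R : ℕ∞) ≤ G.girth ∧
        1 - ε ≤ percProb G p (fun H =>
          ∃ c₁ c₂ : H.ConnectedComponent, IsLargestComp H c₁ ∧ c₂ ≠ c₁ ∧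
            (∀ c' : H.ConnectedComponent, c' ≠ c₁ →
              (compVerts H c').card ≤ (compVerts H c₂).card) ∧
            c * (n : ℝ) ^ α ≤ ((compVerts H c₂).card : ℝ)) := by
  have hp0 : 0 < p := by
    refine lt_of_le_of_lt ?_ hp
    have : (3 : ℝ) ≤ d := by exact_mod_cast hd
    exact div_nonneg zero_le_one (by linarith)
  obtain ⟨g, γ, hγ, hsurv⟩ := exists_survival_probability d hd p hp hp1
  obtain ⟨Q, _, _, B, hB⟩ := exists_base d hd (max g R)
  have hBR : FreeUpTo B.s R := hB.mono (le_max_right _ _)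
  set η : ℝ := min (γ * p ^ (Fintype.card Q * d + 1) / 6) 1 with hη
  have hη0 : 0 < η := lt_min (by positivity) one_pos
  obtain ⟨K₀, hK₀⟩ := exists_nat_ge (2 * Fintype.card Q / η ^ 2)
  set K := max K₀ 1 with hK
  have hKη : 2 * (Fintype.card Q : ℝ) ≤ η ^ 2 * K := by
    have h1 : (K₀ : ℝ) ≤ K := by exact_mod_cast le_max_left _ _
    have := hK₀.trans h1
    rw [div_le_iff₀ (by positivity)] at this
    linarith
  obtain ⟨Γ, _, _, t, ht, hfree, -⟩ := exists_involution_group d K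
  obtain ⟨s, hs⟩ := exists_nat_ge (2 / (1 - α))
  have hs2 : 2 ≤ s * (1 - α) := by
    rwa [div_le_iff₀ (by linarith)] at hs
  have hs1 : 1 ≤ s := by
    rcases Nat.eq_zero_or_pos s with rfl | h
    · norm_num at hs2
    · exact h
  have hr0 : 0 ≤ 1 - (1 - p) ^ 2 := by nlinarith
  have hr1 : 1 - (1 - p) ^ 2 < 1 := by nlinarith
  obtain ⟨L₀, hL₀⟩ := exists_pow_lt_of_lt_one
    (show (0 : ℝ) < (1 / 2) ^ (s + 2) by positivity) hr1
  set L := L₀ + 1 with hL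
  have hL1 : 1 ≤ L := by omega
  have hrL : 2 * (1 - (1 - p) ^ 2) ^ L ≤ (1 / 2) ^ (s + 1) := by
    have : (1 - (1 - p) ^ 2) ^ L ≤ (1 - (1 - p) ^ 2) ^ L₀ :=
      pow_le_pow_of_le_one hr0 hr1.le (by omega)
    have h2 : (1 / 2 : ℝ) ^ (s + 2) = (1 / 2) ^ (s + 1) * (1 / 2) := pow_succ _ _
    linarith
  obtain ⟨b, hb, hexp⟩ := exists_expander_constant B L hL1
  set C : ℝ := 2 * Fintype.card Q * (L + 2) with hC
  have hC0 : 0 < C := by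
    have : 0 < Fintype.card Q := Fintype.card_pos
    positivity
  refine ⟨b, hb, η / C ^ α, by positivity, fun ε hε n₀ => ?_⟩
  set M : ℝ := 5 / η ^ 2 + Fintype.card Γ with hM
  have hM0 : 0 < M := by positivity
  obtain ⟨T₀, hT₀⟩ := exists_pow_lt_of_lt_one (div_pos hε hM0) (by norm_num : (1 / 2 : ℝ) < 1)
  set T := max T₀ n₀ with hT
  have hTε : M * (1 / 2) ^ T ≤ ε := by
    have : (1 / 2 : ℝ) ^ T ≤ (1 / 2) ^ T₀ :=
      pow_le_pow_of_le_one (by norm_num) (by norm_num) (le_max_left _ _)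
    have := this.trans hT₀.le
    rw [le_div_iff₀ hM0] at this
    linarith
  obtain ⟨u, hu⟩ : ∃ u : ℕ, u = 2 ^ (s * T) := ⟨_, rfl⟩
  have hu1 : 1 ≤ u := hu ▸ Nat.one_le_two_pow
  have hnonempty : Nonempty (Fin u) := ⟨⟨0, hu1⟩⟩
  obtain ⟨f, hf⟩ := exists_expanding_leaf_perms d (Fin u × Γ) L (L * T)
  have hgood : ∀ i, 6 * η ≤ Pr p (fun ω => Good (u := u) (L := L) (h := L * T) B t K ω i) := by
    intro i
    refine le_trans ?_ (Pr_good_ge B t hp0.le hp1.le ht (le_max_right _ _) hfree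
      (hsurv Q B.s B.s_mul (hB.mono (le_max_left _ _)) B.o _ _ Γ t ht K hfree) i)
    have := min_le_left (γ * p ^ (Fintype.card Q * d + 1) / 6) 1
    linarith
  obtain ⟨ρ, hρ⟩ := exists_two_large_components B ht f hp0.le hp1.le hu1 hL1 hfree hη0
    (min_le_right _ _) hgood hKη
  set N := Fintype.card (Fin u × Γ) with hN
  have hNu : N = u * Fintype.card Γ := by simp [hN]
  have huN : u ≤ N := by rw [hNu]; exact Nat.le_mul_of_pos_right _ Fintype.card_pos
  obtain ⟨n, hn, ⟨e⟩⟩ : ∃ n, n = Fintype.card (Idx (Fin u × Γ) L (L * T) × Q) ∧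
      Nonempty (Fin n ≃ Idx (Fin u × Γ) L (L * T) × Q) := ⟨_, rfl, ⟨(Fintype.equivFin _).symm⟩⟩
  have hNn : N ≤ n := by
    rw [hn]
    refine Fintype.card_le_of_injective (fun j => (.inl (true, j), 1)) fun j j' h => ?_
    simpa using h
  have hn0 : n₀ ≤ n := by
    refine le_trans ?_ (huN.trans hNn)
    calc n₀ ≤ T := le_max_right _ _
      _ ≤ s * T := Nat.le_mul_of_pos_left _ hs1
      _ ≤ u := hu ▸ Nat.lt_two_pow_self.le
  have hnpos : Nonempty (Fin n) := ⟨e.symm (.inl (true, (⟨0, hu1⟩, 1)), 1)⟩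
  refine ⟨n, hn0, (B.cover (groupFibre t ht ρ f)).graph e,
    hexp _ _ _ (hf _ rfl) (hBR.injective hR) _ e, ?_, ?_⟩
  · exact_mod_cast (B.cover (groupFibre t ht ρ f)).le_girth e hR hBR (by omega)
  rw [Cover.percProb_graph _ e (hBR.injective hR)]
  have hnC : η / C ^ α * (n : ℝ) ^ α ≤ η * N := by
    have h1 : (n : ℝ) ≤ C * N * 4 ^ T := by
      have := card_idx_mul_le (J := Fin u × Γ) (Fintype.card Q) hL1 T
      rwa [← Fintype.card_prod, ← hn] at this
    have h2 := rpow_le_const_mul (N := N) hα0 hα1 hs2 hC0.le (Nat.cast_nonneg n) h1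
      (by rw [hu] at huN; exact_mod_cast huN)
    rw [div_mul_eq_mul_div, div_le_iff₀ (by positivity), mul_assoc, mul_comm (N : ℝ)]
    exact mul_le_mul_of_nonneg_left h2 hη0.le
  refine le_trans ?_ ((hρ (Fin n) e).trans (Pr_mono hp0.le hp1.le fun ω hω => ?_))
  · rw [hNu]
    have := error_le hη0 (mul_nonneg zero_le_two (pow_nonneg hr0 L)) hs1 hrL hu hTε
    linarith
  · obtain ⟨a, b, hab, ha, hb⟩ := hω
    exact exists_second_component _ hab (hnC.trans ha) (hnC.trans hb)

end Percolation

end
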